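/- Let p ∈ [3, 9/2) and let (u, w, b, Π) be a smooth solution of the stationary magneto-micropolar equations on ℝ³. Then there exists a constant C > 0 (depending only on p) such that for all ρ > 1: ∫_{B_ρ} (|∇u|² + |∇b|² + |∇w|²) dx ≤ C [ ρ^{1 − 6/p} (‖u‖_{L^p(B_{2ρ})} + ‖b‖_{L^p(B_{2ρ})} + ‖w‖_{L^p(B_{2ρ})})² + ρ^{2 − 9/p} (‖u‖_{L^p(B_{2ρ})} + ‖b‖_{L^p(B_{2ρ})} + ‖w‖_{L^p(B_{2ρ})})³ ]. -/

import Mathlib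

open MeasureTheory Real Filter Metric
open scoped Topology ENNReal

noncomputable section

/-- Three-dimensional Euclidean space. -/
abbrev E3 := EuclideanSpace ℝ (Fin 3)

/-- Partial derivative in the `i`-th coordinate direction. -/
def pd (i : Fin 3) (f : E3 → ℝ) (x : E3) : ℝ := fderiv ℝ f x (EuclideanSpace.single i 1)

/-- Laplacian of a scalar function. -/
def lap (f : E3 → ℝ) (x : E3) : ℝ := ∑ i, pd i (fun y => pd i f y) x

/-- Divergence of a vector field. -/
def vdiv (v : E3 → E3) (x : E3) : ℝ := ∑ i, pd i (fun y => v y i) x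

/-- Curl of a vector field on ℝ³. -/
def curl3 (v : E3 → E3) (x : E3) : Fin 3 → ℝ :=
  ![pd 1 (fun y => v y 2) x - pd 2 (fun y => v y 1) x,
    pd 2 (fun y => v y 0) x - pd 0 (fun y => v y 2) x,
    pd 0 (fun y => v y 1) x - pd 1 (fun y => v y 0) x]

/-- Squared norm of the full gradient of a vector field: |∇v|² = Σᵢⱼ (∂ᵢ vⱼ)². -/
def gradSq (v : E3 → E3) (x : E3) : ℝ := ∑ j, ∑ i, (pd i (fun y => v y j) x) ^ 2

/-- The open ball of radius `r` centered at the origin. -/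
def ball3 (r : ℝ) : Set E3 := Metric.ball (0 : E3) r

/-- `(u, w, b, Π)` is a smooth solution of the stationary magneto-micropolar equations on ℝ³
(with all physical constants set to 1):
−Δu + (u·∇)u + ∇Π = ∇×w + (b·∇)b; −Δw + (u·∇)w = ∇(div w) + ∇×u − 2w;
−Δb + (u·∇)b = (b·∇)u; div u = 0, div b = 0. -/
structure IsMMPSolution (u w b : E3 → E3) (P : E3 → ℝ) : Prop where
  smooth_u : ContDiff ℝ (⊤ : ℕ∞) u
  smooth_w : ContDiff ℝ (⊤ : ℕ∞) w
  smooth_b : ContDiff ℝ (⊤ : ℕ∞) b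
  smooth_P : ContDiff ℝ (⊤ : ℕ∞) P
  eq_u : ∀ x : E3, ∀ j : Fin 3,
    -(lap (fun y => u y j) x) + (∑ i, u x i * pd i (fun y => u y j) x) + pd j P x
      = curl3 w x j + ∑ i, b x i * pd i (fun y => b y j) x
  eq_w : ∀ x : E3, ∀ j : Fin 3,
    -(lap (fun y => w y j) x) + (∑ i, u x i * pd i (fun y => w y j) x)
      = pd j (fun y => vdiv w y) x + curl3 u x j - 2 * w x j
  eq_b : ∀ x : E3, ∀ j : Fin 3,
    -(lap (fun y => b y j) x) + (∑ i, u x i * pd i (fun y => b y j) x)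
      = ∑ i, b x i * pd i (fun y => u y j) x
  div_u : ∀ x : E3, vdiv u x = 0
  div_b : ∀ x : E3, vdiv b x = 0

/-- The `Lᵖ` norm of a vector field over a set `S` (for `p` a positive real). -/
def lpnorm (p : ℝ) (v : E3 → E3) (S : Set E3) : ℝ := (∫ x in S, ‖v x‖ ^ p) ^ (1 / p)

/-! The pressure disappears when the momentum equation is paired with a compactly supported
solenoidal field. For a cutoff `η` of `B_ρ` inside `B_{2ρ}`, such a field is the row divergence of
`η ^ 6` times the antisymmetric curl of the truncated Newtonian potential
`∫₀^ρ 2 r P_r (η ^ 2 u) dr`, with `P_r` the Gaussian average at scale `r`. It differs from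
`η ^ 8 u` by lower-order averages and by second derivatives of the potential, that is by truncated
Riesz transforms. Their Calderón–Zygmund bounds at the exponents `3` and `3 / 2` come from Bellman
functions evaluated along the heat flow, where Stein's formula turns the radial derivative of `P_r`
into a Laplacian.

With the energy identities of the three equations this gives, after absorption, a Caccioppoli
inequality: the dissipation with weight `η ^ 8` is at most a constant times
`ρ⁻² ∫ η² d + ρ⁻¹ ∫ (η² d) ^ (3 / 2)`, where `d = |u|² + |b|² + |w|²`. Hölder's inequality on
`B_{2ρ}` produces the powers of `ρ`. -/

section EuclideanCalculus

variable {ι : Type*} [Fintype ι]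

/-- The partial derivative in the `i`-th coordinate direction on a Euclidean space of arbitrary
finite dimension; it is `pd` in dimension three. -/
def partialDeriv (i : ι) (f : EuclideanSpace ℝ ι → ℝ) (x : EuclideanSpace ℝ ι) : ℝ :=
  fderiv ℝ f x (EuclideanSpace.basisFun ι ℝ i)

local notation "∂[" i "]" => partialDeriv i

/-- The Laplacian on a Euclidean space of arbitrary finite dimension; it is `lap` in dimension
three. -/
def coordLaplacian (f : EuclideanSpace ℝ ι → ℝ) (x : EuclideanSpace ℝ ι) : ℝ := ∑ i, ∂[i] (∂[i] f) x

/-- Smooth compactly supported functions. -/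
structure IsTest {E : Type*} [NormedAddCommGroup E] [NormedSpace ℝ E] (f : E → ℝ) : Prop where
  smooth : ContDiff ℝ (⊤ : ℕ∞) f
  compact : HasCompactSupport f

theorem contDiff_fderiv_apply_const {E : Type*} [NormedAddCommGroup E] [NormedSpace ℝ E]
    {f : E → ℝ} (hf : ContDiff ℝ (⊤ : ℕ∞) f) (y : E) :
    ContDiff ℝ (⊤ : ℕ∞) (fun x => fderiv ℝ f x y) :=
  (hf.fderiv_right (by simp)).clm_apply contDiff_const

section PartialDeriv

variable {f g : EuclideanSpace ℝ ι → ℝ}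

theorem contDiff_partialDeriv (hf : ContDiff ℝ (⊤ : ℕ∞) f) (i : ι) :
    ContDiff ℝ (⊤ : ℕ∞) (∂[i] f) :=
  contDiff_fderiv_apply_const hf _

theorem partialDeriv_add (hf : Differentiable ℝ f) (hg : Differentiable ℝ g) (i : ι)
    (x : EuclideanSpace ℝ ι) :
    ∂[i] (fun y => f y + g y) x = ∂[i] f x + ∂[i] g x := by
  simp [partialDeriv, fderiv_fun_add (hf x) (hg x)]

theorem partialDeriv_sub (hf : Differentiable ℝ f) (hg : Differentiable ℝ g) (i : ι)
    (x : EuclideanSpace ℝ ι) :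
    ∂[i] (fun y => f y - g y) x = ∂[i] f x - ∂[i] g x := by
  simp [partialDeriv, fderiv_fun_sub (hf x) (hg x)]

theorem partialDeriv_mul (hf : Differentiable ℝ f) (hg : Differentiable ℝ g) (i : ι)
    (x : EuclideanSpace ℝ ι) :
    ∂[i] (fun y => f y * g y) x = ∂[i] f x * g x + f x * ∂[i] g x := by
  simp only [partialDeriv, fderiv_fun_mul (hf x) (hg x), add_apply, smul_apply, smul_eq_mul]
  ring

theorem partialDeriv_const_mul (hf : Differentiable ℝ f) (c : ℝ) (i : ι) (x : EuclideanSpace ℝ ι) :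
    ∂[i] (fun y => c * f y) x = c * ∂[i] f x := by
  simp [partialDeriv, fderiv_const_mul (hf x)]

theorem partialDeriv_neg (f : EuclideanSpace ℝ ι → ℝ) (i : ι) (x : EuclideanSpace ℝ ι) :
    ∂[i] (fun y => -f y) x = -∂[i] f x := by
  simp [partialDeriv, fderiv_fun_neg]

theorem partialDeriv_const (c : ℝ) (i : ι) (x : EuclideanSpace ℝ ι) :
    ∂[i] (fun _ => c) x = 0 := by
  simp [partialDeriv]

theorem partialDeriv_pow (hf : Differentiable ℝ f) (n : ℕ) (i : ι) (x : EuclideanSpace ℝ ι) :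
    ∂[i] (fun y => f y ^ n) x = n * f x ^ (n - 1) * ∂[i] f x := by
  simp [partialDeriv, fderiv_fun_pow n (hf x)]

theorem partialDeriv_sum {κ : Type*} (s : Finset κ) {F : κ → EuclideanSpace ℝ ι → ℝ}
    (hF : ∀ k, Differentiable ℝ (F k)) (i : ι) (x : EuclideanSpace ℝ ι) :
    ∂[i] (fun y => ∑ k ∈ s, F k y) x = ∑ k ∈ s, ∂[i] (F k) x := by
  simp [partialDeriv, fderiv_fun_sum (fun k _ => hF k x)]

theorem partialDeriv_comm (hf : ContDiff ℝ (⊤ : ℕ∞) f) (i j : ι) (x : EuclideanSpace ℝ ι) :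
    ∂[i] (∂[j] f) x = ∂[j] (∂[i] f) x := by
  have hd : DifferentiableAt ℝ (fderiv ℝ f) x :=
    ((hf.fderiv_right (m := (⊤ : ℕ∞)) (by simp)).differentiable (by simp)) x
  have second_deriv : ∀ a b : EuclideanSpace ℝ ι,
      fderiv ℝ (fun y => fderiv ℝ f y a) x b = fderiv ℝ (fderiv ℝ f) x b a := by
    intro a b
    rw [fderiv_clm_apply hd (differentiableAt_const a)]
    simp
  have hsymm : IsSymmSndFDerivAt ℝ f x := by
    refine hf.contDiffAt.isSymmSndFDerivAt ?_
    rw [minSmoothness_of_isRCLikeNormedField]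
    exact WithTop.coe_le_coe.2 le_top
  exact (second_deriv _ _).trans ((hsymm _ _).trans (second_deriv _ _).symm)

theorem fderiv_eq_sum_partialDeriv (f : EuclideanSpace ℝ ι → ℝ) (x y : EuclideanSpace ℝ ι) :
    fderiv ℝ f x y = ∑ i, y i * ∂[i] f x := by
  conv_lhs => rw [← (EuclideanSpace.basisFun ι ℝ).sum_repr y]
  simp [partialDeriv]

end PartialDeriv

namespace IsTest

section Algebra

variable {E : Type*} [NormedAddCommGroup E] [NormedSpace ℝ E] {f g : E → ℝ}

theorem continuous (hf : IsTest f) : Continuous f := hf.smooth.continuous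

theorem differentiable (hf : IsTest f) : Differentiable ℝ f := hf.smooth.differentiable (by simp)

theorem fderiv_apply (hf : IsTest f) (y : E) : IsTest (fun x => fderiv ℝ f x y) :=
  ⟨contDiff_fderiv_apply_const hf.smooth y, hf.compact.fderiv_apply ℝ y⟩

theorem mul_right (hf : IsTest f) (hg : ContDiff ℝ (⊤ : ℕ∞) g) : IsTest (fun x => f x * g x) :=
  ⟨hf.smooth.mul hg, hf.compact.mul_right⟩

theorem mul_left (hf : IsTest f) (hg : ContDiff ℝ (⊤ : ℕ∞) g) : IsTest (fun x => g x * f x) :=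
  ⟨hg.mul hf.smooth, hf.compact.mul_left⟩

theorem add (hf : IsTest f) (hg : IsTest g) : IsTest (fun x => f x + g x) :=
  ⟨hf.smooth.add hg.smooth, hf.compact.add hg.compact⟩

theorem const_mul (hf : IsTest f) (c : ℝ) : IsTest (fun x => c * f x) :=
  hf.mul_left contDiff_const

theorem sub (hf : IsTest f) (hg : IsTest g) : IsTest (fun x => f x - g x) := by
  simpa [sub_eq_add_neg] using hf.add (hg.const_mul (-1))

theorem pow (hf : IsTest f) {n : ℕ} (hn : n ≠ 0) : IsTest (fun x => f x ^ n) :=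
  ⟨hf.smooth.pow n, hf.compact.comp_left (g := fun t : ℝ => t ^ n) (by simp [hn])⟩

theorem zero : IsTest (fun _ : E => 0) := ⟨contDiff_const, HasCompactSupport.zero⟩

theorem sum {κ : Type*} (s : Finset κ) {F : κ → E → ℝ} (hF : ∀ k, IsTest (F k)) :
    IsTest (fun x => ∑ k ∈ s, F k x) := by
  classical
  induction s using Finset.induction_on with
  | empty => simpa using zero
  | insert a s ha ih => simpa [Finset.sum_insert ha] using (hF a).add ih

theorem exists_bound (hf : IsTest f) : ∃ M, 0 ≤ M ∧ ∀ x, |f x| ≤ M := by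
  obtain ⟨M, hM⟩ := hf.compact.exists_bound_of_continuous hf.continuous
  exact ⟨M, (norm_nonneg _).trans (hM 0), hM⟩

theorem exists_bound_fderiv (hf : IsTest f) : ∃ M, 0 ≤ M ∧ ∀ x, ‖fderiv ℝ f x‖ ≤ M := by
  obtain ⟨M, hM⟩ := (hf.compact.fderiv ℝ).exists_bound_of_continuous
    (hf.smooth.continuous_fderiv (by simp))
  exact ⟨M, (norm_nonneg _).trans (hM 0), hM⟩

theorem integrable_mul_comp [MeasurableSpace E] [OpensMeasurableSpace E] (hf : IsTest f)
    {Ω : Type*} [MeasurableSpace Ω] {μ : Measure Ω} {a : Ω → ℝ} {τ : Ω → E}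
    (ha : Integrable a μ) (hτ : Measurable τ) : Integrable (fun ω => a ω * f (τ ω)) μ := by
  obtain ⟨M, hM0, hM⟩ := hf.exists_bound
  refine (ha.mul_const M).mono
    (ha.1.mul (hf.continuous.measurable.comp hτ).aestronglyMeasurable) ?_
  filter_upwards with ω
  simp only [norm_mul, Real.norm_eq_abs, abs_of_nonneg hM0]
  gcongr
  exact hM _

theorem integrable_comp [MeasurableSpace E] [OpensMeasurableSpace E] (hf : IsTest f)
    {Ω : Type*} [MeasurableSpace Ω] {μ : Measure Ω} [IsFiniteMeasure μ] {τ : Ω → E}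
    (hτ : Measurable τ) : Integrable (fun ω => f (τ ω)) μ := by
  simpa using hf.integrable_mul_comp (integrable_const (1 : ℝ)) hτ

end Algebra

variable {f g v : EuclideanSpace ℝ ι → ℝ}

theorem partialDeriv (hf : IsTest f) (i : ι) : IsTest (∂[i] f) := hf.fderiv_apply _

theorem coordLaplacian (hf : IsTest f) : IsTest (coordLaplacian f) :=
  IsTest.sum _ fun i => (hf.partialDeriv i).partialDeriv i

theorem integrable (hf : IsTest f) : Integrable f :=
  hf.continuous.integrable_of_hasCompactSupport hf.compact

theorem integrable_mul_sqrt (hv : IsTest v) : Integrable (fun x => v x * √(v x)) :=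
  (hv.continuous.mul hv.continuous.sqrt).integrable_of_hasCompactSupport hv.compact.mul_right

end IsTest

section IntegrationByParts

variable {f g : EuclideanSpace ℝ ι → ℝ}

theorem integral_partialDeriv_eq_zero (hd : Differentiable ℝ f) (i : ι) (hf : Integrable f)
    (hf' : Integrable (∂[i] f)) : ∫ x, ∂[i] f x = 0 := by
  have derivative_int : Integrable (fun x => fderiv ℝ f x (EuclideanSpace.basisFun ι ℝ i)) := hf'
  have parts := integral_mul_fderiv_eq_neg_fderiv_mul_of_integrable
    (μ := (volume : Measure (EuclideanSpace ℝ ι)))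
    (f := fun _ : EuclideanSpace ℝ ι => (1 : ℝ)) (g := f) (v := EuclideanSpace.basisFun ι ℝ i)
    (by simp) (by simpa using derivative_int) (by simpa using hf) (by simp) (fun x _ => hd x)
  simpa [partialDeriv] using parts

theorem IsTest.integral_partialDeriv (hf : IsTest f) (i : ι) : ∫ x, ∂[i] f x = 0 :=
  integral_partialDeriv_eq_zero hf.differentiable i hf.integrable (hf.partialDeriv i).integrable

theorem IsTest.integral_mul_partialDeriv (hf : IsTest f) (hg : ContDiff ℝ (⊤ : ℕ∞) g) (i : ι) :
    ∫ x, f x * ∂[i] g x = - ∫ x, ∂[i] f x * g x := by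
  have parts := (hf.mul_right hg).integral_partialDeriv i
  simp_rw [partialDeriv_mul hf.differentiable (hg.differentiable (by simp))] at parts
  rw [integral_add ((hf.partialDeriv i).mul_right hg).integrable
    (hf.mul_right (contDiff_partialDeriv hg i)).integrable] at parts
  linarith

end IntegrationByParts

/-- The average of the translates `f (· + τ ω)` of `f`, with the signed weight `m`. -/
def avg {Ω E : Type*} [MeasurableSpace Ω] [Add E] (μ : Measure Ω) (m : Ω → ℝ) (τ : Ω → E)
    (f : E → ℝ) (x : E) : ℝ := ∫ ω, m ω * f (x + τ ω) ∂μ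

theorem abs_avg_le {Ω E : Type*} [MeasurableSpace Ω] [Add E] {μ : Measure Ω} {m : Ω → ℝ}
    {τ : Ω → E} {f : E → ℝ} (hm : Integrable m μ) {M : ℝ} (hM : ∀ x, |f x| ≤ M) (x : E) :
    |avg μ m τ f x| ≤ M * ∫ ω, |m ω| ∂μ := by
  unfold avg
  rw [← integral_const_mul, ← Real.norm_eq_abs]
  refine norm_integral_le_of_norm_le (hm.abs.const_mul M) ?_
  filter_upwards with ω
  rw [norm_mul, mul_comm, Real.norm_eq_abs, Real.norm_eq_abs]
  gcongr
  exact hM _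

section Averages

variable {Ω : Type*} [MeasurableSpace Ω] {μ : Measure Ω} {m : Ω → ℝ} {τ : Ω → EuclideanSpace ℝ ι}
  {f g v : EuclideanSpace ℝ ι → ℝ}

theorem hasFDerivAt_avg (hm : Integrable m μ) (hτ : Measurable τ) (hf : IsTest f)
    (x : EuclideanSpace ℝ ι) :
    HasFDerivAt (avg μ m τ f) (∫ ω, m ω • fderiv ℝ f (x + τ ω) ∂μ) x := by
  obtain ⟨M, -, hM⟩ := hf.exists_bound_fderiv
  have hc : Continuous (fderiv ℝ f) := hf.smooth.continuous_fderiv (by simp)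
  refine hasFDerivAt_integral_of_dominated_of_fderiv_le (s := Set.univ)
    (F' := fun x ω => m ω • fderiv ℝ f (x + τ ω)) (bound := fun ω => |m ω| * M) univ_mem
    (Eventually.of_forall fun y => (hf.integrable_mul_comp hm (hτ.const_add y)).1)
    (hf.integrable_mul_comp hm (hτ.const_add x))
    (hm.1.smul (hc.measurable.comp (hτ.const_add x)).aestronglyMeasurable) ?_
    (hm.abs.mul_const M) ?_
  · filter_upwards with ω y _
    rw [norm_smul, Real.norm_eq_abs]
    gcongr
    exact hM _
  · filter_upwards with ω y _
    simpa using ((hf.differentiable (y + τ ω)).hasFDerivAt.comp y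
      ((hasFDerivAt_id y).add_const (τ ω))).const_mul (m ω)

theorem fderiv_avg_apply (hm : Integrable m μ) (hτ : Measurable τ) (hf : IsTest f)
    (x y : EuclideanSpace ℝ ι) :
    fderiv ℝ (avg μ m τ f) x y = avg μ m τ (fun z => fderiv ℝ f z y) x := by
  obtain ⟨M, hM0, hM⟩ := hf.exists_bound_fderiv
  have hc : Continuous (fderiv ℝ f) := hf.smooth.continuous_fderiv (by simp)
  have h_int : Integrable (fun ω => m ω • fderiv ℝ f (x + τ ω)) μ := by
    refine (hm.mul_const M).mono
      (hm.1.smul (hc.measurable.comp (hτ.const_add x)).aestronglyMeasurable) ?_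
    filter_upwards with ω
    simp only [norm_smul, norm_mul, Real.norm_eq_abs, abs_of_nonneg hM0]
    gcongr
    exact hM _
  rw [(hasFDerivAt_avg hm hτ hf x).fderiv, ContinuousLinearMap.integral_apply h_int]
  simp [avg]

theorem partialDeriv_avg (hm : Integrable m μ) (hτ : Measurable τ) (hf : IsTest f) (i : ι)
    (x : EuclideanSpace ℝ ι) :
    ∂[i] (avg μ m τ f) x = avg μ m τ (∂[i] f) x :=
  fderiv_avg_apply hm hτ hf x _

theorem differentiable_avg (hm : Integrable m μ) (hτ : Measurable τ) (hf : IsTest f) :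
    Differentiable ℝ (avg μ m τ f) :=
  fun x => (hasFDerivAt_avg hm hτ hf x).differentiableAt

theorem contDiff_avg (hm : Integrable m μ) (hτ : Measurable τ) (hf : IsTest f) :
    ContDiff ℝ (⊤ : ℕ∞) (avg μ m τ f) := by
  rw [contDiff_infty]
  intro n
  induction n generalizing f with
  | zero => exact contDiff_zero.2 (differentiable_avg hm hτ hf).continuous
  | succ n ih =>
    push_cast
    rw [contDiff_succ_iff_fderiv_apply]
    refine ⟨differentiable_avg hm hτ hf, by simp, fun y => ?_⟩
    simp_rw [fderiv_avg_apply hm hτ hf]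
    exact ih (hf.fderiv_apply y)

theorem integrable_prod_avg_integrand [SFinite μ] (hm : Integrable m μ) (hτ : Measurable τ)
    (hf : IsTest f) :
    Integrable (fun p : EuclideanSpace ℝ ι × Ω => m p.2 * f (p.1 + τ p.2)) (volume.prod μ) := by
  have measurable : AEStronglyMeasurable
      (fun p : EuclideanSpace ℝ ι × Ω => m p.2 * f (p.1 + τ p.2)) (volume.prod μ) :=
    hm.1.comp_snd.mul (hf.continuous.measurable.comp
      (measurable_fst.add (hτ.comp measurable_snd))).aestronglyMeasurable
  rw [integrable_prod_iff' measurable]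
  constructor
  · filter_upwards with ω
    exact (hf.integrable.comp_add_right (τ ω)).const_mul _
  · have slice_norm : ∀ ω, ∫ x, ‖m ω * f (x + τ ω)‖ = |m ω| * ∫ x, |f x| := by
      intro ω
      simp_rw [norm_mul, Real.norm_eq_abs]
      rw [integral_const_mul, integral_add_right_eq_self (fun x => |f x|)]
    simp_rw [slice_norm]
    exact hm.abs.mul_const _

theorem integrable_avg [SFinite μ] (hm : Integrable m μ) (hτ : Measurable τ) (hf : IsTest f) :
    Integrable (avg μ m τ f) :=
  (integrable_prod_avg_integrand hm hτ hf).integral_prod_left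

theorem integral_mul_avg [SFinite μ] (hm : Integrable m μ) (hτ : Measurable τ) (hf : IsTest f)
    (hg : IsTest g) :
    ∫ x, g x * avg μ m τ f x = ∫ ω, m ω * (∫ x, g x * f (x + τ ω)) ∂μ := by
  obtain ⟨M, hM0, hM⟩ := hg.exists_bound
  simp only [avg, ← integral_const_mul, mul_left_comm (m _)]
  rw [integral_integral_swap]
  refine ((integrable_prod_avg_integrand hm hτ hf).const_mul M).mono
    ((hg.continuous.measurable.comp measurable_fst).aestronglyMeasurable.mul
      (integrable_prod_avg_integrand hm hτ hf).1) ?_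
  filter_upwards with p
  simp only [Function.uncurry, norm_mul, Real.norm_eq_abs, abs_of_nonneg hM0]
  gcongr
  exact hM _

theorem abs_integral_mul_avg_le [SFinite μ] (hm : Integrable m μ) (hτ : Measurable τ)
    (hf : IsTest f) (hg : IsTest g) {A : ℝ} (hA : ∀ y, |∫ x, g x * f (x + y)| ≤ A) :
    |∫ x, g x * avg μ m τ f x| ≤ A * ∫ ω, |m ω| ∂μ := by
  rw [integral_mul_avg hm hτ hf hg, ← integral_const_mul, ← Real.norm_eq_abs]
  refine norm_integral_le_of_norm_le (hm.abs.const_mul A) ?_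
  filter_upwards with ω
  rw [norm_mul, mul_comm, Real.norm_eq_abs, Real.norm_eq_abs]
  gcongr
  exact hA _

theorem abs_integral_mul_translate_le_sq (hf : IsTest f) (hg : IsTest g) (y : EuclideanSpace ℝ ι) :
    |∫ x, g x * f (x + y)| ≤ (∫ x, f x ^ 2) + ∫ x, g x ^ 2 := by
  rw [← integral_add_right_eq_self (fun x => f x ^ 2) y, ← Real.norm_eq_abs,
    ← integral_add ((hf.pow two_ne_zero).integrable.comp_add_right y)
      (hg.pow two_ne_zero).integrable]
  refine norm_integral_le_of_norm_le (((hf.pow two_ne_zero).integrable.comp_add_right y).add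
      (hg.pow two_ne_zero).integrable) ?_
  filter_upwards with x
  rw [norm_mul, Real.norm_eq_abs, Real.norm_eq_abs]
  nlinarith [sq_abs (g x), sq_abs (f (x + y)), sq_nonneg (|g x| - |f (x + y)|),
    abs_nonneg (g x), abs_nonneg (f (x + y))]

theorem mul_sqrt_le_add {a b : ℝ} (ha : 0 ≤ a) (hb : 0 ≤ b) : a * √b ≤ a * √a + b * √b := by
  rcases le_total a b with h | h
  · linarith [mul_le_mul_of_nonneg_right h (sqrt_nonneg b), mul_nonneg ha (sqrt_nonneg a)]
  · linarith [mul_le_mul_of_nonneg_left (sqrt_le_sqrt h) ha, mul_nonneg hb (sqrt_nonneg b)]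

theorem abs_integral_mul_translate_le_sqrt (hv : IsTest v) (hv0 : ∀ x, 0 ≤ v x)
    (hfv : ∀ x, f x ^ 2 ≤ v x) (hgv : ∀ x, |g x| ≤ v x) (y : EuclideanSpace ℝ ι) :
    |∫ x, g x * f (x + y)| ≤ 2 * ∫ x, v x * √(v x) := by
  have double_integral :
      2 * ∫ x, v x * √(v x) = ∫ x, (v x * √(v x) + v (x + y) * √(v (x + y))) := by
    rw [integral_add hv.integrable_mul_sqrt (hv.integrable_mul_sqrt.comp_add_right y),
      integral_add_right_eq_self (fun x => v x * √(v x)) y]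
    ring
  rw [double_integral, ← Real.norm_eq_abs]
  refine norm_integral_le_of_norm_le
    (hv.integrable_mul_sqrt.add (hv.integrable_mul_sqrt.comp_add_right y)) ?_
  filter_upwards with x
  rw [norm_mul, Real.norm_eq_abs, Real.norm_eq_abs]
  refine le_trans ?_ (mul_sqrt_le_add (hv0 x) (hv0 (x + y)))
  exact mul_le_mul (hgv x) (abs_le_sqrt (hfv _)) (abs_nonneg _) (hv0 x)

end Averages

section GaussianStein

open scoped NNReal

open ProbabilityTheory

theorem measurePreserving_update {κ : Type*} [Fintype κ] [DecidableEq κ] {X : κ → Type*}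
    [∀ k, MeasurableSpace (X k)] (μ : ∀ k, Measure (X k)) [∀ k, IsProbabilityMeasure (μ k)]
    (i : κ) :
    MeasurePreserving (fun p : (∀ k, X k) × X i => Function.update p.1 i p.2)
      ((Measure.pi μ).prod (μ i)) (Measure.pi μ) where
  measurable := measurable_update'
  map_eq := by
    refine (Measure.pi_eq fun s hs => ?_).symm
    have preimage_eq : (fun p : (∀ k, X k) × X i => Function.update p.1 i p.2) ⁻¹' Set.univ.pi s
        = Set.univ.pi (Function.update s i Set.univ) ×ˢ s i := by
      ext p
      simp only [Set.mem_preimage, Set.mem_univ_pi, Set.mem_prod]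
      refine ⟨fun h => ⟨fun k => ?_, by simpa using h i⟩, fun h k => ?_⟩ <;>
        rcases eq_or_ne k i with rfl | hk
      · simp
      · simpa [hk] using h k
      · simpa using h.2
      · simpa [hk] using h.1 k
    rw [Measure.map_apply measurable_update' (.univ_pi hs), preimage_eq,
      Measure.prod_prod, Measure.pi_pi, ← Finset.prod_erase_mul _ _ (Finset.mem_univ i),
      ← Finset.prod_erase_mul Finset.univ (fun k => μ k (s k)) (Finset.mem_univ i)]
    simp only [Function.update_self, measure_univ, mul_one]
    congr 1
    exact Finset.prod_congr rfl fun k hk => by simp [Finset.ne_of_mem_erase hk]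

theorem integrable_gaussianReal_iff {m : ℝ} {v : ℝ≥0} (hv : v ≠ 0) {f : ℝ → ℝ} :
    Integrable f (gaussianReal m v) ↔ Integrable (fun x => gaussianPDFReal m v x * f x) := by
  rw [gaussianReal_of_var_ne_zero m hv, integrable_withDensity_iff_integrable_smul'
    (measurable_gaussianPDF m v) (Eventually.of_forall fun _ => gaussianPDF_lt_top)]
  simp

theorem hasDerivAt_gaussianPDFReal (m : ℝ) (v : ℝ≥0) (x : ℝ) :
    HasDerivAt (gaussianPDFReal m v) (-((x - m) / v) * gaussianPDFReal m v x) x := by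
  have exponent :
      HasDerivAt (fun x : ℝ => -(x - m) ^ 2 / (2 * v)) (-(2 * (x - m)) / (2 * v)) x := by
    simpa using (((hasDerivAt_id x).sub_const m).pow 2).neg.div_const (2 * (v : ℝ))
  refine (exponent.exp.const_mul (√(2 * π * v))⁻¹).congr_deriv ?_
  rw [gaussianPDFReal, ← mul_neg, mul_div_mul_left _ _ two_ne_zero]
  ring

theorem integral_sub_mul_gaussianReal {m : ℝ} {v : ℝ≥0} {φ φ' : ℝ → ℝ}
    (hφ : ∀ x, HasDerivAt φ (φ' x) x) (h : Integrable φ (gaussianReal m v))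
    (hx : Integrable (fun x => (x - m) * φ x) (gaussianReal m v))
    (h' : Integrable φ' (gaussianReal m v)) :
    ∫ x, (x - m) * φ x ∂gaussianReal m v = v * ∫ x, φ' x ∂gaussianReal m v := by
  rcases eq_or_ne v 0 with rfl | hv
  · simp
  rw [integrable_gaussianReal_iff hv] at h hx h'
  have hv' : (v : ℝ) ≠ 0 := NNReal.coe_ne_zero.2 hv
  have density_eq : ∀ x, -((x - m) / v) * gaussianPDFReal m v x * φ x
      = (-(v : ℝ)⁻¹) * (gaussianPDFReal m v x * ((x - m) * φ x)) := fun x => by ring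
  have hu'v : Integrable ((fun x => -((x - m) / v) * gaussianPDFReal m v x) * φ) :=
    (hx.const_mul (-(v : ℝ)⁻¹)).congr (Eventually.of_forall fun x => (density_eq x).symm)
  have parts := integral_mul_deriv_eq_deriv_mul_of_integrable
    (fun x _ => hasDerivAt_gaussianPDFReal m v x) (fun x _ => hφ x) h' hu'v h
  simp only [density_eq, integral_const_mul] at parts
  simp only [integral_gaussianReal_eq_integral_smul hv, smul_eq_mul, parts]
  field_simp

end GaussianStein

section Stein

open ProbabilityTheory

/-- A random vector `τ` satisfying Stein's formula, that is Gaussian integration by parts, with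
variance `c` in every coordinate and at every scale `r`. -/
structure IsStein {Ω : Type*} [MeasurableSpace Ω] (μ : Measure Ω) (τ : Ω → EuclideanSpace ℝ ι)
    (c : ℝ) : Prop where
  measurable : Measurable τ
  norm_integrable : Integrable (fun ω => ‖τ ω‖) μ
  stein : ∀ {f : EuclideanSpace ℝ ι → ℝ}, IsTest f → ∀ (i : ι) (y : EuclideanSpace ℝ ι) (r : ℝ),
    ∫ ω, τ ω i * f (y + r • τ ω) ∂μ = c * r * ∫ ω, ∂[i] f (y + r • τ ω) ∂μ

theorem IsStein.integrable_coord {Ω : Type*} [MeasurableSpace Ω] {μ : Measure Ω}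
    {τ : Ω → EuclideanSpace ℝ ι} {c : ℝ} (hτ : IsStein μ τ c) (i : ι) :
    Integrable (fun ω => τ ω i) μ := by
  refine hτ.norm_integrable.mono
    ((PiLp.continuous_apply 2 _ i).measurable.comp hτ.measurable).aestronglyMeasurable ?_
  filter_upwards with ω
  rw [norm_norm]
  exact PiLp.norm_apply_le _ i

theorem integral_pi_eq_integral_update {κ : Type*} [Fintype κ] [DecidableEq κ] {X : κ → Type*}
    [∀ k, MeasurableSpace (X k)] {μ : ∀ k, Measure (X k)} [∀ k, IsProbabilityMeasure (μ k)]
    {F : (∀ k, X k) → ℝ} (hF : Integrable F (Measure.pi μ)) (i : κ) :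
    ∫ z, F z ∂Measure.pi μ = ∫ z, ∫ t, F (Function.update z i t) ∂μ i ∂Measure.pi μ := by
  have update_preserving := measurePreserving_update μ i
  refine Eq.trans ?_ (integral_prod _ (update_preserving.integrable_comp_of_integrable hF))
  conv_lhs => rw [← update_preserving.map_eq]
  refine integral_map update_preserving.measurable.aemeasurable ?_
  rw [update_preserving.map_eq]
  exact hF.1

theorem hasDerivAt_comp_update [DecidableEq ι] {f : EuclideanSpace ℝ ι → ℝ}
    (hf : Differentiable ℝ f) (i : ι) (y : EuclideanSpace ℝ ι) (r : ℝ) (z : ι → ℝ) (t : ℝ) :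
    HasDerivAt (fun t => f (y + r • WithLp.toLp 2 (Function.update z i t)))
      (r * ∂[i] f (y + r • WithLp.toLp 2 (Function.update z i t))) t := by
  have line : HasDerivAt (fun t => y + r • WithLp.toLp 2 (Function.update z i t))
      (r • EuclideanSpace.basisFun ι ℝ i) t := by
    have := (PiLp.continuousLinearEquiv 2 ℝ fun _ : ι => ℝ).symm.hasFDerivAt.comp_hasDerivAt t
      (hasDerivAt_update z i t)
    simpa using (this.const_smul r).const_add y
  exact ((hf _).hasFDerivAt.comp_hasDerivAt t line).congr_deriv (by simp [partialDeriv])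

theorem isStein_stdGaussian : IsStein (stdGaussian (EuclideanSpace ℝ ι)) (fun z => z) 1 where
  measurable := measurable_id
  norm_integrable := IsGaussian.integrable_fun_id.norm
  stein := by
    intro f hf i y r
    classical
    have toLp_meas : Measurable (WithLp.toLp 2 : (ι → ℝ) → EuclideanSpace ℝ ι) := by fun_prop
    have coord : Integrable (fun z : ι → ℝ => z i) (Measure.pi fun _ => gaussianReal 0 1) :=
      (measurePreserving_eval (fun _ : ι => gaussianReal 0 1) i).integrable_comp_of_integrable
        IsGaussian.integrable_fun_id
    simp only [← map_pi_eq_stdGaussian]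
    have hf_cont := hf.continuous
    have hf'_cont := (hf.partialDeriv i).continuous
    rw [integral_map toLp_meas.aemeasurable (Continuous.aestronglyMeasurable (by fun_prop)),
      integral_map toLp_meas.aemeasurable (Continuous.aestronglyMeasurable (by fun_prop)),
      integral_pi_eq_integral_update (hf.integrable_mul_comp coord (by fun_prop)) i,
      integral_pi_eq_integral_update ((hf.partialDeriv i).integrable_comp (by fun_prop)) i,
      ← integral_const_mul]
    refine integral_congr_ae (Eventually.of_forall fun z => ?_)
    have line_meas : Measurable
        fun t : ℝ => y + r • WithLp.toLp 2 (Function.update z i t) := by fun_prop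
    have stein := integral_sub_mul_gaussianReal (m := 0) (v := 1)
      (hasDerivAt_comp_update hf.differentiable i y r z) (hf.integrable_comp line_meas)
      (by simpa using hf.integrable_mul_comp IsGaussian.integrable_fun_id line_meas)
      (((hf.partialDeriv i).integrable_comp line_meas).const_mul r)
    simpa [integral_const_mul] using stein

section ProdSub

variable {Ω Ω' : Type*} [MeasurableSpace Ω] [MeasurableSpace Ω'] {μ : Measure Ω} {ν : Measure Ω'}
  [IsProbabilityMeasure μ] [IsProbabilityMeasure ν] {τ : Ω → EuclideanSpace ℝ ι}
  {σ : Ω' → EuclideanSpace ℝ ι} {c d : ℝ} {f : EuclideanSpace ℝ ι → ℝ}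

theorem IsStein.integral_fst_mul (hτ : IsStein μ τ c) (hσ : Measurable σ) (hf : IsTest f) (i : ι)
    (y : EuclideanSpace ℝ ι) (r : ℝ) :
    ∫ z : Ω × Ω', τ z.1 i * f (y + r • (τ z.1 - σ z.2)) ∂μ.prod ν
      = c * r * ∫ z : Ω × Ω', ∂[i] f (y + r • (τ z.1 - σ z.2)) ∂μ.prod ν := by
  have hτ_meas := hτ.measurable
  rw [integral_prod_symm _ (hf.integrable_mul_comp ((hτ.integrable_coord i).comp_fst ν)
    (by fun_prop)), integral_prod_symm _ ((hf.partialDeriv i).integrable_comp (by fun_prop)),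
    ← integral_const_mul]
  refine integral_congr_ae (Eventually.of_forall fun w => ?_)
  have shift : ∀ z, y + r • (τ z - σ w) = (y - r • σ w) + r • τ z := fun z => by
    rw [smul_sub]; abel
  simpa only [shift] using hτ.stein hf i (y - r • σ w) r

theorem IsStein.integral_snd_mul (hσ : IsStein ν σ d) (hτ : Measurable τ) (hf : IsTest f) (i : ι)
    (y : EuclideanSpace ℝ ι) (r : ℝ) :
    ∫ z : Ω × Ω', σ z.2 i * f (y + r • (τ z.1 - σ z.2)) ∂μ.prod ν
      = -(d * r * ∫ z : Ω × Ω', ∂[i] f (y + r • (τ z.1 - σ z.2)) ∂μ.prod ν) := by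
  have hσ_meas := hσ.measurable
  rw [integral_prod _ (hf.integrable_mul_comp ((hσ.integrable_coord i).comp_snd μ)
    (by fun_prop)), integral_prod _ ((hf.partialDeriv i).integrable_comp (by fun_prop)),
    ← neg_mul, ← integral_const_mul]
  refine integral_congr_ae (Eventually.of_forall fun w => ?_)
  have shift : ∀ z, y + r • (τ w - σ z) = (y + r • τ w) + (-r) • σ z := fun z => by
    rw [smul_sub, neg_smul]; abel
  simpa only [shift, mul_neg] using hσ.stein hf i (y + r • τ w) (-r)

theorem IsStein.prod_sub (hτ : IsStein μ τ c) (hσ : IsStein ν σ d) :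
    IsStein (μ.prod ν) (fun z : Ω × Ω' => τ z.1 - σ z.2) (c + d) where
  measurable := (hτ.measurable.comp measurable_fst).sub (hσ.measurable.comp measurable_snd)
  norm_integrable := by
    have hτ_meas := hτ.measurable
    have hσ_meas := hσ.measurable
    refine ((hτ.norm_integrable.comp_fst ν).add (hσ.norm_integrable.comp_snd μ)).mono
      (by fun_prop) (Eventually.of_forall fun z => ?_)
    rw [norm_norm]
    exact (norm_sub_le _ _).trans (le_abs_self _)
  stein hf i y r := by
    have hτ_meas := hτ.measurable
    have hσ_meas := hσ.measurable
    simp only [PiLp.sub_apply, sub_mul]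
    rw [integral_sub (hf.integrable_mul_comp ((hτ.integrable_coord i).comp_fst ν) (by fun_prop))
      (hf.integrable_mul_comp ((hσ.integrable_coord i).comp_snd μ) (by fun_prop)),
      hτ.integral_fst_mul hσ_meas hf, hσ.integral_snd_mul hτ_meas hf]
    ring

end ProdSub

end Stein

/-- The average of `f` over the random displacement `r • τ`. -/
def flow {Ω E : Type*} [MeasurableSpace Ω] [Add E] [SMul ℝ E] (μ : Measure Ω) (τ : Ω → E) (r : ℝ)
    (f : E → ℝ) : E → ℝ := avg μ (fun _ => 1) (fun ω => r • τ ω) f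

theorem flow_apply {Ω E : Type*} [MeasurableSpace Ω] [Add E] [SMul ℝ E] {μ : Measure Ω}
    {τ : Ω → E} (r : ℝ) (f : E → ℝ) (x : E) :
    flow μ τ r f x = ∫ ω, f (x + r • τ ω) ∂μ := by simp [flow, avg]

theorem flow_zero {Ω E : Type*} [MeasurableSpace Ω] [AddCommGroup E] [Module ℝ E] {μ : Measure Ω}
    [IsProbabilityMeasure μ] {τ : Ω → E} (f : E → ℝ) : flow μ τ 0 f = f := by
  ext x; simp [flow_apply]

theorem abs_flow_le {Ω E : Type*} [MeasurableSpace Ω] [Add E] [SMul ℝ E] {μ : Measure Ω}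
    [IsProbabilityMeasure μ] {τ : Ω → E} {f : E → ℝ} {M : ℝ} (hM : ∀ x, |f x| ≤ M) (r : ℝ)
    (x : E) : |flow μ τ r f x| ≤ M := by
  simpa [flow] using abs_avg_le (μ := μ) (τ := fun ω => r • τ ω) (integrable_const (1 : ℝ)) hM x

section Flow

variable {Ω : Type*} [MeasurableSpace Ω] {μ : Measure Ω} [IsProbabilityMeasure μ]
  {τ : Ω → EuclideanSpace ℝ ι} {c r : ℝ} {f g v : EuclideanSpace ℝ ι → ℝ}

theorem partialDeriv_flow (hτ : Measurable τ) (hf : IsTest f) (r : ℝ) (i : ι)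
    (x : EuclideanSpace ℝ ι) : ∂[i] (flow μ τ r f) x = flow μ τ r (∂[i] f) x :=
  partialDeriv_avg (integrable_const _) (hτ.const_smul r) hf i x

theorem differentiable_flow (hτ : Measurable τ) (hf : IsTest f) (r : ℝ) :
    Differentiable ℝ (flow μ τ r f) :=
  differentiable_avg (integrable_const _) (hτ.const_smul r) hf

theorem integrable_flow (hτ : Measurable τ) (hf : IsTest f) (r : ℝ) :
    Integrable (flow μ τ r f) :=
  integrable_avg (integrable_const _) (hτ.const_smul r) hf

theorem continuous_flow (hτ : Measurable τ) (hf : IsTest f) :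
    Continuous fun p : ℝ × EuclideanSpace ℝ ι => flow μ τ p.1 f p.2 := by
  obtain ⟨M, -, hM⟩ := hf.exists_bound
  simp_rw [flow_apply]
  refine continuous_of_dominated (bound := fun _ => M) (fun p =>
    (hf.continuous.measurable.comp ((hτ.const_smul p.1).const_add p.2)).aestronglyMeasurable)
    (fun p => Eventually.of_forall fun ω => hM _) (integrable_const _)
    (Eventually.of_forall fun ω => hf.continuous.comp ?_)
  fun_prop

theorem flow_coordLaplacian (hτ : Measurable τ) (hf : IsTest f) (r : ℝ)
    (x : EuclideanSpace ℝ ι) :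
    flow μ τ r (coordLaplacian f) x = ∑ i, flow μ τ r (∂[i] (∂[i] f)) x := by
  simp_rw [flow_apply]
  exact integral_finsetSum _ fun i _ =>
    ((hf.partialDeriv i).partialDeriv i).integrable_comp ((hτ.const_smul r).const_add x)

omit [IsProbabilityMeasure μ] in
theorem IsStein.integrable_fderiv_apply (hτ : IsStein μ τ c) (hf : IsTest f)
    (x : EuclideanSpace ℝ ι) (r : ℝ) :
    Integrable (fun ω => fderiv ℝ f (x + r • τ ω) (τ ω)) μ := by
  simp only [fderiv_eq_sum_partialDeriv]
  exact integrable_finsetSum _ fun i _ => (hf.partialDeriv i).integrable_mul_comp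
    (hτ.integrable_coord i) ((hτ.measurable.const_smul r).const_add x)

theorem IsStein.integral_fderiv_apply (hτ : IsStein μ τ c) (hf : IsTest f)
    (x : EuclideanSpace ℝ ι) (r : ℝ) :
    ∫ ω, fderiv ℝ f (x + r • τ ω) (τ ω) ∂μ = c * r * flow μ τ r (coordLaplacian f) x := by
  have term_integrable : ∀ i, Integrable (fun ω => τ ω i * ∂[i] f (x + r • τ ω)) μ := fun i =>
    (hf.partialDeriv i).integrable_mul_comp (hτ.integrable_coord i)
      ((hτ.measurable.const_smul r).const_add x)
  simp only [fderiv_eq_sum_partialDeriv]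
  rw [integral_finsetSum _ fun i _ => term_integrable i,
    flow_coordLaplacian hτ.measurable hf, Finset.mul_sum]
  exact Finset.sum_congr rfl fun i _ => by rw [hτ.stein (hf.partialDeriv i), flow_apply]

theorem hasDerivAt_flow (hτ : IsStein μ τ c) (hf : IsTest f) (x : EuclideanSpace ℝ ι) (r : ℝ) :
    HasDerivAt (fun r => flow μ τ r f x) (c * r * flow μ τ r (coordLaplacian f) x) r := by
  obtain ⟨M, -, hM⟩ := hf.exists_bound_fderiv
  have comp_integrable : ∀ s : ℝ, Integrable (fun ω => f (x + s • τ ω)) μ := fun s =>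
    hf.integrable_comp ((hτ.measurable.const_smul s).const_add x)
  simp only [flow_apply _ f, ← hτ.integral_fderiv_apply hf]
  refine (hasDerivAt_integral_of_dominated_loc_of_deriv_le (s := Set.univ)
    (F := fun r ω => f (x + r • τ ω)) (F' := fun r ω => fderiv ℝ f (x + r • τ ω) (τ ω))
    (bound := fun ω => M * ‖τ ω‖) univ_mem (Eventually.of_forall fun s => (comp_integrable s).1)
    (comp_integrable r) (hτ.integrable_fderiv_apply hf x r).1 ?_
    (hτ.norm_integrable.const_mul M) ?_).2
  · filter_upwards with ω s _
    exact (ContinuousLinearMap.le_opNorm _ _).trans (by gcongr; exact hM _)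
  · filter_upwards with ω s _
    have line : HasDerivAt (fun s : ℝ => x + s • τ ω) (τ ω) s := by
      simpa using ((hasDerivAt_id s).smul_const (τ ω)).const_add x
    exact (hf.differentiable _).hasFDerivAt.comp_hasDerivAt s line

theorem abs_flow_le_flow (hτ : Measurable τ) (hv : IsTest v) (hgv : ∀ x, |g x| ≤ v x) (r : ℝ)
    (x : EuclideanSpace ℝ ι) : |flow μ τ r g x| ≤ flow μ τ r v x := by
  rw [flow_apply, flow_apply, ← Real.norm_eq_abs]
  exact norm_integral_le_of_norm_le (hv.integrable_comp ((hτ.const_smul r).const_add x))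
    (Eventually.of_forall fun ω => hgv (x + r • τ ω))

theorem flow_sq_le_flow (hτ : Measurable τ) (hf : IsTest f) (hv : IsTest v)
    (hfv : ∀ x, f x ^ 2 ≤ v x) (r : ℝ) (x : EuclideanSpace ℝ ι) :
    flow μ τ r f x ^ 2 ≤ flow μ τ r v x := by
  have shift_meas := (hτ.const_smul r).const_add x
  rw [flow_apply, flow_apply]
  refine (ConvexOn.map_integral_le (g := fun t : ℝ => t ^ 2) (even_two.convexOn_pow)
    (continuous_pow 2).continuousOn isClosed_univ (by simp) (hf.integrable_comp shift_meas)
    ((hf.pow two_ne_zero).integrable_comp shift_meas)).trans ?_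
  exact integral_mono ((hf.pow two_ne_zero).integrable_comp shift_meas)
    (hv.integrable_comp shift_meas) fun ω => hfv _

end Flow

section HeatFlow

open ProbabilityTheory

/-- The Gaussian average of `f` at scale `r`. -/
abbrev gaussFlow (r : ℝ) (f : EuclideanSpace ℝ ι → ℝ) : EuclideanSpace ℝ ι → ℝ :=
  flow (stdGaussian (EuclideanSpace ℝ ι)) (fun z => z) r f

/-- The law of two independent standard Gaussian displacements. -/
abbrev gaussianPair (ι : Type*) [Fintype ι] :
    Measure (EuclideanSpace ℝ ι × EuclideanSpace ℝ ι) :=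
  (stdGaussian (EuclideanSpace ℝ ι)).prod (stdGaussian (EuclideanSpace ℝ ι))

/-- The square of the Gaussian averaging operator at scale `r`, as the average over a difference of
two independent Gaussian displacements. -/
abbrev heatFlow (r : ℝ) (f : EuclideanSpace ℝ ι → ℝ) : EuclideanSpace ℝ ι → ℝ :=
  flow (gaussianPair ι) (fun z => z.1 - z.2) r f

theorem isStein_sub_stdGaussian :
    IsStein (gaussianPair ι) (fun z => z.1 - z.2) 2 := by
  simpa only [one_add_one_eq_two] using isStein_stdGaussian.prod_sub isStein_stdGaussian

variable {f g : EuclideanSpace ℝ ι → ℝ}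

theorem integrable_prod_mul_translates (hf : IsTest f) (hg : IsTest g) (r : ℝ) :
    Integrable (fun p : EuclideanSpace ℝ ι × EuclideanSpace ℝ ι × EuclideanSpace ℝ ι =>
      f (p.1 + r • p.2.1) * g (p.1 + r • p.2.2))
      (volume.prod (gaussianPair ι)) := by
  obtain ⟨M, hM0, hM⟩ := hg.exists_bound
  have hf_cont := hf.continuous
  have hg_cont := hg.continuous
  refine ((integrable_prod_avg_integrand (τ := fun z => r • z.1) (integrable_const (1 : ℝ))
    (by fun_prop) hf).mul_const M).mono (Continuous.aestronglyMeasurable (by fun_prop)) ?_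
  filter_upwards with p
  simp only [norm_mul, Real.norm_eq_abs, abs_of_nonneg hM0, one_mul]
  gcongr
  exact hM _

theorem integral_gaussFlow_mul_gaussFlow (hf : IsTest f) (hg : IsTest g) (r : ℝ) :
    ∫ x, gaussFlow r f x * gaussFlow r g x = ∫ x, g x * heatFlow r f x := by
  have displacement_meas :
      Measurable fun z : EuclideanSpace ℝ ι × EuclideanSpace ℝ ι => r • (z.1 - z.2) := by fun_prop
  have pairing :=
    integral_mul_avg (μ := gaussianPair ι) (integrable_const 1) displacement_meas hf hg
  simp only [avg, one_mul] at pairing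
  simp only [gaussFlow, flow_apply, ← integral_prod_mul]
  rw [integral_integral_swap (integrable_prod_mul_translates hf hg r), pairing]
  congr 1 with z
  rw [← integral_add_right_eq_self (fun x => g x * f (x + r • (z.1 - z.2))) (r • z.2)]
  congr 1 with x
  rw [mul_comm, smul_sub, add_assoc, add_sub_cancel]

end HeatFlow

/-- The measure on scales and displacements defining the truncated Newtonian potential. -/
abbrev newtMeasure (ι : Type*) [Fintype ι] (ρ : ℝ) :
    Measure (ℝ × EuclideanSpace ℝ ι × EuclideanSpace ℝ ι) :=
  (volume.restrict (Set.Ioc 0 ρ)).prod (gaussianPair ι)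

/-- The truncated Newtonian potential `∫₀^ρ 2 r P_r f dr`, where `P_r` is `heatFlow r`. -/
def newt (ρ : ℝ) (f : EuclideanSpace ℝ ι → ℝ) : EuclideanSpace ℝ ι → ℝ :=
  avg (newtMeasure ι ρ) (fun ω => 2 * ω.1) (fun ω => ω.1 • (ω.2.1 - ω.2.2)) f

/-- The mean displacement of the heat flow at unit scale. -/
def meanDisp (ι : Type*) [Fintype ι] : ℝ := ∫ z, ‖z.1 - z.2‖ ∂gaussianPair ι

theorem meanDisp_nonneg : 0 ≤ meanDisp ι := integral_nonneg fun _ => norm_nonneg _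

section Newt

variable {ρ : ℝ} {f : EuclideanSpace ℝ ι → ℝ}

theorem integrable_newt_weight (ρ : ℝ) : Integrable (fun ω => 2 * ω.1) (newtMeasure ι ρ) := by
  have on_scales : Integrable (fun r : ℝ => 2 * r) (volume.restrict (Set.Ioc 0 ρ)) :=
    (continuous_const.mul continuous_id).integrableOn_Ioc
  exact on_scales.comp_fst _

theorem measurable_newt_displacement {E : Type*} [MeasurableSpace E] [AddGroup E]
    [MeasurableSub₂ E] [SMul ℝ E] [MeasurableSMul₂ ℝ E] :
    Measurable fun ω : ℝ × E × E => ω.1 • (ω.2.1 - ω.2.2) := by fun_prop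

theorem contDiff_newt (hf : IsTest f) : ContDiff ℝ (⊤ : ℕ∞) (newt ρ f) :=
  contDiff_avg (integrable_newt_weight ρ) measurable_newt_displacement hf

theorem partialDeriv_newt (hf : IsTest f) (i : ι) : ∂[i] (newt ρ f) = newt ρ (∂[i] f) :=
  funext fun x => partialDeriv_avg (integrable_newt_weight ρ) measurable_newt_displacement hf i x

theorem newt_sum {κ : Type*} (s : Finset κ) {F : κ → EuclideanSpace ℝ ι → ℝ}
    (hF : ∀ k, IsTest (F k)) (x : EuclideanSpace ℝ ι) :
    newt ρ (fun y => ∑ k ∈ s, F k y) x = ∑ k ∈ s, newt ρ (F k) x := by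
  simp only [newt, avg, Finset.mul_sum]
  exact integral_finsetSum _ fun k _ => (hF k).integrable_mul_comp (integrable_newt_weight ρ)
    (measurable_newt_displacement.const_add x)

theorem newt_const_mul (a : ℝ) (f : EuclideanSpace ℝ ι → ℝ) (x : EuclideanSpace ℝ ι) :
    newt ρ (fun y => a * f y) x = a * newt ρ f x := by
  simp only [newt, avg, ← integral_const_mul, mul_left_comm]

theorem newt_apply (hρ : 0 ≤ ρ) (hf : IsTest f) (x : EuclideanSpace ℝ ι) :
    newt ρ f x = ∫ r in (0)..ρ, 2 * r * heatFlow r f x := by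
  have integrand_integrable := hf.integrable_mul_comp (integrable_newt_weight ρ)
    (measurable_newt_displacement.const_add x)
  rw [newt, avg, integral_prod _ integrand_integrable, intervalIntegral.integral_of_le hρ]
  simp only [heatFlow, flow_apply, integral_const_mul]

theorem coordLaplacian_newt (hρ : 0 ≤ ρ) (hf : IsTest f) (x : EuclideanSpace ℝ ι) :
    coordLaplacian (newt ρ f) x = heatFlow ρ f x - f x := by
  have laplacian_inside : coordLaplacian (newt ρ f) x = newt ρ (coordLaplacian f) x := by
    refine Eq.trans ?_ (newt_sum _ (fun i => (hf.partialDeriv i).partialDeriv i) x).symm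
    simp only [coordLaplacian, partialDeriv_newt hf, partialDeriv_newt (hf.partialDeriv _)]
  have initial : heatFlow 0 f x = f x := congrFun (flow_zero f) x
  rw [laplacian_inside, newt_apply hρ hf.coordLaplacian, ← initial]
  refine intervalIntegral.integral_eq_sub_of_hasDerivAt
    (fun r _ => hasDerivAt_flow isStein_sub_stdGaussian hf x r)
    (Continuous.intervalIntegrable ?_ _ _)
  exact (continuous_const.mul continuous_id).mul
    ((continuous_flow isStein_sub_stdGaussian.measurable hf.coordLaplacian).comp
      (Continuous.prodMk_left x))

theorem integrable_newt_coord_weight (ρ : ℝ) (i : ι) :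
    Integrable (fun ω => (ω.2.1 - ω.2.2) i) (newtMeasure ι ρ) :=
  (isStein_sub_stdGaussian.integrable_coord i).comp_snd _

theorem partialDeriv_newt_eq_avg (hf : IsTest f) (i : ι) :
    ∂[i] (newt ρ f) = avg (newtMeasure ι ρ) (fun ω => (ω.2.1 - ω.2.2) i)
      (fun ω => ω.1 • (ω.2.1 - ω.2.2)) f := by
  ext x
  have shift_meas := (measurable_newt_displacement (E := EuclideanSpace ℝ ι)).const_add x
  rw [partialDeriv_newt hf, newt, avg, avg,
    integral_prod _ ((hf.partialDeriv i).integrable_mul_comp (integrable_newt_weight ρ) shift_meas),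
    integral_prod _ (hf.integrable_mul_comp (integrable_newt_coord_weight ρ i) shift_meas)]
  congr 1 with r
  exact (integral_const_mul (2 * r) _).trans (isStein_sub_stdGaussian.stein hf i x r).symm

theorem integral_abs_coord_le_meanDisp (i : ι) :
    ∫ z, |(z.1 - z.2) i| ∂gaussianPair ι ≤ meanDisp ι :=
  integral_mono (isStein_sub_stdGaussian.integrable_coord i).abs
    isStein_sub_stdGaussian.norm_integrable fun z => PiLp.norm_apply_le (z.1 - z.2) i

theorem integral_abs_newt_coord_weight_le (hρ : 0 ≤ ρ) (i : ι) :
    ∫ ω, |(ω.2.1 - ω.2.2) i| ∂newtMeasure ι ρ ≤ ρ * meanDisp ι := by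
  rw [integral_prod _ (integrable_newt_coord_weight ρ i).abs]
  simp only [integral_const, smul_eq_mul, measureReal_restrict_apply_univ, volume_real_Ioc_of_le hρ,
    sub_zero]
  gcongr
  exact integral_abs_coord_le_meanDisp i

theorem partialDeriv_heatFlow_eq_avg (hf : IsTest f) (i : ι) (x : EuclideanSpace ℝ ι) :
    2 * ρ * ∂[i] (heatFlow ρ f) x = avg (gaussianPair ι)
      (fun z => (z.1 - z.2) i) (fun z => ρ • (z.1 - z.2)) f x := by
  rw [partialDeriv_flow isStein_sub_stdGaussian.measurable hf, avg,
    isStein_sub_stdGaussian.stein hf, flow_apply]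

end Newt

/-- `A` is differentiable on the plane, with partial derivatives `A₁` and `A₂`. -/
def HasPartials (A A₁ A₂ : ℝ → ℝ → ℝ) : Prop :=
  ∀ p : ℝ × ℝ, HasFDerivAt (fun p : ℝ × ℝ => A p.1 p.2)
    (A₁ p.1 p.2 • ContinuousLinearMap.fst ℝ ℝ ℝ + A₂ p.1 p.2 • ContinuousLinearMap.snd ℝ ℝ ℝ) p

namespace HasPartials

variable {A A₁ A₂ : ℝ → ℝ → ℝ}

theorem continuous (hA : HasPartials A A₁ A₂) : Continuous fun p : ℝ × ℝ => A p.1 p.2 :=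
  continuous_iff_continuousAt.2 fun p => (hA p).continuousAt

theorem differentiable_comp {E : Type*} [NormedAddCommGroup E] [NormedSpace ℝ E] {F V : E → ℝ}
    (hA : HasPartials A A₁ A₂) (hF : Differentiable ℝ F)
    (hV : Differentiable ℝ V) : Differentiable ℝ fun y => A (F y) (V y) :=
  (show Differentiable ℝ fun p : ℝ × ℝ => A p.1 p.2 from
    fun p => (hA p).differentiableAt).comp (hF.prodMk hV)

variable {F V : EuclideanSpace ℝ ι → ℝ}

theorem partialDeriv_comp (hA : HasPartials A A₁ A₂) (hF : Differentiable ℝ F)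
    (hV : Differentiable ℝ V) (i : ι) (x : EuclideanSpace ℝ ι) :
    ∂[i] (fun y => A (F y) (V y)) x = A₁ (F x) (V x) * ∂[i] F x + A₂ (F x) (V x) * ∂[i] V x := by
  have chain := (hA (F x, V x)).comp x ((hF x).hasFDerivAt.prodMk (hV x).hasFDerivAt)
  exact (DFunLike.congr_fun chain.fderiv _).trans (by simp [partialDeriv])

theorem hasDerivAt_comp (hA : HasPartials A A₁ A₂) {F V : ℝ → ℝ} {F' V' r : ℝ}
    (hF : HasDerivAt F F' r) (hV : HasDerivAt V V' r) :
    HasDerivAt (fun s => A (F s) (V s)) (A₁ (F r) (V r) * F' + A₂ (F r) (V r) * V') r := by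
  simpa using! (hA (F r, V r)).comp_hasDerivAt r (hF.prodMk hV)

end HasPartials

/-- A twice continuously differentiable function on the plane, bundled with its partial
derivatives. -/
structure PlaneC2 where
  /-- The function itself. -/
  toFun : ℝ → ℝ → ℝ
  /-- The first partial derivative in the first variable. -/
  d₁ : ℝ → ℝ → ℝ
  /-- The first partial derivative in the second variable. -/
  d₂ : ℝ → ℝ → ℝ
  /-- The second partial derivative in the first variable. -/
  d₁₁ : ℝ → ℝ → ℝ
  /-- The mixed second partial derivative. -/
  d₁₂ : ℝ → ℝ → ℝ
  /-- The second partial derivative in the second variable. -/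
  d₂₂ : ℝ → ℝ → ℝ
  hasPartials : HasPartials toFun d₁ d₂
  hasPartials_d₁ : HasPartials d₁ d₁₁ d₁₂
  hasPartials_d₂ : HasPartials d₂ d₁₂ d₂₂
  continuous_d₁₁ : Continuous fun p : ℝ × ℝ => d₁₁ p.1 p.2
  continuous_d₁₂ : Continuous fun p : ℝ × ℝ => d₁₂ p.1 p.2
  continuous_d₂₂ : Continuous fun p : ℝ × ℝ => d₂₂ p.1 p.2

/-- The Hessian quadratic form of `B` at `(a, b)`, evaluated at `(x, y)`. -/
def PlaneC2.hess (B : PlaneC2) (a b x y : ℝ) : ℝ :=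
  B.d₁₁ a b * x ^ 2 + 2 * B.d₁₂ a b * x * y + B.d₂₂ a b * y ^ 2

/-- Bounded continuous functions. -/
def IsBddCont {X : Type*} [TopologicalSpace X] (Ψ : X → ℝ) : Prop :=
  Continuous Ψ ∧ ∃ C, ∀ p, |Ψ p| ≤ C

namespace IsBddCont

variable {X Y : Type*} [TopologicalSpace X] [TopologicalSpace Y] {Ψ Φ a b c : X → ℝ}

theorem const (c : ℝ) : IsBddCont fun _ : X => c := ⟨continuous_const, |c|, fun _ => le_rfl⟩

theorem mul (hΨ : IsBddCont Ψ) (hΦ : IsBddCont Φ) : IsBddCont fun p => Ψ p * Φ p := by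
  obtain ⟨Ψ_cont, C, hC⟩ := hΨ
  obtain ⟨Φ_cont, D, hD⟩ := hΦ
  refine ⟨Ψ_cont.mul Φ_cont, C * D, fun p => ?_⟩
  rw [abs_mul]
  exact mul_le_mul (hC p) (hD p) (abs_nonneg _) ((abs_nonneg _).trans (hC p))

theorem comp (hΨ : IsBddCont Ψ) {q : Y → X} (hq : Continuous q) : IsBddCont fun y => Ψ (q y) :=
  ⟨hΨ.1.comp hq, hΨ.2.imp fun _ hC y => hC (q y)⟩

theorem comp₂ {A : ℝ → ℝ → ℝ} (hA : Continuous fun p : ℝ × ℝ => A p.1 p.2) (hΨ : IsBddCont Ψ)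
    (hΦ : IsBddCont Φ) : IsBddCont fun p => A (Ψ p) (Φ p) := by
  obtain ⟨Ψ_cont, C, hC⟩ := hΨ
  obtain ⟨Φ_cont, D, hD⟩ := hΦ
  obtain ⟨K, hK⟩ := ((isCompact_Icc (a := -C) (b := C)).prod
    (isCompact_Icc (a := -D) (b := D))).exists_bound_of_continuousOn hA.continuousOn
  exact ⟨hA.comp (Ψ_cont.prodMk Φ_cont), K,
    fun p => hK (Ψ p, Φ p) ⟨abs_le.1 (hC p), abs_le.1 (hD p)⟩⟩

variable [MeasurableSpace X] [OpensMeasurableSpace X] {ν : Measure X}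

theorem integrable_mul (hΨ : IsBddCont Ψ) (hΦ : Integrable Φ ν) :
    Integrable (fun p => Ψ p * Φ p) ν := by
  obtain ⟨Ψ_cont, C, hC⟩ := hΨ
  exact hΦ.bdd_mul Ψ_cont.measurable.aestronglyMeasurable (Eventually.of_forall hC)

theorem integrable_quadratic (ha : IsBddCont a) (hb : IsBddCont b) (hc : IsBddCont c)
    (hΨ : IsBddCont Ψ) (hΦ : IsBddCont Φ) (Ψ_int : Integrable Ψ ν) (Φ_int : Integrable Φ ν) :
    Integrable (fun p => a p * Ψ p ^ 2 + 2 * b p * Ψ p * Φ p + c p * Φ p ^ 2) ν := by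
  refine ((((ha.mul hΨ).integrable_mul Ψ_int).add
    (((hb.mul hΨ).integrable_mul Φ_int).const_mul 2)).add
    ((hc.mul hΦ).integrable_mul Φ_int)).congr (Eventually.of_forall fun p => ?_)
  simp only [Pi.add_apply]
  ring

end IsBddCont

/-- Lebesgue measure on the slab of scales in `(0, ρ]`. -/
abbrev slab (ι : Type*) [Fintype ι] (ρ : ℝ) : Measure (ℝ × EuclideanSpace ℝ ι) :=
  (volume.restrict (Set.Ioc 0 ρ)).prod volume

theorem integrable_fst_mul_slab {Ψ : ℝ × EuclideanSpace ℝ ι → ℝ} {ρ : ℝ}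
    (hΨ : Integrable Ψ (slab ι ρ)) : Integrable (fun p => p.1 * Ψ p) (slab ι ρ) := by
  refine hΨ.bdd_mul (c := ρ) measurable_fst.aestronglyMeasurable ?_
  refine Measure.quasiMeasurePreserving_fst.ae (p := fun r : ℝ => ‖r‖ ≤ ρ) ?_
  filter_upwards [ae_restrict_mem measurableSet_Ioc] with r hr
  rw [Real.norm_of_nonneg hr.1.le]
  exact hr.2

theorem ae_slab_fst_pos (ρ : ℝ) : ∀ᵐ p ∂slab ι ρ, 0 < p.1 := by
  refine Measure.quasiMeasurePreserving_fst.ae (p := fun r : ℝ => 0 < r) ?_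
  filter_upwards [ae_restrict_mem measurableSet_Ioc] with r hr
  exact hr.1

section FlowSlab

variable {Ω : Type*} [MeasurableSpace Ω] {μ : Measure Ω} [IsProbabilityMeasure μ]
  {τ : Ω → EuclideanSpace ℝ ι} {f v : EuclideanSpace ℝ ι → ℝ}

theorem isBddCont_flow (hτ : Measurable τ) (hf : IsTest f) :
    IsBddCont fun p : ℝ × EuclideanSpace ℝ ι => flow μ τ p.1 f p.2 := by
  obtain ⟨M, _, hM⟩ := hf.exists_bound
  exact ⟨continuous_flow hτ hf, M, fun p => abs_flow_le hM _ _⟩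

theorem integral_abs_flow_le (hτ : Measurable τ) (hf : IsTest f) (r : ℝ) :
    ∫ x, |flow μ τ r f x| ≤ ∫ x, |f x| := by
  have joint : Integrable (fun p : EuclideanSpace ℝ ι × Ω => f (p.1 + r • τ p.2))
      (volume.prod μ) := by
    simpa using integrable_prod_avg_integrand (integrable_const (1 : ℝ)) (hτ.const_smul r) hf
  calc ∫ x, |flow μ τ r f x| ≤ ∫ x, ∫ ω, |f (x + r • τ ω)| ∂μ := by
        refine integral_mono (integrable_flow hτ hf r).abs joint.abs.integral_prod_left fun x => ?_
        simp only [flow_apply]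
        exact abs_integral_le_integral_abs
    _ = ∫ ω, (∫ x, |f (x + r • τ ω)|) ∂μ := integral_integral_swap joint.abs
    _ = ∫ x, |f x| := by simp [integral_add_right_eq_self (fun x => |f x|)]

theorem integrable_flow_slab (hτ : Measurable τ) (hf : IsTest f) (ρ : ℝ) :
    Integrable (fun p => flow μ τ p.1 f p.2) (slab ι ρ) := by
  have meas : AEStronglyMeasurable (fun p => flow μ τ p.1 f p.2) (slab ι ρ) :=
    (isBddCont_flow hτ hf).1.aestronglyMeasurable
  rw [integrable_prod_iff meas]
  refine ⟨Eventually.of_forall fun r => integrable_flow hτ hf r,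
    Integrable.of_bound meas.norm.integral_prod_right' (∫ x, |f x|)
      (Eventually.of_forall fun r => ?_)⟩
  rw [Real.norm_of_nonneg (integral_nonneg fun x => norm_nonneg _)]
  exact integral_abs_flow_le hτ hf r

theorem isBddCont_comp_flow {A : ℝ → ℝ → ℝ} (hA : Continuous fun p : ℝ × ℝ => A p.1 p.2)
    (hτ : Measurable τ) (hf : IsTest f) (hv : IsTest v) :
    IsBddCont fun p : ℝ × EuclideanSpace ℝ ι => A (flow μ τ p.1 f p.2) (flow μ τ p.1 v p.2) :=
  .comp₂ hA (isBddCont_flow hτ hf) (isBddCont_flow hτ hv)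

end FlowSlab

section Bellman

variable {Ω : Type*} [MeasurableSpace Ω] {μ : Measure Ω} [IsProbabilityMeasure μ]
  {τ : Ω → EuclideanSpace ℝ ι} {c ρ : ℝ} {f v : EuclideanSpace ℝ ι → ℝ}

/-- The Hessian form of `B` along the flows of `f` and `v`, evaluated at the `i`-th partial
derivatives of these flows. -/
def flowHess (μ : Measure Ω) (τ : Ω → EuclideanSpace ℝ ι) (B : PlaneC2)
    (f v : EuclideanSpace ℝ ι → ℝ) (i : ι) (p : ℝ × EuclideanSpace ℝ ι) : ℝ :=
  B.hess (flow μ τ p.1 f p.2) (flow μ τ p.1 v p.2)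
    (flow μ τ p.1 (∂[i] f) p.2) (flow μ τ p.1 (∂[i] v) p.2)

/-- The differential of `B` along the flows of `f` and `v`, evaluated at the flows of `f'` and
`v'`. -/
def flowDiff (μ : Measure Ω) (τ : Ω → EuclideanSpace ℝ ι) (B : PlaneC2)
    (f v f' v' : EuclideanSpace ℝ ι → ℝ) (p : ℝ × EuclideanSpace ℝ ι) : ℝ :=
  B.d₁ (flow μ τ p.1 f p.2) (flow μ τ p.1 v p.2) * flow μ τ p.1 f' p.2
    + B.d₂ (flow μ τ p.1 f p.2) (flow μ τ p.1 v p.2) * flow μ τ p.1 v' p.2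

theorem integrable_flowHess (B : PlaneC2) (hτ : Measurable τ) (hf : IsTest f) (hv : IsTest v)
    (i : ι) (ρ : ℝ) : Integrable (flowHess μ τ B f v i) (slab ι ρ) :=
  IsBddCont.integrable_quadratic (isBddCont_comp_flow B.continuous_d₁₁ hτ hf hv)
    (isBddCont_comp_flow B.continuous_d₁₂ hτ hf hv) (isBddCont_comp_flow B.continuous_d₂₂ hτ hf hv)
    (isBddCont_flow hτ (hf.partialDeriv i)) (isBddCont_flow hτ (hv.partialDeriv i))
    (integrable_flow_slab hτ (hf.partialDeriv i) ρ) (integrable_flow_slab hτ (hv.partialDeriv i) ρ)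

theorem integrable_flowHess_slice (B : PlaneC2) (hτ : Measurable τ) (hf : IsTest f)
    (hv : IsTest v) (i : ι) (r : ℝ) : Integrable fun x => flowHess μ τ B f v i (r, x) := by
  have slice := Continuous.prodMk_right (Y := EuclideanSpace ℝ ι) r
  exact IsBddCont.integrable_quadratic ((isBddCont_comp_flow B.continuous_d₁₁ hτ hf hv).comp slice)
    ((isBddCont_comp_flow B.continuous_d₁₂ hτ hf hv).comp slice)
    ((isBddCont_comp_flow B.continuous_d₂₂ hτ hf hv).comp slice)
    ((isBddCont_flow hτ (hf.partialDeriv i)).comp slice)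
    ((isBddCont_flow hτ (hv.partialDeriv i)).comp slice)
    (integrable_flow hτ (hf.partialDeriv i) r) (integrable_flow hτ (hv.partialDeriv i) r)

variable {f' v' : EuclideanSpace ℝ ι → ℝ}

theorem continuous_flowDiff (B : PlaneC2) (hτ : Measurable τ) (hf : IsTest f) (hv : IsTest v)
    (hf' : IsTest f') (hv' : IsTest v') : Continuous (flowDiff μ τ B f v f' v') :=
  ((isBddCont_comp_flow B.hasPartials_d₁.continuous hτ hf hv).1.mul (continuous_flow hτ hf')).add
    ((isBddCont_comp_flow B.hasPartials_d₂.continuous hτ hf hv).1.mul (continuous_flow hτ hv'))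

theorem integrable_flowDiff (B : PlaneC2) (hτ : Measurable τ) (hf : IsTest f) (hv : IsTest v)
    (hf' : IsTest f') (hv' : IsTest v') (ρ : ℝ) :
    Integrable (flowDiff μ τ B f v f' v') (slab ι ρ) :=
  ((isBddCont_comp_flow B.hasPartials_d₁.continuous hτ hf hv).integrable_mul
    (integrable_flow_slab hτ hf' ρ)).add
    ((isBddCont_comp_flow B.hasPartials_d₂.continuous hτ hf hv).integrable_mul
      (integrable_flow_slab hτ hv' ρ))

theorem integrable_flowDiff_slice (B : PlaneC2) (hτ : Measurable τ) (hf : IsTest f)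
    (hv : IsTest v) (hf' : IsTest f') (hv' : IsTest v') (r : ℝ) :
    Integrable fun x => flowDiff μ τ B f v f' v' (r, x) := by
  have slice := Continuous.prodMk_right (Y := EuclideanSpace ℝ ι) r
  exact (((isBddCont_comp_flow B.hasPartials_d₁.continuous hτ hf hv).comp slice).integrable_mul
    (integrable_flow hτ hf' r)).add
    (((isBddCont_comp_flow B.hasPartials_d₂.continuous hτ hf hv).comp slice).integrable_mul
      (integrable_flow hτ hv' r))

theorem partialDeriv_flowDiff (B : PlaneC2) (hτ : Measurable τ) (hf : IsTest f) (hv : IsTest v)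
    (i : ι) (r : ℝ) (x : EuclideanSpace ℝ ι) :
    ∂[i] (fun y => flowDiff μ τ B f v (∂[i] f) (∂[i] v) (r, y)) x
      = flowDiff μ τ B f v (∂[i] (∂[i] f)) (∂[i] (∂[i] v)) (r, x)
        + flowHess μ τ B f v i (r, x) := by
  have f_diff := differentiable_flow (μ := μ) hτ hf r
  have v_diff := differentiable_flow (μ := μ) hτ hv r
  have f'_diff := differentiable_flow (μ := μ) hτ (hf.partialDeriv i) r
  have v'_diff := differentiable_flow (μ := μ) hτ (hv.partialDeriv i) r
  have d₁_diff := B.hasPartials_d₁.differentiable_comp f_diff v_diff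
  have d₂_diff := B.hasPartials_d₂.differentiable_comp f_diff v_diff
  simp only [flowDiff, flowHess, PlaneC2.hess]
  rw [partialDeriv_add (d₁_diff.fun_mul f'_diff) (d₂_diff.fun_mul v'_diff),
    partialDeriv_mul d₁_diff f'_diff, partialDeriv_mul d₂_diff v'_diff,
    B.hasPartials_d₁.partialDeriv_comp f_diff v_diff,
    B.hasPartials_d₂.partialDeriv_comp f_diff v_diff,
    partialDeriv_flow hτ hf, partialDeriv_flow hτ hv, partialDeriv_flow hτ (hf.partialDeriv i),
    partialDeriv_flow hτ (hv.partialDeriv i)]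
  ring

theorem integral_flowDiff_partialDeriv (B : PlaneC2) (hτ : Measurable τ) (hf : IsTest f)
    (hv : IsTest v) (i : ι) (r : ℝ) :
    ∫ x, flowDiff μ τ B f v (∂[i] (∂[i] f)) (∂[i] (∂[i] v)) (r, x)
      = -∫ x, flowHess μ τ B f v i (r, x) := by
  have hf' := hf.partialDeriv i
  have hv' := hv.partialDeriv i
  have diff_integrable := integrable_flowDiff_slice (μ := μ) B hτ hf hv (hf'.partialDeriv i)
    (hv'.partialDeriv i) r
  have hess_integrable := integrable_flowHess_slice (μ := μ) B hτ hf hv i r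
  have divergence : ∫ x, ∂[i] (fun y => flowDiff μ τ B f v (∂[i] f) (∂[i] v) (r, y)) x = 0 := by
    refine integral_partialDeriv_eq_zero ?_ i (integrable_flowDiff_slice B hτ hf hv hf' hv' r) ?_
    · have f_diff := differentiable_flow (μ := μ) hτ hf r
      have v_diff := differentiable_flow (μ := μ) hτ hv r
      exact ((B.hasPartials_d₁.differentiable_comp f_diff v_diff).fun_mul
        (differentiable_flow hτ hf' r)).fun_add
        ((B.hasPartials_d₂.differentiable_comp f_diff v_diff).fun_mul
          (differentiable_flow hτ hv' r))
    · exact (diff_integrable.add hess_integrable).congr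
        (Eventually.of_forall fun x => (partialDeriv_flowDiff B hτ hf hv i r x).symm)
  simp only [partialDeriv_flowDiff B hτ hf hv] at divergence
  rw [integral_add diff_integrable hess_integrable] at divergence
  exact eq_neg_of_add_eq_zero_left divergence

theorem integral_flowDiff_coordLaplacian (B : PlaneC2) (hτ : Measurable τ) (hf : IsTest f)
    (hv : IsTest v) (r : ℝ) :
    ∫ x, flowDiff μ τ B f v (coordLaplacian f) (coordLaplacian v) (r, x)
      = -∫ x, ∑ i, flowHess μ τ B f v i (r, x) := by
  have sum_coord : ∀ x, flowDiff μ τ B f v (coordLaplacian f) (coordLaplacian v) (r, x)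
      = ∑ i, flowDiff μ τ B f v (∂[i] (∂[i] f)) (∂[i] (∂[i] v)) (r, x) := fun x => by
    simp only [flowDiff, flow_coordLaplacian hτ hf, flow_coordLaplacian hτ hv, Finset.mul_sum,
      Finset.sum_add_distrib]
  simp only [sum_coord]
  rw [integral_finsetSum _ fun i _ => integrable_flowDiff_slice B hτ hf hv
      ((hf.partialDeriv i).partialDeriv i) ((hv.partialDeriv i).partialDeriv i) r,
    integral_finsetSum _ fun i _ => integrable_flowHess_slice B hτ hf hv i r,
    ← Finset.sum_neg_distrib]
  exact Finset.sum_congr rfl fun i _ => integral_flowDiff_partialDeriv B hτ hf hv i r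

theorem comp_flow_eq_add_integral (B : PlaneC2) (hτ : IsStein μ τ c) (hf : IsTest f)
    (hv : IsTest v) (hρ : 0 ≤ ρ) (x : EuclideanSpace ℝ ι) :
    B.toFun (flow μ τ ρ f x) (flow μ τ ρ v x) = B.toFun (f x) (v x)
      + ∫ r in Set.Ioc 0 ρ,
        c * (r * flowDiff μ τ B f v (coordLaplacian f) (coordLaplacian v) (r, x)) := by
  have hderiv : ∀ r, HasDerivAt (fun r => B.toFun (flow μ τ r f x) (flow μ τ r v x))
      (c * (r * flowDiff μ τ B f v (coordLaplacian f) (coordLaplacian v) (r, x))) r := fun r => by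
    refine (B.hasPartials.hasDerivAt_comp (hasDerivAt_flow hτ hf x r)
      (hasDerivAt_flow hτ hv x r)).congr_deriv ?_
    simp only [flowDiff]
    ring
  have diff_cont : Continuous fun r =>
      c * (r * flowDiff μ τ B f v (coordLaplacian f) (coordLaplacian v) (r, x)) :=
    continuous_const.mul (continuous_id.mul ((continuous_flowDiff B hτ.measurable hf hv
      hf.coordLaplacian hv.coordLaplacian).comp (Continuous.prodMk_left x)))
  rw [← intervalIntegral.integral_of_le hρ, intervalIntegral.integral_eq_sub_of_hasDerivAt
    (fun r _ => hderiv r) (diff_cont.intervalIntegrable _ _), flow_zero, flow_zero]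
  ring

theorem integral_comp_flow (B : PlaneC2) (h0 : B.toFun 0 0 = 0) (hτ : IsStein μ τ c)
    (hf : IsTest f) (hv : IsTest v) (hρ : 0 ≤ ρ) :
    ∫ x, B.toFun (flow μ τ ρ f x) (flow μ τ ρ v x) = (∫ x, B.toFun (f x) (v x))
      - c * ∫ p, p.1 * ∑ i, flowHess μ τ B f v i p ∂slab ι ρ := by
  have diff_integrable := integrable_fst_mul_slab (integrable_flowDiff (μ := μ) B hτ.measurable
    hf hv hf.coordLaplacian hv.coordLaplacian ρ)
  have hess_integrable := integrable_fst_mul_slab (integrable_finsetSum Finset.univ fun i _ =>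
    integrable_flowHess (μ := μ) B hτ.measurable hf hv i ρ)
  have initial_integrable : Integrable fun x => B.toFun (f x) (v x) :=
    (B.hasPartials.continuous.comp (hf.continuous.prodMk hv.continuous))
      |>.integrable_of_hasCompactSupport (hf.compact.comp₂_left hv.compact h0)
  have diff_eq_hess :
      ∫ p, p.1 * flowDiff μ τ B f v (coordLaplacian f) (coordLaplacian v) p ∂slab ι ρ
        = -∫ p, p.1 * ∑ i, flowHess μ τ B f v i p ∂slab ι ρ := by
    rw [integral_prod _ diff_integrable, integral_prod _ hess_integrable, ← integral_neg]
    simp only [integral_const_mul, integral_flowDiff_coordLaplacian B hτ.measurable hf hv, mul_neg]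
  simp only [comp_flow_eq_add_integral B hτ hf hv hρ]
  rw [integral_add initial_integrable (diff_integrable.const_mul c).integral_prod_right,
    ← integral_prod_symm _ (diff_integrable.const_mul c), integral_const_mul, diff_eq_hess]
  ring

theorem integral_weight_mul_flow_sq_le (B : PlaneC2) (h0 : B.toFun 0 0 = 0)
    (hτ : IsStein μ τ c) (hc : 0 ≤ c) (hf : IsTest f) (hv : IsTest v) (hρ : 0 ≤ ρ)
    (hB : ∀ a b, 0 ≤ B.toFun a b) {Ψ : ℝ × EuclideanSpace ℝ ι → ℝ} (hΨ : IsBddCont Ψ)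
    (hΨ0 : ∀ p, 0 ≤ Ψ p)
    (hΨB : ∀ i p, Ψ p * flow μ τ p.1 (∂[i] f) p.2 ^ 2 ≤ flowHess μ τ B f v i p) (i : ι) :
    c * ∫ p, p.1 * (Ψ p * flow μ τ p.1 (∂[i] f) p.2 ^ 2) ∂slab ι ρ ≤ ∫ x, B.toFun (f x) (v x) := by
  have final_nonneg : 0 ≤ ∫ x, B.toFun (flow μ τ ρ f x) (flow μ τ ρ v x) :=
    integral_nonneg fun x => hB _ _
  have weighted_integrable :
      Integrable (fun p => Ψ p * flow μ τ p.1 (∂[i] f) p.2 ^ 2) (slab ι ρ) := by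
    simp only [sq]
    exact hΨ.integrable_mul ((isBddCont_flow hτ.measurable (hf.partialDeriv i)).integrable_mul
      (integrable_flow_slab hτ.measurable (hf.partialDeriv i) ρ))
  have weighted_le_hess : ∫ p, p.1 * (Ψ p * flow μ τ p.1 (∂[i] f) p.2 ^ 2) ∂slab ι ρ
      ≤ ∫ p, p.1 * ∑ k, flowHess μ τ B f v k p ∂slab ι ρ := by
    refine integral_mono_ae (integrable_fst_mul_slab weighted_integrable)
      (integrable_fst_mul_slab (integrable_finsetSum _ fun k _ =>
        integrable_flowHess B hτ.measurable hf hv k ρ)) ?_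
    filter_upwards [ae_slab_fst_pos ρ] with p hp
    refine mul_le_mul_of_nonneg_left ((hΨB i p).trans ?_) hp.le
    exact Finset.single_le_sum (f := fun k => flowHess μ τ B f v k p)
      (fun k _ => (mul_nonneg (hΨ0 p) (sq_nonneg _)).trans (hΨB k p)) (Finset.mem_univ i)
  have := mul_le_mul_of_nonneg_left weighted_le_hess hc
  linarith [integral_comp_flow (μ := μ) B h0 hτ hf hv hρ]

end Bellman

/-- A twice continuously differentiable function on the line, bundled with its derivatives. -/
structure LineC2 where
  /-- The function itself. -/
  toFun : ℝ → ℝ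
  /-- The first derivative. -/
  deriv : ℝ → ℝ
  /-- The second derivative. -/
  deriv₂ : ℝ → ℝ
  hasDerivAt : ∀ a, HasDerivAt toFun (deriv a) a
  hasDerivAt_deriv : ∀ a, HasDerivAt deriv (deriv₂ a) a
  continuous_deriv₂ : Continuous deriv₂

namespace LineC2

/-- Constant functions. -/
def const (c : ℝ) : LineC2 where
  toFun _ := c
  deriv _ := 0
  deriv₂ _ := 0
  hasDerivAt _ := hasDerivAt_const _ _
  hasDerivAt_deriv _ := hasDerivAt_const _ _
  continuous_deriv₂ := continuous_const

/-- The square. -/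
def square : LineC2 where
  toFun a := a ^ 2
  deriv a := 2 * a
  deriv₂ _ := 2
  hasDerivAt a := by simpa using hasDerivAt_pow 2 a
  hasDerivAt_deriv a := by simpa using (hasDerivAt_id a).const_mul 2
  continuous_deriv₂ := continuous_const

theorem continuous (φ : LineC2) : Continuous φ.toFun :=
  continuous_iff_continuousAt.2 fun a => (φ.hasDerivAt a).continuousAt

theorem continuous_deriv (φ : LineC2) : Continuous φ.deriv :=
  continuous_iff_continuousAt.2 fun a => (φ.hasDerivAt_deriv a).continuousAt

end LineC2

theorem hasPartials_mul_add {φ ψ χ φ' ψ' χ' : ℝ → ℝ} (hφ : ∀ a, HasDerivAt φ (φ' a) a)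
    (hψ : ∀ b, HasDerivAt ψ (ψ' b) b) (hχ : ∀ b, HasDerivAt χ (χ' b) b) :
    HasPartials (fun a b => φ a * ψ b + χ b) (fun a b => φ' a * ψ b)
      (fun a b => φ a * ψ' b + χ' b) := fun p => by
  have φ_fst := (hφ p.1).comp_hasFDerivAt p (hasFDerivAt_fst (𝕜 := ℝ) (E := ℝ) (F := ℝ))
  have ψ_snd := (hψ p.2).comp_hasFDerivAt p (hasFDerivAt_snd (𝕜 := ℝ) (E := ℝ) (F := ℝ))
  have χ_snd := (hχ p.2).comp_hasFDerivAt p (hasFDerivAt_snd (𝕜 := ℝ) (E := ℝ) (F := ℝ))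
  refine ((φ_fst.fun_mul ψ_snd).fun_add χ_snd).congr_fderiv ?_
  ext
  · simp [mul_comm]
  · simp

/-- The function `φ a * ψ b + χ b` of two variables. -/
def PlaneC2.mulAdd (φ ψ χ : LineC2) : PlaneC2 where
  toFun a b := φ.toFun a * ψ.toFun b + χ.toFun b
  d₁ a b := φ.deriv a * ψ.toFun b
  d₂ a b := φ.toFun a * ψ.deriv b + χ.deriv b
  d₁₁ a b := φ.deriv₂ a * ψ.toFun b
  d₁₂ a b := φ.deriv a * ψ.deriv b
  d₂₂ a b := φ.toFun a * ψ.deriv₂ b + χ.deriv₂ b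
  hasPartials := hasPartials_mul_add φ.hasDerivAt ψ.hasDerivAt χ.hasDerivAt
  hasPartials_d₁ := by
    simpa using hasPartials_mul_add φ.hasDerivAt_deriv ψ.hasDerivAt fun b => hasDerivAt_const b 0
  hasPartials_d₂ := hasPartials_mul_add φ.hasDerivAt ψ.hasDerivAt_deriv χ.hasDerivAt_deriv
  continuous_d₁₁ := (φ.continuous_deriv₂.comp continuous_fst).mul
    (ψ.continuous.comp continuous_snd)
  continuous_d₁₂ := (φ.continuous_deriv.comp continuous_fst).mul
    (ψ.continuous_deriv.comp continuous_snd)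
  continuous_d₂₂ := ((φ.continuous.comp continuous_fst).mul
    (ψ.continuous_deriv₂.comp continuous_snd)).add (χ.continuous_deriv₂.comp continuous_snd)

/-- A smooth regularisation of the square root of the absolute value, equal to `(d⁴ + b²)^(1/4)`. -/
def regSqrt (d b : ℝ) : ℝ := √√(d ^ 4 + b ^ 2)

section RegSqrt

variable {d : ℝ}

theorem regSqrt_pow_four (d b : ℝ) : regSqrt d b ^ 4 = d ^ 4 + b ^ 2 := by
  rw [show regSqrt d b ^ 4 = (regSqrt d b ^ 2) ^ 2 by ring, regSqrt, sq_sqrt (sqrt_nonneg _),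
    sq_sqrt (by positivity)]

theorem regSqrt_pos (hd : 0 < d) (b : ℝ) : 0 < regSqrt d b :=
  sqrt_pos.2 (sqrt_pos.2 (by positivity))

theorem continuous_regSqrt (d : ℝ) : Continuous (regSqrt d) := by
  unfold regSqrt
  fun_prop

theorem regSqrt_le_regSqrt {a b : ℝ} (h : |a| ≤ b) : regSqrt d a ≤ regSqrt d b := by
  have : a ^ 2 ≤ b ^ 2 := sq_le_sq' (abs_le.1 h).1 (abs_le.1 h).2
  unfold regSqrt
  gcongr

theorem le_regSqrt (d b : ℝ) : d ≤ regSqrt d b :=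
  le_of_pow_le_pow_left₀ four_ne_zero (sqrt_nonneg _) <| by
    rw [regSqrt_pow_four]
    exact le_add_of_nonneg_right (sq_nonneg b)

theorem abs_le_regSqrt_sq (d b : ℝ) : |b| ≤ regSqrt d b ^ 2 := by
  refine abs_le_of_sq_le_sq ?_ (sq_nonneg _)
  rw [← pow_mul, regSqrt_pow_four]
  exact le_add_of_nonneg_left (by positivity)

theorem regSqrt_le (hd : 0 ≤ d) {b : ℝ} (hb : 0 ≤ b) : regSqrt d b ≤ d + √b := by
  obtain ⟨s, hs, rfl⟩ : ∃ s, 0 ≤ s ∧ s ^ 2 = b := ⟨√b, sqrt_nonneg b, sq_sqrt hb⟩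
  rw [sqrt_sq hs]
  refine le_of_pow_le_pow_left₀ four_ne_zero (by positivity) ?_
  have cross : 0 ≤ 4 * d ^ 3 * s + 6 * d ^ 2 * s ^ 2 + 4 * d * s ^ 3 := by positivity
  rw [regSqrt_pow_four]
  linear_combination cross

theorem regSqrt_cube_le (hd : 0 < d) {b : ℝ} (hb : 0 ≤ b) :
    regSqrt d b ^ 3 - d ^ 3 ≤ b * √b := by
  obtain ⟨s, hs, rfl⟩ : ∃ s, 0 ≤ s ∧ s ^ 2 = b := ⟨√b, sqrt_nonneg b, sq_sqrt hb⟩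
  have d_le := le_regSqrt d (s ^ 2)
  have s_le : s ≤ regSqrt d (s ^ 2) := by
    have := abs_le_regSqrt_sq d (s ^ 2)
    rw [abs_of_nonneg hb] at this
    exact le_of_pow_le_pow_left₀ two_ne_zero (sqrt_nonneg _) this
  have pow_four := regSqrt_pow_four d (s ^ 2)
  have h_pos := regSqrt_pos hd (s ^ 2)
  rw [sqrt_sq hs]
  set h := regSqrt d (s ^ 2)
  have : h * h ^ 3 ≤ h * (d ^ 3 + s ^ 3) := by
    have d_cube : d * d ^ 3 ≤ h * d ^ 3 := by gcongr
    have s_cube : s * s ^ 3 ≤ h * s ^ 3 := by gcongr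
    linear_combination pow_four + d_cube + s_cube
  linear_combination le_of_mul_le_mul_left this h_pos

theorem hasDerivAt_regSqrt (hd : 0 < d) (b : ℝ) :
    HasDerivAt (regSqrt d) (b / (2 * regSqrt d b ^ 3)) b := by
  have inner_pos : 0 < d ^ 4 + b ^ 2 := by positivity
  have h_pos := regSqrt_pos hd b
  refine ((((hasDerivAt_pow 2 b).const_add (d ^ 4)).sqrt inner_pos.ne').sqrt
    (sqrt_pos.2 inner_pos).ne').congr_deriv ?_
  have inner_eq : √(d ^ 4 + b ^ 2) = regSqrt d b ^ 2 := (sq_sqrt (sqrt_nonneg _)).symm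
  change _ / (2 * regSqrt d b) = _
  rw [inner_eq]
  simp only [Nat.cast_ofNat, Nat.add_one_sub_one, pow_one]
  field_simp

theorem hasDerivAt_regSqrt_deriv (hd : 0 < d) (b : ℝ) :
    HasDerivAt (fun b => b / (2 * regSqrt d b ^ 3))
      (1 / (2 * regSqrt d b ^ 3) - 3 * b ^ 2 / (4 * regSqrt d b ^ 7)) b := by
  have h_pos := regSqrt_pos hd b
  refine ((hasDerivAt_id b).fun_div (((hasDerivAt_regSqrt hd b).fun_pow 3).const_mul 2)
    (by positivity)).congr_deriv ?_
  simp only [id, Nat.cast_ofNat, Nat.add_one_sub_one]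
  field_simp
  ring

theorem hasDerivAt_regSqrt_cube (hd : 0 < d) (b : ℝ) :
    HasDerivAt (fun b => 2 * (regSqrt d b ^ 3 - d ^ 3)) (3 * b / regSqrt d b) b := by
  have h_pos := regSqrt_pos hd b
  refine ((((hasDerivAt_regSqrt hd b).fun_pow 3).sub_const (d ^ 3)).const_mul 2).congr_deriv ?_
  simp only [Nat.cast_ofNat, Nat.add_one_sub_one]
  field_simp

theorem hasDerivAt_regSqrt_cube_deriv (hd : 0 < d) (b : ℝ) :
    HasDerivAt (fun b => 3 * b / regSqrt d b)
      (3 / regSqrt d b - 3 * b ^ 2 / (2 * regSqrt d b ^ 5)) b := by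
  have h_pos := regSqrt_pos hd b
  refine (((hasDerivAt_id b).const_mul 3).fun_div (hasDerivAt_regSqrt hd b)
    h_pos.ne').congr_deriv ?_
  simp only [id]
  field_simp

/-- `regSqrt d` as a twice continuously differentiable function. -/
def regSqrtC2 (hd : 0 < d) : LineC2 where
  toFun := regSqrt d
  deriv b := b / (2 * regSqrt d b ^ 3)
  deriv₂ b := 1 / (2 * regSqrt d b ^ 3) - 3 * b ^ 2 / (4 * regSqrt d b ^ 7)
  hasDerivAt := hasDerivAt_regSqrt hd
  hasDerivAt_deriv := hasDerivAt_regSqrt_deriv hd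
  continuous_deriv₂ := by
    have := continuous_regSqrt d
    have := fun b => (regSqrt_pos hd b).ne'
    fun_prop (disch := simp [this])

/-- A smooth regularisation of `2 |b| ^ (3 / 2)`, vanishing at the origin. -/
def regCubeC2 (hd : 0 < d) : LineC2 where
  toFun b := 2 * (regSqrt d b ^ 3 - d ^ 3)
  deriv b := 3 * b / regSqrt d b
  deriv₂ b := 3 / regSqrt d b - 3 * b ^ 2 / (2 * regSqrt d b ^ 5)
  hasDerivAt := hasDerivAt_regSqrt_cube hd
  hasDerivAt_deriv := hasDerivAt_regSqrt_cube_deriv hd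
  continuous_deriv₂ := by
    have := continuous_regSqrt d
    have := fun b => (regSqrt_pos hd b).ne'
    fun_prop (disch := simp [this])

theorem regCubeC2_nonneg (hd : 0 < d) (b : ℝ) : 0 ≤ (regCubeC2 hd).toFun b :=
  mul_nonneg zero_le_two (sub_nonneg.2 (pow_le_pow_left₀ hd.le (le_regSqrt d b) 3))

theorem inv_regSqrt_le_regCubeC2_deriv₂ (hd : 0 < d) (b : ℝ) :
    (regSqrt d b)⁻¹ ≤ (regCubeC2 hd).deriv₂ b := by
  have h_pos := regSqrt_pos hd b
  have sq_le : b ^ 2 ≤ regSqrt d b ^ 4 := by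
    rw [regSqrt_pow_four]
    exact le_add_of_nonneg_left (by positivity)
  simp only [regCubeC2]
  rw [← sub_nonneg]
  have : 3 / regSqrt d b - 3 * b ^ 2 / (2 * regSqrt d b ^ 5) - (regSqrt d b)⁻¹
      = (4 * regSqrt d b ^ 4 - 3 * b ^ 2) / (2 * regSqrt d b ^ 5) := by
    field_simp
    ring
  rw [this]
  exact div_nonneg (by linarith [sq_nonneg b]) (by positivity)

/-- The Bellman function of the Calderón–Zygmund estimate at exponent `3`: it satisfies
`0 ≤ B ≲ b ^ (3 / 2)` on `a² ≤ b` and its Hessian controls `√b x²` there. -/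
def bellmanThree (hd : 0 < d) : PlaneC2 := .mulAdd .square (regSqrtC2 hd) (regCubeC2 hd)

/-- The Bellman function of the Calderón–Zygmund estimate at the dual exponent `3 / 2`. -/
def bellmanDual (hd : 0 < d) : PlaneC2 := .mulAdd (regCubeC2 hd) (.const 1) (.const 0)

theorem bellmanThree_nonneg (hd : 0 < d) (a b : ℝ) : 0 ≤ (bellmanThree hd).toFun a b :=
  add_nonneg (mul_nonneg (sq_nonneg a) (regSqrt_pos hd b).le) (regCubeC2_nonneg hd b)

theorem bellmanDual_nonneg (hd : 0 < d) (a b : ℝ) : 0 ≤ (bellmanDual hd).toFun a b :=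
  add_nonneg (mul_nonneg (regCubeC2_nonneg hd a) zero_le_one) le_rfl

theorem bellmanThree_le (hd : 0 < d) {a b : ℝ} (hab : a ^ 2 ≤ b) :
    (bellmanThree hd).toFun a b ≤ d * a ^ 2 + 3 * (b * √b) := by
  have hb := (sq_nonneg a).trans hab
  have weight := mul_le_mul_of_nonneg_left (regSqrt_le hd.le hb) (sq_nonneg a)
  have cube := regSqrt_cube_le hd hb
  have dominated := mul_le_mul_of_nonneg_right hab (sqrt_nonneg b)
  simp only [bellmanThree, PlaneC2.mulAdd, LineC2.square, regSqrtC2, regCubeC2]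
  linear_combination weight + 2 * cube + dominated

theorem bellmanDual_le (hd : 0 < d) {a b : ℝ} (hab : |a| ≤ b) (c : ℝ) :
    (bellmanDual hd).toFun a c ≤ 2 * (b * √b) := by
  have cube := regSqrt_cube_le hd ((abs_nonneg a).trans hab)
  have mono := pow_le_pow_left₀ (regSqrt_pos hd a).le (regSqrt_le_regSqrt (d := d) hab) 3
  simp only [bellmanDual, PlaneC2.mulAdd, LineC2.const, regCubeC2]
  linear_combination 2 * cube + 2 * mono

/-- With `a = s h`, `b = e h²` and `y = z h`, where `h = regSqrt d b` and `s², e² ≤ 1`, the Hessian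
is homogeneous in `h` and the claim is a polynomial inequality in `s`, `e`, `x`, `z`. -/
theorem regSqrt_mul_sq_le_bellmanThree_hess (hd : 0 < d) {a b : ℝ} (hab : a ^ 2 ≤ b) (x y : ℝ) :
    regSqrt d b * x ^ 2 ≤ (bellmanThree hd).hess a b x y := by
  have hp := regSqrt_pos hd b
  have b_le := abs_le_regSqrt_sq d b
  simp only [PlaneC2.hess, bellmanThree, PlaneC2.mulAdd, LineC2.square, regSqrtC2, regCubeC2]
  generalize regSqrt d b = h at hp b_le ⊢
  obtain ⟨s, rfl⟩ : ∃ s, a = s * h := ⟨a / h, by field_simp⟩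
  obtain ⟨e, rfl⟩ : ∃ e, b = e * h ^ 2 := ⟨b / h ^ 2, by field_simp⟩
  obtain ⟨z, rfl⟩ : ∃ z, y = z * h := ⟨y / h, by field_simp⟩
  have hh : 0 < h ^ 2 := by positivity
  have he : |e| ≤ 1 := by
    rw [abs_mul, abs_of_pos hh] at b_le
    exact le_of_mul_le_mul_right (by linarith) hh
  have hs : s ^ 2 ≤ 1 := by
    have : s ^ 2 ≤ e := le_of_mul_le_mul_right (by linarith [mul_pow s h 2]) hh
    exact this.trans ((le_abs_self e).trans he)
  have he : e ^ 2 ≤ 1 := (sq_le_one_iff_abs_le_one e).2 he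
  have form_nonneg : 0 ≤ x ^ 2 + 2 * s * e * x * z
      + (s ^ 2 * (1 / 2 - 3 / 4 * e ^ 2) + 3 - 3 / 2 * e ^ 2) * z ^ 2 := by
    have coeff_nonneg : 0 ≤ s ^ 2 * (1 / 2 - 7 / 4 * e ^ 2) + 3 - 3 / 2 * e ^ 2 := by
      nlinarith [mul_nonneg (sub_nonneg.2 hs) (sub_nonneg.2 he), sq_nonneg s, sq_nonneg e]
    linear_combination sq_nonneg (x + s * e * z) + mul_nonneg coeff_nonneg (sq_nonneg z)
  have scaled := mul_nonneg hp.le form_nonneg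
  refine sub_nonneg.1 (scaled.trans_eq ?_)
  field_simp
  ring

theorem inv_regSqrt_mul_sq_le_bellmanDual_hess (hd : 0 < d) {a c : ℝ} (hac : |a| ≤ c)
    (b x y : ℝ) : (regSqrt d c)⁻¹ * x ^ 2 ≤ (bellmanDual hd).hess a b x y := by
  have inv_le := (inv_anti₀ (regSqrt_pos hd a) (regSqrt_le_regSqrt hac)).trans
    (inv_regSqrt_le_regCubeC2_deriv₂ hd a)
  simp only [PlaneC2.hess, bellmanDual, PlaneC2.mulAdd, LineC2.const]
  linear_combination mul_le_mul_of_nonneg_right inv_le (sq_nonneg x)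

end RegSqrt

section CalderonZygmund

theorem integrable_mul_integral_mul_translate {Ω : Type*} [MeasurableSpace Ω] {μ : Measure Ω}
    [SFinite μ] {m : Ω → ℝ} {τ : Ω → EuclideanSpace ℝ ι} {f g : EuclideanSpace ℝ ι → ℝ}
    (hm : Integrable m μ) (hτ : Measurable τ) (hf : IsTest f) (hg : IsTest g) :
    Integrable (fun ω => m ω * ∫ x, g x * f (x + τ ω)) μ := by
  obtain ⟨M, -, hM⟩ := hg.exists_bound
  have joint := (integrable_prod_avg_integrand hm hτ hf).bdd_mul (c := M)
    (hg.continuous.measurable.comp measurable_fst).aestronglyMeasurable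
    (Eventually.of_forall fun p => hM _)
  simpa only [Function.comp_apply, mul_left_comm, integral_const_mul] using
    joint.integral_prod_right

variable {f g v : EuclideanSpace ℝ ι → ℝ} {ρ d : ℝ}

theorem integrable_fst_mul_weight_mul_flow_sq {Ψ : ℝ × EuclideanSpace ℝ ι → ℝ} (hΨ : IsBddCont Ψ)
    (hf : IsTest f) (ρ : ℝ) :
    Integrable (fun p => p.1 * (Ψ p * gaussFlow p.1 f p.2 ^ 2)) (slab ι ρ) := by
  simp only [sq]
  exact integrable_fst_mul_slab (hΨ.integrable_mul
    ((isBddCont_flow measurable_id hf).integrable_mul (integrable_flow_slab measurable_id hf ρ)))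

theorem integral_mul_newt (hf : IsTest f) (hg : IsTest g) (ρ : ℝ) :
    ∫ x, g x * newt ρ f x
      = ∫ p, p.1 * (2 * gaussFlow p.1 g p.2 * gaussFlow p.1 f p.2) ∂slab ι ρ := by
  have flows_integrable : Integrable
      (fun p => p.1 * (2 * gaussFlow p.1 g p.2 * gaussFlow p.1 f p.2)) (slab ι ρ) := by
    simp only [mul_assoc]
    exact integrable_fst_mul_slab (((isBddCont_flow measurable_id hg).integrable_mul
      (integrable_flow_slab measurable_id hf ρ)).const_mul 2)
  have heat_pairing : ∀ r : ℝ, ∫ z, (∫ x, g x * f (x + r • (z.1 - z.2))) ∂gaussianPair ι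
      = ∫ x, gaussFlow r f x * gaussFlow r g x := fun r => by
    rw [integral_gaussFlow_mul_gaussFlow hf hg]
    simpa only [heatFlow, flow_apply, avg, one_mul] using
      (integral_mul_avg (μ := gaussianPair ι) (integrable_const 1)
        (τ := fun z => r • (z.1 - z.2)) (by fun_prop) hf hg).symm
  rw [newt, integral_mul_avg (integrable_newt_weight ρ) measurable_newt_displacement hf hg,
    integral_prod _ (integrable_mul_integral_mul_translate (integrable_newt_weight ρ)
      measurable_newt_displacement hf hg), integral_prod _ flows_integrable]
  congr 1 with r
  simp only [mul_assoc, integral_const_mul, heat_pairing, mul_left_comm 2 r]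
  simp only [mul_comm]

theorem integral_mul_partialDeriv_partialDeriv_newt (hf : IsTest f) (hg : IsTest g) (ρ : ℝ)
    (i j : ι) :
    ∫ x, g x * ∂[i] (∂[j] (newt ρ f)) x
      = -∫ p, p.1 * (2 * gaussFlow p.1 (∂[i] g) p.2 * gaussFlow p.1 (∂[j] f) p.2) ∂slab ι ρ := by
  rw [hg.integral_mul_partialDeriv (contDiff_partialDeriv (contDiff_newt hf) j),
    partialDeriv_newt hf, integral_mul_newt (hf.partialDeriv j) (hg.partialDeriv i)]

theorem abs_two_mul_mul_le_weighted {h : ℝ} (hh : 0 < h) (a b : ℝ) :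
    |2 * a * b| ≤ h * b ^ 2 + h⁻¹ * a ^ 2 := by
  have minus : h * b ^ 2 + h⁻¹ * a ^ 2 - 2 * a * b = h⁻¹ * (h * b - a) ^ 2 := by
    field_simp
    ring
  have plus : h * b ^ 2 + h⁻¹ * a ^ 2 + 2 * a * b = h⁻¹ * (h * b + a) ^ 2 := by
    field_simp
    ring
  have minus_nonneg : 0 ≤ h⁻¹ * (h * b - a) ^ 2 := by positivity
  have plus_nonneg : 0 ≤ h⁻¹ * (h * b + a) ^ 2 := by positivity
  exact abs_le.2 ⟨by linarith, by linarith⟩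

theorem abs_integral_mul_partialDeriv_partialDeriv_newt_le (hf : IsTest f) (hg : IsTest g)
    {h : ℝ × EuclideanSpace ℝ ι → ℝ} (h_bdd : IsBddCont h) (h_inv_bdd : IsBddCont fun p => (h p)⁻¹)
    (h_pos : ∀ p, 0 < h p) (ρ : ℝ) (i j : ι) :
    |∫ x, g x * ∂[i] (∂[j] (newt ρ f)) x|
      ≤ (∫ p, p.1 * (h p * gaussFlow p.1 (∂[j] f) p.2 ^ 2) ∂slab ι ρ)
        + ∫ p, p.1 * ((h p)⁻¹ * gaussFlow p.1 (∂[i] g) p.2 ^ 2) ∂slab ι ρ := by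
  have f_integrable := integrable_fst_mul_weight_mul_flow_sq h_bdd (hf.partialDeriv j) ρ
  have g_integrable := integrable_fst_mul_weight_mul_flow_sq h_inv_bdd (hg.partialDeriv i) ρ
  rw [integral_mul_partialDeriv_partialDeriv_newt hf hg, abs_neg,
    ← integral_add f_integrable g_integrable, ← Real.norm_eq_abs]
  refine norm_integral_le_of_norm_le (f_integrable.add g_integrable) ?_
  filter_upwards [ae_slab_fst_pos ρ] with p hp
  rw [Real.norm_eq_abs, abs_mul, abs_of_pos hp, ← mul_add]
  exact mul_le_mul_of_nonneg_left (abs_two_mul_mul_le_weighted (h_pos p) _ _) hp.le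

theorem integral_gaussFlow_sq_le (hf : IsTest f) (hρ : 0 ≤ ρ) (i : ι) :
    ∫ p, p.1 * (1 * gaussFlow p.1 (∂[i] f) p.2 ^ 2) ∂slab ι ρ ≤ ∫ x, f x ^ 2 := by
  have := integral_weight_mul_flow_sq_le (.mulAdd .square (.const 1) (.const 0))
    (by simp [PlaneC2.mulAdd, LineC2.square, LineC2.const]) isStein_stdGaussian zero_le_one hf hf hρ
    (fun a b => by simp [PlaneC2.mulAdd, LineC2.square, LineC2.const, sq_nonneg])
    (.const 1) (fun _ => zero_le_one)
    (fun i p => by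
      simp only [flowHess, PlaneC2.hess, PlaneC2.mulAdd, LineC2.square, LineC2.const]
      linarith [sq_nonneg (gaussFlow p.1 (∂[i] f) p.2)]) i
  simpa only [PlaneC2.mulAdd, LineC2.square, LineC2.const, one_mul, mul_one, add_zero] using this

theorem abs_integral_mul_partialDeriv_partialDeriv_newt_le_sq (hf : IsTest f) (hg : IsTest g)
    (hρ : 0 ≤ ρ) (i j : ι) :
    |∫ x, g x * ∂[i] (∂[j] (newt ρ f)) x| ≤ (∫ x, f x ^ 2) + ∫ x, g x ^ 2 := by
  have := abs_integral_mul_partialDeriv_partialDeriv_newt_le hf hg (.const 1)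
    (by simpa only [inv_one] using IsBddCont.const 1) (fun _ => one_pos) ρ i j
  rw [inv_one] at this
  exact this.trans
    (add_le_add (integral_gaussFlow_sq_le hf hρ j) (integral_gaussFlow_sq_le hg hρ i))

theorem isBddCont_regSqrt_flow (hv : IsTest v) (d : ℝ) :
    IsBddCont fun p : ℝ × EuclideanSpace ℝ ι => regSqrt d (gaussFlow p.1 v p.2) :=
  isBddCont_comp_flow (A := fun _ b => regSqrt d b) ((continuous_regSqrt d).comp continuous_snd)
    measurable_id hv hv

theorem isBddCont_inv_regSqrt_flow (hv : IsTest v) (hd : 0 < d) :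
    IsBddCont fun p : ℝ × EuclideanSpace ℝ ι => (regSqrt d (gaussFlow p.1 v p.2))⁻¹ :=
  isBddCont_comp_flow (A := fun _ b => (regSqrt d b)⁻¹)
    (((continuous_regSqrt d).comp continuous_snd).inv₀ fun _ => (regSqrt_pos hd _).ne')
    measurable_id hv hv

theorem integral_regSqrt_mul_gaussFlow_sq_le (hf : IsTest f) (hv : IsTest v)
    (hfv : ∀ x, f x ^ 2 ≤ v x) (hρ : 0 ≤ ρ) (hd : 0 < d) (i : ι) :
    ∫ p, p.1 * (regSqrt d (gaussFlow p.1 v p.2) * gaussFlow p.1 (∂[i] f) p.2 ^ 2) ∂slab ι ρ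
      ≤ d * (∫ x, f x ^ 2) + 3 * ∫ x, v x * √(v x) := by
  have bellman := integral_weight_mul_flow_sq_le (bellmanThree hd)
    (le_antisymm (by simpa using bellmanThree_le hd (a := 0) (b := 0) (by simp))
      (bellmanThree_nonneg hd 0 0))
    isStein_stdGaussian zero_le_one hf hv hρ (bellmanThree_nonneg hd)
    (isBddCont_regSqrt_flow hv d) (fun _ => (regSqrt_pos hd _).le)
    (fun i p => regSqrt_mul_sq_le_bellmanThree_hess hd
      (flow_sq_le_flow measurable_id hf hv hfv p.1 p.2) _ _) i
  have f_sq_integrable := (hf.pow two_ne_zero).integrable.const_mul d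
  have v_integrable := hv.integrable_mul_sqrt.const_mul 3
  rw [one_mul] at bellman
  rw [← integral_const_mul, ← integral_const_mul, ← integral_add f_sq_integrable v_integrable]
  exact bellman.trans (integral_mono_of_nonneg
    (Eventually.of_forall fun x => bellmanThree_nonneg hd _ _) (f_sq_integrable.add v_integrable)
    (Eventually.of_forall fun x => bellmanThree_le hd (hfv x)))

theorem integral_inv_regSqrt_mul_gaussFlow_sq_le (hg : IsTest g) (hv : IsTest v)
    (hgv : ∀ x, |g x| ≤ v x) (hρ : 0 ≤ ρ) (hd : 0 < d) (i : ι) :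
    ∫ p, p.1 * ((regSqrt d (gaussFlow p.1 v p.2))⁻¹ * gaussFlow p.1 (∂[i] g) p.2 ^ 2) ∂slab ι ρ
      ≤ 2 * ∫ x, v x * √(v x) := by
  have bellman := integral_weight_mul_flow_sq_le (bellmanDual hd)
    (le_antisymm (by simpa using bellmanDual_le hd (a := 0) (b := 0) (by simp) 0)
      (bellmanDual_nonneg hd 0 0))
    isStein_stdGaussian zero_le_one hg hv hρ (bellmanDual_nonneg hd)
    (isBddCont_inv_regSqrt_flow hv hd) (fun _ => (inv_pos.2 (regSqrt_pos hd _)).le)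
    (fun i p => inv_regSqrt_mul_sq_le_bellmanDual_hess hd
      (abs_flow_le_flow measurable_id hv hgv p.1 p.2) _ _ _) i
  rw [one_mul] at bellman
  rw [← integral_const_mul]
  exact bellman.trans (integral_mono_of_nonneg
    (Eventually.of_forall fun x => bellmanDual_nonneg hd _ _) (hv.integrable_mul_sqrt.const_mul 2)
    (Eventually.of_forall fun x => bellmanDual_le hd (hgv x) _))

theorem abs_integral_mul_partialDeriv_partialDeriv_newt_le_sqrt (hf : IsTest f) (hg : IsTest g)
    (hv : IsTest v) (hfv : ∀ x, f x ^ 2 ≤ v x) (hgv : ∀ x, |g x| ≤ v x) (hρ : 0 ≤ ρ) (i j : ι) :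
    |∫ x, g x * ∂[i] (∂[j] (newt ρ f)) x| ≤ 5 * ∫ x, v x * √(v x) := by
  have regularised : ∀ d : ℝ, 0 < d → |∫ x, g x * ∂[i] (∂[j] (newt ρ f)) x|
      ≤ d * (∫ x, f x ^ 2) + 5 * ∫ x, v x * √(v x) := fun d hd => by
    linarith [abs_integral_mul_partialDeriv_partialDeriv_newt_le hf hg
        (isBddCont_regSqrt_flow hv d) (isBddCont_inv_regSqrt_flow hv hd)
        (fun _ => regSqrt_pos hd _) ρ i j,
      integral_regSqrt_mul_gaussFlow_sq_le hf hv hfv hρ hd j,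
      integral_inv_regSqrt_mul_gaussFlow_sq_le hg hv hgv hρ hd i]
  have limit : Tendsto (fun d => d * (∫ x, f x ^ 2) + 5 * ∫ x, v x * √(v x)) (𝓝[>] 0)
      (𝓝 (5 * ∫ x, v x * √(v x))) := by
    refine tendsto_nhdsWithin_of_tendsto_nhds (Continuous.tendsto' (by fun_prop) _ _ ?_)
    rw [zero_mul, zero_add]
  exact ge_of_tendsto limit (eventually_mem_nhdsWithin.mono regularised)

end CalderonZygmund

/-- Operators whose bilinear form is bounded by `C` both in `L²` and in the sense that a pair
`f² ≤ v`, `|g| ≤ v` is controlled by `∫ v ^ (3 / 2)`: this is the duality of `L³` and `L ^ (3 / 2)`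
with both norms measured by the same majorant `v`. -/
structure IsAdmissible (C : ℝ) (O : (EuclideanSpace ℝ ι → ℝ) → EuclideanSpace ℝ ι → ℝ) :
    Prop where
  smooth : ∀ {f}, IsTest f → ContDiff ℝ (⊤ : ℕ∞) (O f)
  sq_le : ∀ {f g}, IsTest f → IsTest g → |∫ x, g x * O f x| ≤ C * ((∫ x, f x ^ 2) + ∫ x, g x ^ 2)
  sqrt_le : ∀ {f g v}, IsTest f → IsTest g → IsTest v → (∀ x, f x ^ 2 ≤ v x) →
    (∀ x, |g x| ≤ v x) → |∫ x, g x * O f x| ≤ C * ∫ x, v x * √(v x)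

/-- A bound for all the operators entering the construction of the test field. -/
def opConst (ι : Type*) [Fintype ι] : ℝ := 5 + 2 * meanDisp ι

theorem opConst_pos : 0 < opConst ι :=
  add_pos_of_pos_of_nonneg (by norm_num) (mul_nonneg zero_le_two meanDisp_nonneg)

section Admissible

variable {ρ : ℝ} {f g v : EuclideanSpace ℝ ι → ℝ}

theorem integral_mul_sqrt_nonneg (hv : ∀ x, 0 ≤ v x) : 0 ≤ ∫ x, v x * √(v x) :=
  integral_nonneg fun x => mul_nonneg (hv x) (sqrt_nonneg _)

theorem integral_sq_nonneg (f : EuclideanSpace ℝ ι → ℝ) : 0 ≤ ∫ x, f x ^ 2 :=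
  integral_nonneg fun _ => sq_nonneg _

theorem isAdmissible_of_avg {Ω : Type*} [MeasurableSpace Ω] {μ : Measure Ω} [SFinite μ]
    {m : Ω → ℝ} {τ : Ω → EuclideanSpace ℝ ι} {C c : ℝ}
    {O : (EuclideanSpace ℝ ι → ℝ) → EuclideanSpace ℝ ι → ℝ} (hm : Integrable m μ)
    (hτ : Measurable τ) (hO : ∀ {f}, IsTest f → O f = fun x => c * avg μ m τ f x) (hc : 0 ≤ c)
    (hC : c * (2 * ∫ ω, |m ω| ∂μ) ≤ C) : IsAdmissible C O := by
  have mass_nonneg : 0 ≤ c * ∫ ω, |m ω| ∂μ := mul_nonneg hc (integral_nonneg fun _ => abs_nonneg _)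
  have form_le : ∀ {f g A}, IsTest f → IsTest g → (∀ y, |∫ x, g x * f (x + y)| ≤ A) →
      |∫ x, g x * O f x| ≤ c * (A * ∫ ω, |m ω| ∂μ) := fun {f g A} hf hg hA => by
    simp only [hO hf, mul_left_comm _ c, integral_const_mul, abs_mul, abs_of_nonneg hc]
    exact mul_le_mul_of_nonneg_left (abs_integral_mul_avg_le hm hτ hf hg hA) hc
  refine ⟨fun hf => ?_, fun {f g} hf hg => ?_, fun {f g v} hf hg hv hfv hgv => ?_⟩
  · rw [hO hf]
    exact contDiff_const.mul (contDiff_avg hm hτ hf)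
  · refine (form_le hf hg (abs_integral_mul_translate_le_sq hf hg)).trans ?_
    have := add_nonneg (integral_sq_nonneg f) (integral_sq_nonneg g)
    nlinarith
  · have hv0 : ∀ x, 0 ≤ v x := fun x => (sq_nonneg _).trans (hfv x)
    refine (form_le hf hg (abs_integral_mul_translate_le_sqrt hv hv0 hfv hgv)).trans ?_
    have := integral_mul_sqrt_nonneg hv0
    nlinarith

theorem isAdmissible_heatFlow (ρ : ℝ) : IsAdmissible (ι := ι) (opConst ι) (heatFlow ρ) := by
  refine isAdmissible_of_avg (μ := gaussianPair ι) (m := fun _ => 1)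
    (τ := fun z => ρ • (z.1 - z.2)) (c := 1) (integrable_const _) (by fun_prop)
    (fun _ => by simp only [one_mul]; rfl) zero_le_one ?_
  have := meanDisp_nonneg (ι := ι)
  simp only [abs_one, integral_const, probReal_univ, smul_eq_mul, opConst]
  linarith

theorem isAdmissible_partialDeriv_heatFlow (ρ : ℝ) (i : ι) :
    IsAdmissible (opConst ι) fun f x => ρ * ∂[i] (heatFlow ρ f) x := by
  refine isAdmissible_of_avg (c := 1 / 2) (isStein_sub_stdGaussian.integrable_coord i)
    (τ := fun z => ρ • (z.1 - z.2)) (by fun_prop) (fun hf => ?_) (by norm_num) ?_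
  · ext x
    rw [← partialDeriv_heatFlow_eq_avg hf]
    ring
  · rw [opConst]
    linarith [meanDisp_nonneg (ι := ι), integral_abs_coord_le_meanDisp i]

theorem isAdmissible_partialDeriv_newt (hρ : 0 < ρ) (i : ι) :
    IsAdmissible (opConst ι) fun f x => ρ⁻¹ * ∂[i] (newt ρ f) x := by
  refine isAdmissible_of_avg (c := ρ⁻¹) (integrable_newt_coord_weight ρ i)
    measurable_newt_displacement (fun hf => ?_) (by positivity) ?_
  · rw [partialDeriv_newt_eq_avg hf]
  · have := integral_abs_newt_coord_weight_le hρ.le i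
    calc _ ≤ ρ⁻¹ * (2 * (ρ * meanDisp ι)) := by gcongr
      _ = 2 * meanDisp ι := by field_simp
      _ ≤ opConst ι := le_add_of_nonneg_left (by norm_num)

theorem isAdmissible_partialDeriv_partialDeriv_newt (hρ : 0 ≤ ρ) (i j : ι) :
    IsAdmissible (opConst ι) fun f => ∂[i] (∂[j] (newt ρ f)) := by
  have five_le : 5 ≤ opConst ι :=
    le_add_of_nonneg_right (mul_nonneg zero_le_two meanDisp_nonneg)
  refine ⟨fun hf => contDiff_partialDeriv (contDiff_partialDeriv (contDiff_newt hf) j) i,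
    fun {f g} hf hg => ?_, fun {f g v} hf hg hv hfv hgv => ?_⟩
  · refine (abs_integral_mul_partialDeriv_partialDeriv_newt_le_sq hf hg hρ i j).trans ?_
    exact le_mul_of_one_le_left (add_nonneg (integral_sq_nonneg f) (integral_sq_nonneg g))
      (by linarith)
  · refine
      (abs_integral_mul_partialDeriv_partialDeriv_newt_le_sqrt hf hg hv hfv hgv hρ i j).trans ?_
    exact mul_le_mul_of_nonneg_right five_le
      (integral_mul_sqrt_nonneg fun x => (sq_nonneg _).trans (hfv x))

variable {C : ℝ} {O : (EuclideanSpace ℝ ι → ℝ) → EuclideanSpace ℝ ι → ℝ}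

theorem IsAdmissible.weighted_sq_le (hO : IsAdmissible C O) (hf : IsTest f) (hg : IsTest g)
    {s : ℝ} (hs : 0 < s) :
    |∫ x, g x * O f x| ≤ C * (s * (∫ x, g x ^ 2) + s⁻¹ * ∫ x, f x ^ 2) := by
  have scaled := hO.sq_le hf (hg.const_mul s)
  simp only [mul_assoc, mul_pow, integral_const_mul, abs_mul, abs_of_pos hs] at scaled
  calc |∫ x, g x * O f x| = s⁻¹ * (s * |∫ x, g x * O f x|) := by field_simp
    _ ≤ s⁻¹ * (C * ((∫ x, f x ^ 2) + s ^ 2 * ∫ x, g x ^ 2)) := by gcongr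
    _ = C * (s * (∫ x, g x ^ 2) + s⁻¹ * ∫ x, f x ^ 2) := by field_simp; ring

theorem IsAdmissible.scaled_sqrt_le (hO : IsAdmissible C O) (hC : 0 ≤ C) (hf : IsTest f)
    (hg : IsTest g) (hv : IsTest v) {K : ℝ} (hK : 1 ≤ K) (hfv : ∀ x, f x ^ 2 ≤ K * v x)
    (hgv : ∀ x, |g x| ≤ K * v x) :
    |∫ x, g x * O f x| ≤ C * K ^ 2 * ∫ x, v x * √(v x) := by
  have K_pos : 0 < K := by linarith
  have v_nonneg : ∀ x, 0 ≤ v x := fun x =>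
    nonneg_of_mul_nonneg_right ((sq_nonneg _).trans (hfv x)) K_pos
  have sqrt_le : √K ≤ K := (Real.sqrt_le_left K_pos.le).2 (le_self_pow₀ hK two_ne_zero)
  have pull_out : ∫ x, K * v x * √(K * v x) = K * √K * ∫ x, v x * √(v x) := by
    rw [← integral_const_mul]
    congr 1 with x
    rw [Real.sqrt_mul K_pos.le]
    ring
  have majorant_nonneg := integral_mul_sqrt_nonneg v_nonneg
  calc |∫ x, g x * O f x| ≤ C * (K * √K * ∫ x, v x * √(v x)) :=
        (hO.sqrt_le hf hg (hv.const_mul K) hfv hgv).trans_eq (by rw [pull_out])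
    _ ≤ C * (K * K * ∫ x, v x * √(v x)) := by gcongr
    _ = C * K ^ 2 * ∫ x, v x * √(v x) := by ring

end Admissible

/-- Test functions which pair well with smooth functions `g` localised by powers of the cutoff `η`,
where `v` is a majorant of the localised squares of the unknowns. -/
structure IsGood (η v : EuclideanSpace ℝ ι → ℝ) (C : ℝ) (h : EuclideanSpace ℝ ι → ℝ) : Prop where
  test : IsTest h
  sq_le : ∀ {g}, ContDiff ℝ (⊤ : ℕ∞) g → ∀ {s : ℝ}, 0 < s →
    |∫ x, g x * h x| ≤ C * (s * (∫ x, (η x ^ 4 * g x) ^ 2) + s⁻¹ * ∫ x, v x)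
  sqrt_le : ∀ {g}, ContDiff ℝ (⊤ : ℕ∞) g → (∀ x, η x ^ 2 * |g x| ≤ v x) →
    |∫ x, g x * h x| ≤ C * ∫ x, v x * √(v x)

namespace IsGood

variable {η v h h' : EuclideanSpace ℝ ι → ℝ} {C C' : ℝ}

theorem add (hh : IsGood η v C h) (hh' : IsGood η v C' h') :
    IsGood η v (C + C') fun x => h x + h' x := by
  have abs_integral_le : ∀ {g}, ContDiff ℝ (⊤ : ℕ∞) g →
      |∫ x, g x * (h x + h' x)| ≤ |∫ x, g x * h x| + |∫ x, g x * h' x| := fun hg => by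
    simp only [mul_add]
    rw [integral_add (hh.test.mul_left hg).integrable (hh'.test.mul_left hg).integrable]
    exact abs_add_le _ _
  refine ⟨hh.test.add hh'.test, fun hg s hs => (abs_integral_le hg).trans ?_,
    fun hg hgv => (abs_integral_le hg).trans ?_⟩
  · linarith [hh.sq_le hg hs, hh'.sq_le hg hs]
  · linarith [hh.sqrt_le hg hgv, hh'.sqrt_le hg hgv]

theorem neg (hh : IsGood η v C h) : IsGood η v C fun x => -h x where
  test := by simpa using hh.test.const_mul (-1)
  sq_le hg s hs := by simpa only [mul_neg, integral_neg, abs_neg] using hh.sq_le hg hs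
  sqrt_le hg hgv := by simpa only [mul_neg, integral_neg, abs_neg] using hh.sqrt_le hg hgv

theorem sub (hh : IsGood η v C h) (hh' : IsGood η v C' h') :
    IsGood η v (C + C') fun x => h x - h' x := by
  simpa only [sub_eq_add_neg] using hh.add hh'.neg

theorem sum {κ : Type*} (s : Finset κ) {h : κ → EuclideanSpace ℝ ι → ℝ}
    (hh : ∀ k, IsGood η v C (h k)) : IsGood η v (s.card * C) fun x => ∑ k ∈ s, h k x := by
  classical
  induction s using Finset.induction_on with
  | empty => exact ⟨by simpa using IsTest.zero, by simp, by simp⟩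
  | insert a s ha ih =>
    simp only [Finset.sum_insert ha]
    rw [Finset.card_insert_of_notMem ha]
    have := (hh a).add ih
    rwa [show C + s.card * C = ((s.card + 1 : ℕ) : ℝ) * C by push_cast; ring] at this

theorem of_admissible {K : ℝ} {O : (EuclideanSpace ℝ ι → ℝ) → EuclideanSpace ℝ ι → ℝ}
    {c f : EuclideanSpace ℝ ι → ℝ} (hC : 0 ≤ C) (hO : IsAdmissible C O) (hη : IsTest η)
    (hη0 : ∀ x, 0 ≤ η x) (hη1 : ∀ x, η x ≤ 1) (hv : IsTest v) (hK : 1 ≤ K) (hc : IsTest c)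
    (hcK : ∀ x, |c x| ≤ K * η x ^ 4) (hf : IsTest f) (hfv : ∀ x, f x ^ 2 ≤ K * v x) :
    IsGood η v (C * K ^ 2) fun x => c x * O f x := by
  have : 0 ≤ K := by linarith
  have v_nonneg : ∀ x, 0 ≤ v x := fun x =>
    nonneg_of_mul_nonneg_right ((sq_nonneg _).trans (hfv x)) (by linarith)
  refine ⟨hc.mul_right (hO.smooth hf), fun {g} hg s hs => ?_, fun {g} hg hgv => ?_⟩
  · have cg_le : ∫ x, (c x * g x) ^ 2 ≤ K ^ 2 * ∫ x, (η x ^ 4 * g x) ^ 2 := by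
      rw [← integral_const_mul]
      refine integral_mono ((hc.mul_right hg).pow two_ne_zero).integrable
        ((((hη.pow four_ne_zero).mul_right hg).pow two_ne_zero).integrable.const_mul _) fun x => ?_
      calc (c x * g x) ^ 2 = |c x| ^ 2 * g x ^ 2 := by rw [mul_pow, sq_abs]
        _ ≤ (K * η x ^ 4) ^ 2 * g x ^ 2 := by gcongr; exact hcK x
        _ = K ^ 2 * (η x ^ 4 * g x) ^ 2 := by ring
    have f_le : ∫ x, f x ^ 2 ≤ K ^ 2 * ∫ x, v x := by
      rw [← integral_const_mul]
      exact integral_mono (hf.pow two_ne_zero).integrable (hv.integrable.const_mul _) fun x =>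
        (hfv x).trans (mul_le_mul_of_nonneg_right (le_self_pow₀ hK two_ne_zero) (v_nonneg x))
    simp only [mul_left_comm (g _), ← mul_assoc]
    calc |∫ x, c x * g x * O f x|
        ≤ C * (s * (∫ x, (c x * g x) ^ 2) + s⁻¹ * ∫ x, f x ^ 2) :=
          hO.weighted_sq_le hf (hc.mul_right hg) hs
      _ ≤ C * (s * (K ^ 2 * ∫ x, (η x ^ 4 * g x) ^ 2) + s⁻¹ * (K ^ 2 * ∫ x, v x)) := by gcongr
      _ = C * K ^ 2 * (s * (∫ x, (η x ^ 4 * g x) ^ 2) + s⁻¹ * ∫ x, v x) := by ring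
  · simp only [mul_left_comm (g _), ← mul_assoc]
    refine hO.scaled_sqrt_le hC hf (hc.mul_right hg) hv hK hfv fun x => ?_
    have cutoff_le : η x ^ 4 ≤ η x ^ 2 := pow_le_pow_of_le_one (hη0 x) (hη1 x) (by norm_num)
    calc |c x * g x| = |c x| * |g x| := abs_mul _ _
      _ ≤ K * η x ^ 2 * |g x| := by gcongr; exact (hcK x).trans (by gcongr)
      _ = K * (η x ^ 2 * |g x|) := mul_assoc _ _ _
      _ ≤ K * v x := by gcongr; exact hgv x

theorem unscaled_sq_le {ρ s : ℝ} {g : EuclideanSpace ℝ ι → ℝ} (hρ : 0 < ρ)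
    (hh : IsGood η v C fun x => ρ * h x) (hg : ContDiff ℝ (⊤ : ℕ∞) g) (hs : 0 < s) :
    |∫ x, g x * h x| ≤
      C * (s * (∫ x, (η x ^ 4 * g x) ^ 2) + s⁻¹ * (ρ⁻¹ ^ 2 * ∫ x, v x)) := by
  have scaled := hh.sq_le hg (mul_pos hρ hs)
  simp only [mul_left_comm (g _), integral_const_mul, abs_mul, abs_of_pos hρ] at scaled
  rw [mul_comm, ← le_div_iff₀ hρ] at scaled
  refine scaled.trans_eq ?_
  field_simp

theorem unscaled_sqrt_le {ρ : ℝ} {g : EuclideanSpace ℝ ι → ℝ} (hρ : 0 < ρ)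
    (hh : IsGood η v C fun x => ρ * h x) (hg : ContDiff ℝ (⊤ : ℕ∞) g)
    (hgv : ∀ x, η x ^ 2 * |g x| ≤ v x) :
    |∫ x, g x * h x| ≤ C * (ρ⁻¹ * ∫ x, v x * √(v x)) := by
  have scaled := hh.sqrt_le hg hgv
  simp only [mul_left_comm (g _), integral_const_mul, abs_mul, abs_of_pos hρ] at scaled
  rw [mul_comm, ← le_div_iff₀ hρ] at scaled
  exact scaled.trans_eq (by field_simp)

end IsGood

/-- Cutoff functions of the ball of radius `ρ` inside the ball of radius `2 * ρ`, with first and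
second derivatives of the natural size. -/
structure IsCutoff (K ρ : ℝ) (η : EuclideanSpace ℝ ι → ℝ) : Prop where
  test : IsTest η
  nonneg : ∀ x, 0 ≤ η x
  le_one : ∀ x, η x ≤ 1
  eq_one : ∀ x ∈ ball 0 ρ, η x = 1
  eq_zero : ∀ x ∉ ball 0 (2 * ρ), η x = 0
  abs_partialDeriv_le : ∀ i x, ρ * |∂[i] η x| ≤ K
  abs_partialDeriv_partialDeriv_le : ∀ i j x, ρ ^ 2 * |∂[i] (∂[j] η) x| ≤ K

section Cutoff

variable {K ρ : ℝ} {η : EuclideanSpace ℝ ι → ℝ}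

theorem IsCutoff.pow_le_pow (hη : IsCutoff K ρ η) {m n : ℕ} (hmn : m ≤ n)
    (x : EuclideanSpace ℝ ι) : η x ^ n ≤ η x ^ m :=
  pow_le_pow_of_le_one (hη.nonneg x) (hη.le_one x) hmn

theorem IsCutoff.abs_partialDeriv_pow_six_le (hη : IsCutoff K ρ η) (hρ : 0 < ρ) (i : ι)
    (x : EuclideanSpace ℝ ι) : |ρ * ∂[i] (fun y => η y ^ 6) x| ≤ 6 * K * η x ^ 4 := by
  have η_nonneg := hη.nonneg x
  have : 0 ≤ K := le_trans (by positivity) (hη.abs_partialDeriv_le i x)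
  have pow_five_le : η x ^ 5 ≤ η x ^ 4 := hη.pow_le_pow (by norm_num) x
  calc |ρ * ∂[i] (fun y => η y ^ 6) x| = 6 * (η x ^ 5 * (ρ * |∂[i] η x|)) := by
        rw [partialDeriv_pow hη.test.differentiable, abs_mul, abs_mul, abs_of_pos hρ,
          abs_of_nonneg (by positivity)]
        push_cast
        ring
    _ ≤ 6 * (η x ^ 4 * K) := by
        gcongr
        exact hη.abs_partialDeriv_le i x
    _ = 6 * K * η x ^ 4 := by ring

theorem partialDeriv_partialDeriv_pow_six (hη : IsTest η) (i j : ι) (x : EuclideanSpace ℝ ι) :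
    ∂[i] (∂[j] fun y => η y ^ 6) x =
      30 * η x ^ 4 * (∂[i] η x * ∂[j] η x) + 6 * η x ^ 5 * ∂[i] (∂[j] η) x := by
  rw [funext (partialDeriv_pow hη.differentiable 6 j),
    partialDeriv_mul ((hη.pow (by norm_num : 6 - 1 ≠ 0)).const_mul _).differentiable
      (hη.partialDeriv j).differentiable,
    partialDeriv_const_mul (hη.pow (by norm_num)).differentiable,
    partialDeriv_pow hη.differentiable]
  push_cast
  ring

theorem IsCutoff.abs_partialDeriv_partialDeriv_pow_six_le (hη : IsCutoff K ρ η) (hρ : 0 < ρ)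
    (i j : ι) (x : EuclideanSpace ℝ ι) :
    |ρ ^ 2 * ∂[i] (∂[j] fun y => η y ^ 6) x| ≤ (30 * K ^ 2 + 6 * K) * η x ^ 4 := by
  have η_nonneg := hη.nonneg x
  have K_nonneg : 0 ≤ K := le_trans (by positivity) (hη.abs_partialDeriv_le i x)
  have pow_five_le : η x ^ 5 ≤ η x ^ 4 := hη.pow_le_pow (by norm_num) x
  have expand : ρ ^ 2 * ∂[i] (∂[j] fun y => η y ^ 6) x =
      30 * η x ^ 4 * ((ρ * ∂[i] η x) * (ρ * ∂[j] η x))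
        + 6 * η x ^ 5 * (ρ ^ 2 * ∂[i] (∂[j] η) x) := by
    rw [partialDeriv_partialDeriv_pow_six hη.test]
    ring
  calc |ρ ^ 2 * ∂[i] (∂[j] fun y => η y ^ 6) x|
      ≤ 30 * η x ^ 4 * ((ρ * |∂[i] η x|) * (ρ * |∂[j] η x|)) +
          6 * η x ^ 5 * (ρ ^ 2 * |∂[i] (∂[j] η) x|) := by
        rw [expand]
        refine (abs_add_le _ _).trans_eq ?_
        simp only [abs_mul, abs_pow, abs_of_pos hρ, abs_of_nonneg η_nonneg, Nat.abs_ofNat]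
    _ ≤ 30 * η x ^ 4 * (K * K) + 6 * η x ^ 4 * K := by
        gcongr
        exacts [hη.abs_partialDeriv_le i x, hη.abs_partialDeriv_le j x,
          hη.abs_partialDeriv_partialDeriv_le i j x]
    _ = (30 * K ^ 2 + 6 * K) * η x ^ 4 := by ring

end Cutoff

section SolenoidalField

variable (ρ : ℝ) (η : EuclideanSpace ℝ ι → ℝ) (U : ι → EuclideanSpace ℝ ι → ℝ)

/-- The components of the vector field `η ^ 2 * U`. -/
def locField (j : ι) (y : EuclideanSpace ℝ ι) : ℝ := η y ^ 2 * U j y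

/-- The divergence of `η ^ 2 * U` for solenoidal `U`, made dimensionless by the factor `ρ`. -/
def locDiv (y : EuclideanSpace ℝ ι) : ℝ := ρ * ∑ k, ∂[k] (fun z => η z ^ 2) y * U k y

/-- The curl of the truncated Newtonian potential of `η ^ 2 * U`, as an antisymmetric matrix. -/
def skewPot (i j : ι) (x : EuclideanSpace ℝ ι) : ℝ :=
  ∂[j] (newt ρ (locField η U i)) x - ∂[i] (newt ρ (locField η U j)) x

/-- The compactly supported solenoidal test field: the localisation by `η ^ 6` is performed on the
potential, before taking the last derivative. -/
def solField (j : ι) (x : EuclideanSpace ℝ ι) : ℝ :=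
  ∑ i, ∂[i] (fun y => η y ^ 6 * skewPot ρ η U i j y) x

/-- The difference between the test field `solField` and `η ^ 8 * U`. -/
def corrField (j : ι) (x : EuclideanSpace ℝ ι) : ℝ :=
  η x ^ 6 * (ρ⁻¹ * ∂[j] (newt ρ (locDiv ρ η U)) x - heatFlow ρ (locField η U j) x) +
    ∑ k, ∂[k] (fun y => η y ^ 6) x * skewPot ρ η U k j x

variable {ρ η U}

theorem isTest_locField (hη : IsTest η) (hU : ∀ j, ContDiff ℝ (⊤ : ℕ∞) (U j)) (j : ι) :
    IsTest (locField η U j) :=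
  (hη.pow two_ne_zero).mul_right (hU j)

theorem isTest_locDiv (hη : IsTest η) (hU : ∀ j, ContDiff ℝ (⊤ : ℕ∞) (U j)) :
    IsTest (locDiv ρ η U) :=
  (IsTest.sum _ fun k => ((hη.pow two_ne_zero).partialDeriv k).mul_right (hU k)).const_mul ρ

theorem contDiff_skewPot (hη : IsTest η) (hU : ∀ j, ContDiff ℝ (⊤ : ℕ∞) (U j)) (i j : ι) :
    ContDiff ℝ (⊤ : ℕ∞) (skewPot ρ η U i j) :=
  (contDiff_partialDeriv (contDiff_newt (isTest_locField hη hU i)) j).sub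
    (contDiff_partialDeriv (contDiff_newt (isTest_locField hη hU j)) i)

theorem isTest_pow_six_mul_skewPot (hη : IsTest η) (hU : ∀ j, ContDiff ℝ (⊤ : ℕ∞) (U j))
    (i j : ι) : IsTest fun y => η y ^ 6 * skewPot ρ η U i j y :=
  (hη.pow (by norm_num)).mul_right (contDiff_skewPot hη hU i j)

theorem isTest_solField (hη : IsTest η) (hU : ∀ j, ContDiff ℝ (⊤ : ℕ∞) (U j)) (j : ι) :
    IsTest (solField ρ η U j) :=
  IsTest.sum _ fun i => (isTest_pow_six_mul_skewPot hη hU i j).partialDeriv i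

theorem isTest_corrField (hη : IsTest η) (hU : ∀ j, ContDiff ℝ (⊤ : ℕ∞) (U j)) (j : ι) :
    IsTest (corrField ρ η U j) := by
  have grad_smooth :=
    contDiff_partialDeriv (contDiff_newt (ρ := ρ) (isTest_locDiv (ρ := ρ) hη hU)) j
  have heat_smooth := (isAdmissible_heatFlow ρ).smooth (isTest_locField hη hU j)
  exact ((hη.pow (by norm_num)).mul_right ((contDiff_const.mul grad_smooth).sub heat_smooth)).add
    (IsTest.sum _ fun k => ((hη.pow (by norm_num)).partialDeriv k).mul_right
      (contDiff_skewPot hη hU k j))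

theorem sum_partialDeriv_sum_partialDeriv_of_skew {A : ι → ι → EuclideanSpace ℝ ι → ℝ}
    (hA : ∀ i j, ContDiff ℝ (⊤ : ℕ∞) (A i j)) (skew : ∀ i j x, A i j x = -A j i x)
    (x : EuclideanSpace ℝ ι) : ∑ j, ∂[j] (fun y => ∑ i, ∂[i] (A i j) y) x = 0 := by
  have expand : ∀ j, ∂[j] (fun y => ∑ i, ∂[i] (A i j) y) x = ∑ i, ∂[j] (∂[i] (A i j)) x :=
    fun j => partialDeriv_sum _
      (fun i => (contDiff_partialDeriv (hA i j) i).differentiable (by simp)) j x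
  have swap : ∀ i j, ∂[j] (∂[i] (A i j)) x = -∂[i] (∂[j] (A j i)) x := fun i j => by
    have neg_eq : ∂[j] (A i j) = fun y => -∂[j] (A j i) y := funext fun y => by
      rw [funext (skew i j), partialDeriv_neg]
    rw [partialDeriv_comm (hA i j), neg_eq, partialDeriv_neg]
  simp only [expand]
  rw [← self_eq_neg]
  conv_lhs => rw [Finset.sum_comm]
  simp only [← Finset.sum_neg_distrib, ← swap]

theorem sum_partialDeriv_solField (hη : IsTest η) (hU : ∀ j, ContDiff ℝ (⊤ : ℕ∞) (U j))
    (x : EuclideanSpace ℝ ι) : ∑ j, ∂[j] (solField ρ η U j) x = 0 :=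
  sum_partialDeriv_sum_partialDeriv_of_skew
    (fun i j => (isTest_pow_six_mul_skewPot hη hU i j).smooth)
    (fun i j x => by simp only [skewPot]; ring) x

theorem sum_partialDeriv_locField (hη : IsTest η) (hU : ∀ j, ContDiff ℝ (⊤ : ℕ∞) (U j))
    (hdiv : ∀ x, ∑ i, ∂[i] (U i) x = 0) (hρ : ρ ≠ 0) (x : EuclideanSpace ℝ ι) :
    ∑ i, ∂[i] (locField η U i) x = ρ⁻¹ * locDiv ρ η U x := by
  have product_rule : ∀ i, ∂[i] (locField η U i) x =
      ∂[i] (fun z => η z ^ 2) x * U i x + η x ^ 2 * ∂[i] (U i) x := fun i =>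
    partialDeriv_mul (hη.pow two_ne_zero).differentiable ((hU i).differentiable (by simp)) i x
  simp only [product_rule, Finset.sum_add_distrib, ← Finset.mul_sum, hdiv, locDiv]
  field_simp
  ring

theorem sum_partialDeriv_partialDeriv_newt_locField (hη : IsTest η)
    (hU : ∀ j, ContDiff ℝ (⊤ : ℕ∞) (U j)) (hdiv : ∀ x, ∑ i, ∂[i] (U i) x = 0) (hρ : ρ ≠ 0)
    (j : ι) (x : EuclideanSpace ℝ ι) :
    ∑ i, ∂[j] (∂[i] (newt ρ (locField η U i))) x = ρ⁻¹ * ∂[j] (newt ρ (locDiv ρ η U)) x := by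
  have hl := isTest_locField hη hU
  have div_newt : (fun y => ∑ i, ∂[i] (newt ρ (locField η U i)) y) =
      fun y => ρ⁻¹ * newt ρ (locDiv ρ η U) y := by
    ext y
    simp only [partialDeriv_newt (hl _)]
    rw [← newt_const_mul, ← newt_sum _ fun i => (hl i).partialDeriv i]
    exact congrArg (newt ρ · y) (funext (sum_partialDeriv_locField hη hU hdiv hρ))
  rw [← partialDeriv_sum _ fun i =>
      (contDiff_partialDeriv (contDiff_newt (hl i)) i).differentiable (by simp), div_newt,
    partialDeriv_const_mul ((contDiff_newt (isTest_locDiv hη hU)).differentiable (by simp))]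

theorem partialDeriv_skewPot (hη : IsTest η) (hU : ∀ j, ContDiff ℝ (⊤ : ℕ∞) (U j)) (i k j : ι)
    (x : EuclideanSpace ℝ ι) : ∂[i] (skewPot ρ η U k j) x =
      ∂[i] (∂[j] (newt ρ (locField η U k))) x - ∂[i] (∂[k] (newt ρ (locField η U j))) x :=
  partialDeriv_sub
    ((contDiff_partialDeriv (contDiff_newt (isTest_locField hη hU k)) j).differentiable (by simp))
    ((contDiff_partialDeriv (contDiff_newt (isTest_locField hη hU j)) k).differentiable (by simp))
    i x

theorem solField_eq (hρ : 0 < ρ) (hη : IsTest η) (hU : ∀ j, ContDiff ℝ (⊤ : ℕ∞) (U j))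
    (hdiv : ∀ x, ∑ i, ∂[i] (U i) x = 0) (j : ι) (x : EuclideanSpace ℝ ι) :
    solField ρ η U j x = η x ^ 8 * U j x + corrField ρ η U j x := by
  have product_rule : ∀ i, ∂[i] (fun y => η y ^ 6 * skewPot ρ η U i j y) x =
      ∂[i] (fun y => η y ^ 6) x * skewPot ρ η U i j x + η x ^ 6 *
        (∂[j] (∂[i] (newt ρ (locField η U i))) x - ∂[i] (∂[i] (newt ρ (locField η U j))) x) :=
    fun i => by
      rw [partialDeriv_mul (hη.pow (by norm_num)).differentiable
        ((contDiff_skewPot hη hU i j).differentiable (by simp)), partialDeriv_skewPot hη hU,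
        partialDeriv_comm (contDiff_newt (isTest_locField hη hU i)) i j]
  have laplacian : ∑ i, ∂[i] (∂[i] (newt ρ (locField η U j))) x =
      heatFlow ρ (locField η U j) x - η x ^ 2 * U j x :=
    coordLaplacian_newt hρ.le (isTest_locField hη hU j) x
  simp only [solField, corrField, product_rule, Finset.sum_add_distrib, ← Finset.mul_sum,
    Finset.sum_sub_distrib]
  rw [sum_partialDeriv_partialDeriv_newt_locField hη hU hdiv hρ.ne', laplacian]
  ring

/-- The powers of `ρ` are distributed so that each term is a coefficient of size `η ^ 4` times an
operator of size one. -/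
theorem mul_partialDeriv_corrField (hρ : ρ ≠ 0) (hη : IsTest η)
    (hU : ∀ j, ContDiff ℝ (⊤ : ℕ∞) (U j)) (i j : ι) (x : EuclideanSpace ℝ ι) :
    ρ * ∂[i] (corrField ρ η U j) x =
      (ρ * ∂[i] (fun y => η y ^ 6) x) * (ρ⁻¹ * ∂[j] (newt ρ (locDiv ρ η U)) x)
      + η x ^ 6 * ∂[i] (∂[j] (newt ρ (locDiv ρ η U))) x
      - (ρ * ∂[i] (fun y => η y ^ 6) x) * heatFlow ρ (locField η U j) x
      - η x ^ 6 * (ρ * ∂[i] (heatFlow ρ (locField η U j)) x)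
      + ∑ k, ((ρ ^ 2 * ∂[i] (∂[k] (fun y => η y ^ 6)) x)
          * (ρ⁻¹ * ∂[j] (newt ρ (locField η U k)) x)
        - (ρ ^ 2 * ∂[i] (∂[k] (fun y => η y ^ 6)) x) * (ρ⁻¹ * ∂[k] (newt ρ (locField η U j)) x)
        + (ρ * ∂[k] (fun y => η y ^ 6) x) * ∂[i] (∂[j] (newt ρ (locField η U k))) x
        - (ρ * ∂[k] (fun y => η y ^ 6) x) * ∂[i] (∂[k] (newt ρ (locField η U j))) x) := by
  have cutoff_test : IsTest fun y => η y ^ 6 := hη.pow (by norm_num)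
  have grad_smooth :=
    contDiff_partialDeriv (contDiff_newt (ρ := ρ) (isTest_locDiv (ρ := ρ) hη hU)) j
  have heat_smooth := (isAdmissible_heatFlow ρ).smooth (isTest_locField hη hU j)
  have local_smooth := (contDiff_const (c := ρ⁻¹)).mul grad_smooth |>.sub heat_smooth
  have commutator := fun k =>
    (cutoff_test.partialDeriv k).mul_right (contDiff_skewPot (ρ := ρ) hη hU k j)
  delta corrField
  rw [partialDeriv_add (cutoff_test.mul_right local_smooth).differentiable
      (IsTest.sum _ commutator).differentiable,
    partialDeriv_mul cutoff_test.differentiable (local_smooth.differentiable (by simp)),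
    partialDeriv_sub ((contDiff_const.mul grad_smooth).differentiable (by simp))
      (heat_smooth.differentiable (by simp)),
    partialDeriv_const_mul (grad_smooth.differentiable (by simp)),
    partialDeriv_sum _ fun k => (commutator k).differentiable, mul_add, Finset.mul_sum]
  congr 1
  · field_simp
    ring
  · refine Finset.sum_congr rfl fun k _ => ?_
    rw [partialDeriv_mul (cutoff_test.partialDeriv k).differentiable
      ((contDiff_skewPot hη hU k j).differentiable (by simp)), partialDeriv_skewPot hη hU]
    simp only [skewPot]
    field_simp
    ring

end SolenoidalField

section CorrectionEstimates

variable {K ρ : ℝ} {η v : EuclideanSpace ℝ ι → ℝ} {U : ι → EuclideanSpace ℝ ι → ℝ}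

theorem IsCutoff.locField_sq_le (hη : IsCutoff K ρ η)
    (hUv : ∀ x, η x ^ 2 * ∑ k, U k x ^ 2 ≤ v x) (k : ι) (x : EuclideanSpace ℝ ι) :
    locField η U k x ^ 2 ≤ v x := by
  have component_le : U k x ^ 2 ≤ ∑ l, U l x ^ 2 :=
    Finset.single_le_sum (f := fun l => U l x ^ 2) (fun _ _ => sq_nonneg _) (Finset.mem_univ k)
  have cutoff_le : η x ^ 4 ≤ η x ^ 2 := hη.pow_le_pow (by norm_num) x
  calc locField η U k x ^ 2 = η x ^ 4 * U k x ^ 2 := by rw [locField]; ring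
    _ ≤ η x ^ 2 * ∑ l, U l x ^ 2 := by gcongr
    _ ≤ v x := hUv x

theorem IsCutoff.sum_sq_partialDeriv_le (hη : IsCutoff K ρ η) (hρ : 0 < ρ)
    (x : EuclideanSpace ℝ ι) : ∑ k, (ρ * ∂[k] η x) ^ 2 ≤ Fintype.card ι * K ^ 2 := by
  have term_le : ∀ k ∈ Finset.univ, (ρ * ∂[k] η x) ^ 2 ≤ K ^ 2 := fun k _ => by
    rw [← sq_abs, abs_mul, abs_of_pos hρ]
    have := hη.abs_partialDeriv_le k x
    gcongr
  simpa only [Finset.card_univ, nsmul_eq_mul] using Finset.sum_le_card_nsmul _ _ _ term_le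

theorem IsCutoff.locDiv_sq_le (hη : IsCutoff K ρ η) (hρ : 0 < ρ)
    (hUv : ∀ x, η x ^ 2 * ∑ k, U k x ^ 2 ≤ v x) (x : EuclideanSpace ℝ ι) :
    locDiv ρ η U x ^ 2 ≤ 4 * Fintype.card ι * K ^ 2 * v x := by
  have locDiv_eq : locDiv ρ η U x = 2 * η x * ∑ k, (ρ * ∂[k] η x) * U k x := by
    simp only [locDiv, partialDeriv_pow hη.test.differentiable, Finset.mul_sum]
    refine Finset.sum_congr rfl fun k _ => ?_
    push_cast
    ring
  have : 0 ≤ ∑ k, U k x ^ 2 := Finset.sum_nonneg fun _ _ => sq_nonneg _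
  calc locDiv ρ η U x ^ 2 = 4 * η x ^ 2 * (∑ k, (ρ * ∂[k] η x) * U k x) ^ 2 := by
        rw [locDiv_eq]
        ring
    _ ≤ 4 * η x ^ 2 * ((∑ k, (ρ * ∂[k] η x) ^ 2) * ∑ k, U k x ^ 2) := by
        gcongr
        exact Finset.sum_mul_sq_le_sq_mul_sq _ _ _
    _ ≤ 4 * η x ^ 2 * (Fintype.card ι * K ^ 2 * ∑ k, U k x ^ 2) := by
        gcongr
        exact hη.sum_sq_partialDeriv_le hρ x
    _ = 4 * Fintype.card ι * K ^ 2 * (η x ^ 2 * ∑ k, U k x ^ 2) := by ring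
    _ ≤ 4 * Fintype.card ι * K ^ 2 * v x := by
        gcongr
        exact hUv x

/-- A common bound for the coefficients and the densities entering the correction field. -/
def fieldConst (ι : Type*) [Fintype ι] (K : ℝ) : ℝ := (36 + 4 * Fintype.card ι) * K ^ 2

theorem pow_six_coeff_le_fieldConst (hK : 1 ≤ K) : 30 * K ^ 2 + 6 * K ≤ fieldConst ι K := by
  have : 0 ≤ 4 * (Fintype.card ι : ℝ) * K ^ 2 := by positivity
  rw [fieldConst]
  nlinarith

theorem one_le_fieldConst (hK : 1 ≤ K) : 1 ≤ fieldConst ι K :=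
  le_trans (by nlinarith) (pow_six_coeff_le_fieldConst hK)

/-- A bound for the rescaled first derivatives of the correction field. -/
def corrConst (ι : Type*) [Fintype ι] (K : ℝ) : ℝ :=
  4 * (1 + Fintype.card ι) * (opConst ι * fieldConst ι K ^ 2)

theorem corrConst_pos (hK : 1 ≤ K) : 0 < corrConst ι K :=
  mul_pos (by positivity)
    (mul_pos opConst_pos (pow_pos (zero_lt_one.trans_le (one_le_fieldConst hK)) 2))

theorem IsCutoff.abs_pow_six_le (hη : IsCutoff K ρ η) (hK : 1 ≤ K) (x : EuclideanSpace ℝ ι) :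
    |η x ^ 6| ≤ fieldConst ι K * η x ^ 4 := by
  rw [abs_of_nonneg (pow_nonneg (hη.nonneg x) 6)]
  exact (hη.pow_le_pow (by norm_num) x).trans
    (le_mul_of_one_le_left (pow_nonneg (hη.nonneg x) 4) (one_le_fieldConst hK))

theorem IsCutoff.abs_partialDeriv_pow_six_le_fieldConst (hη : IsCutoff K ρ η) (hρ : 0 < ρ)
    (hK : 1 ≤ K) (i : ι) (x : EuclideanSpace ℝ ι) :
    |ρ * ∂[i] (fun y => η y ^ 6) x| ≤ fieldConst ι K * η x ^ 4 :=
  (hη.abs_partialDeriv_pow_six_le hρ i x).trans <| mul_le_mul_of_nonneg_right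
    ((le_add_of_nonneg_left (by positivity)).trans (pow_six_coeff_le_fieldConst hK))
    (pow_nonneg (hη.nonneg x) 4)

theorem IsCutoff.abs_partialDeriv_partialDeriv_pow_six_le_fieldConst (hη : IsCutoff K ρ η)
    (hρ : 0 < ρ) (hK : 1 ≤ K) (i j : ι) (x : EuclideanSpace ℝ ι) :
    |ρ ^ 2 * ∂[i] (∂[j] fun y => η y ^ 6) x| ≤ fieldConst ι K * η x ^ 4 :=
  (hη.abs_partialDeriv_partialDeriv_pow_six_le hρ i j x).trans <|
    mul_le_mul_of_nonneg_right (pow_six_coeff_le_fieldConst hK) (pow_nonneg (hη.nonneg x) 4)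

theorem majorant_nonneg (hUv : ∀ x, η x ^ 2 * ∑ k, U k x ^ 2 ≤ v x) (x : EuclideanSpace ℝ ι) :
    0 ≤ v x :=
  le_trans (mul_nonneg (sq_nonneg _) (Finset.sum_nonneg fun _ _ => sq_nonneg _)) (hUv x)

theorem IsCutoff.locField_sq_le_fieldConst (hη : IsCutoff K ρ η) (hK : 1 ≤ K)
    (hUv : ∀ x, η x ^ 2 * ∑ k, U k x ^ 2 ≤ v x) (k : ι) (x : EuclideanSpace ℝ ι) :
    locField η U k x ^ 2 ≤ fieldConst ι K * v x :=
  (hη.locField_sq_le hUv k x).trans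
    (le_mul_of_one_le_left (majorant_nonneg hUv x) (one_le_fieldConst hK))

theorem IsCutoff.locDiv_sq_le_fieldConst (hη : IsCutoff K ρ η) (hρ : 0 < ρ)
    (hUv : ∀ x, η x ^ 2 * ∑ k, U k x ^ 2 ≤ v x) (x : EuclideanSpace ℝ ι) :
    locDiv ρ η U x ^ 2 ≤ fieldConst ι K * v x := by
  refine (hη.locDiv_sq_le hρ hUv x).trans (mul_le_mul_of_nonneg_right ?_ (majorant_nonneg hUv x))
  rw [fieldConst, add_mul]
  exact le_add_of_nonneg_left (by positivity)

theorem isGood_partialDeriv_corrField (hρ : 0 < ρ) (hK : 1 ≤ K) (hη : IsCutoff K ρ η)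
    (hU : ∀ j, ContDiff ℝ (⊤ : ℕ∞) (U j)) (hv : IsTest v)
    (hUv : ∀ x, η x ^ 2 * ∑ k, U k x ^ 2 ≤ v x) (i j : ι) :
    IsGood η v (corrConst ι K) fun x => ρ * ∂[i] (corrField ρ η U j) x := by
  have coeff_test : IsTest fun y => η y ^ 6 := hη.test.pow (by norm_num)
  have grad_coeff_test := fun k => (coeff_test.partialDeriv k).const_mul ρ
  have hess_coeff_test := fun k l => ((coeff_test.partialDeriv l).partialDeriv k).const_mul (ρ ^ 2)
  have good : ∀ {O : (EuclideanSpace ℝ ι → ℝ) → EuclideanSpace ℝ ι → ℝ}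
      {c f : EuclideanSpace ℝ ι → ℝ}, IsAdmissible (opConst ι) O → IsTest c →
      (∀ x, |c x| ≤ fieldConst ι K * η x ^ 4) → IsTest f →
      (∀ x, f x ^ 2 ≤ fieldConst ι K * v x) →
      IsGood η v (opConst ι * fieldConst ι K ^ 2) fun x => c x * O f x :=
    fun hO => IsGood.of_admissible opConst_pos.le hO hη.test hη.nonneg hη.le_one hv
      (one_le_fieldConst hK)
  have coeff_le := hη.abs_pow_six_le hK
  have grad_coeff_le := hη.abs_partialDeriv_pow_six_le_fieldConst hρ hK
  have hess_coeff_le := hη.abs_partialDeriv_partialDeriv_pow_six_le_fieldConst hρ hK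
  have field_test := isTest_locField hη.test hU
  have field_le := hη.locField_sq_le_fieldConst hK hUv
  have div_test : IsTest (locDiv ρ η U) := isTest_locDiv hη.test hU
  have div_le := hη.locDiv_sq_le_fieldConst hρ hUv
  have grad := isAdmissible_partialDeriv_newt (ι := ι) hρ
  have hess := isAdmissible_partialDeriv_partialDeriv_newt (ι := ι) hρ.le
  have heat := isAdmissible_heatFlow (ι := ι) ρ
  have grad_heat := isAdmissible_partialDeriv_heatFlow (ι := ι) ρ
  have all_terms := ((((good (grad j) (grad_coeff_test i) (grad_coeff_le i) div_test div_le).add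
    (good (hess i j) coeff_test coeff_le div_test div_le)).sub
    (good heat (grad_coeff_test i) (grad_coeff_le i) (field_test j) (field_le j))).sub
    (good (grad_heat i) coeff_test coeff_le (field_test j) (field_le j))).add
    (IsGood.sum Finset.univ fun k =>
      (((good (grad j) (hess_coeff_test i k) (hess_coeff_le i k) (field_test k) (field_le k)).sub
        (good (grad k) (hess_coeff_test i k) (hess_coeff_le i k) (field_test j) (field_le j))).add
        (good (hess i j) (grad_coeff_test k) (grad_coeff_le k) (field_test k) (field_le k))).sub
        (good (hess i k) (grad_coeff_test k) (grad_coeff_le k) (field_test j) (field_le j)))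
  rw [funext (mul_partialDeriv_corrField hρ.ne' hη.test hU i j)]
  convert all_terms using 1
  rw [corrConst, Finset.card_univ]
  ring

end CorrectionEstimates

/-- Test functions with vanishing integral: the identities between local energies hold modulo
these. -/
structure IsNull (h : EuclideanSpace ℝ ι → ℝ) : Prop where
  test : IsTest h
  integral_eq : ∫ x, h x = 0

namespace IsNull

variable {h h' : EuclideanSpace ℝ ι → ℝ}

theorem sub (hh : IsNull h) (hh' : IsNull h') : IsNull fun x => h x - h' x :=
  ⟨hh.test.sub hh'.test, by
    rw [integral_sub hh.test.integrable hh'.test.integrable, hh.integral_eq, hh'.integral_eq,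
      sub_zero]⟩

theorem const_mul (hh : IsNull h) (c : ℝ) : IsNull fun x => c * h x :=
  ⟨hh.test.const_mul c, by rw [integral_const_mul, hh.integral_eq, mul_zero]⟩

theorem sum {κ : Type*} (s : Finset κ) {h : κ → EuclideanSpace ℝ ι → ℝ}
    (hh : ∀ k, IsNull (h k)) : IsNull fun x => ∑ k ∈ s, h k x :=
  ⟨IsTest.sum _ fun k => (hh k).test, by
    rw [integral_finsetSum _ fun k _ => (hh k).test.integrable]
    exact Finset.sum_eq_zero fun k _ => (hh k).integral_eq⟩

theorem divergence {θ : EuclideanSpace ℝ ι → ℝ} (hθ : IsTest θ)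
    {G : ι → EuclideanSpace ℝ ι → ℝ} (hG : ∀ i, ContDiff ℝ (⊤ : ℕ∞) (G i)) :
    IsNull fun x => ∑ i, (∂[i] θ x * G i x + θ x * ∂[i] (G i) x) := by
  refine IsNull.sum _ fun i => ?_
  rw [← funext fun x =>
    partialDeriv_mul hθ.differentiable ((hG i).differentiable (by simp)) i x]
  exact ⟨(hθ.mul_right (hG i)).partialDeriv i, (hθ.mul_right (hG i)).integral_partialDeriv i⟩

end IsNull

section LocalIdentities

/-- The local energy of a scalar `f` transported by `U`: modulo null functions it is the pairing of
`-Δf + (U·∇)f` with `θ * f`. -/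
def localEnergy (θ : EuclideanSpace ℝ ι → ℝ) (U : ι → EuclideanSpace ℝ ι → ℝ)
    (f : EuclideanSpace ℝ ι → ℝ) (x : EuclideanSpace ℝ ι) : ℝ :=
  θ x * ∑ i, ∂[i] f x ^ 2 + ∑ i, ∂[i] θ x * f x * ∂[i] f x
    - 1 / 2 * (∑ i, ∂[i] θ x * U i x) * f x ^ 2

variable {θ : EuclideanSpace ℝ ι → ℝ} {U V : ι → EuclideanSpace ℝ ι → ℝ}

theorem isNull_transport (hθ : IsTest θ) (hU : ∀ j, ContDiff ℝ (⊤ : ℕ∞) (U j))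
    (hdiv : ∀ x, ∑ i, ∂[i] (U i) x = 0) {f : EuclideanSpace ℝ ι → ℝ}
    (hf : ContDiff ℝ (⊤ : ℕ∞) f) :
    IsNull fun x => θ x * (f x * (-coordLaplacian f x + ∑ i, U i x * ∂[i] f x))
      - localEnergy θ U f x := by
  have partial_smooth := fun i => contDiff_partialDeriv hf i
  have f_diff : Differentiable ℝ f := hf.differentiable (by simp)
  have partial_diff := fun i => (partial_smooth i).differentiable (by simp)
  have U_diff := fun i => (hU i).differentiable (by simp)
  convert IsNull.divergence hθ (G := fun i x => U i x * (1 / 2 * f x ^ 2) - f x * ∂[i] f x)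
    (fun i => ((hU i).mul (contDiff_const.mul (hf.pow 2))).sub (hf.mul (partial_smooth i))) using 1
  ext x
  have flux_deriv : ∀ i, ∂[i] (fun x => U i x * (1 / 2 * f x ^ 2) - f x * ∂[i] f x) x =
      ∂[i] (U i) x * (1 / 2 * f x ^ 2) + U i x * (f x * ∂[i] f x)
        - (∂[i] f x ^ 2 + f x * ∂[i] (∂[i] f) x) := fun i => by
    rw [partialDeriv_sub ((U_diff i).fun_mul ((f_diff.fun_pow 2).const_mul _))
        (f_diff.fun_mul (partial_diff i)),
      partialDeriv_mul (U_diff i) ((f_diff.fun_pow 2).const_mul _),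
      partialDeriv_mul f_diff (partial_diff i), partialDeriv_const_mul (f_diff.fun_pow 2),
      partialDeriv_pow f_diff]
    push_cast
    ring
  rw [← sub_eq_zero, ← mul_eq_zero_of_right (-(1 / 2 * θ x * f x ^ 2)) (hdiv x)]
  simp only [flux_deriv, localEnergy, coordLaplacian, Finset.mul_sum, Finset.sum_mul, mul_add,
    ← Finset.sum_neg_distrib, ← Finset.sum_add_distrib, ← Finset.sum_sub_distrib]
  exact Finset.sum_congr rfl fun i _ => by ring

theorem isNull_convection (hθ : IsTest θ) (hV : ∀ j, ContDiff ℝ (⊤ : ℕ∞) (V j))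
    (hdiv : ∀ x, ∑ i, ∂[i] (V i) x = 0) {f : EuclideanSpace ℝ ι → ℝ}
    (hf : ContDiff ℝ (⊤ : ℕ∞) f) :
    IsNull fun x => (∑ i, ∂[i] θ x * V i x) * f x + θ x * ∑ i, V i x * ∂[i] f x := by
  convert IsNull.divergence hθ (G := fun i x => V i x * f x) (fun i => (hV i).mul hf) using 1
  ext x
  simp only [partialDeriv_mul ((hV _).differentiable (by simp)) (hf.differentiable (by simp)),
    Finset.sum_add_distrib, mul_add, Finset.mul_sum, Finset.sum_mul, mul_assoc]
  simp only [← mul_assoc, ← Finset.sum_mul, ← Finset.mul_sum, hdiv]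
  simp only [mul_zero, zero_mul, zero_add]

theorem isNull_dot_convection (hθ : IsTest θ) {B : ι → EuclideanSpace ℝ ι → ℝ}
    (hU : ∀ j, ContDiff ℝ (⊤ : ℕ∞) (U j)) (hB : ∀ j, ContDiff ℝ (⊤ : ℕ∞) (B j))
    (hdiv : ∀ x, ∑ i, ∂[i] (B i) x = 0) :
    IsNull fun x => (∑ i, ∂[i] θ x * B i x) * (∑ j, U j x * B j x) + θ x *
      ∑ j, (U j x * (∑ i, B i x * ∂[i] (B j) x) + B j x * ∑ i, B i x * ∂[i] (U j) x) := by
  have U_diff := fun j => (hU j).differentiable (by simp)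
  have B_diff := fun j => (hB j).differentiable (by simp)
  convert isNull_convection hθ hB hdiv (ContDiff.sum fun j (_ : j ∈ Finset.univ) =>
    (hU j).mul (hB j)) using 4 with x
  simp only [partialDeriv_sum _ fun j => (U_diff j).fun_mul (B_diff j),
    fun j => partialDeriv_mul (U_diff j) (B_diff j), Finset.mul_sum]
  rw [Finset.sum_comm]
  simp only [← Finset.sum_add_distrib]
  exact Finset.sum_congr rfl fun j _ => Finset.sum_congr rfl fun i _ => by ring

theorem isNull_grad_div (hθ : IsTest θ) (hV : ∀ j, ContDiff ℝ (⊤ : ℕ∞) (V j)) :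
    IsNull fun x => (∑ i, ∂[i] θ x * V i x) * (∑ k, ∂[k] (V k) x)
      + θ x * (∑ k, ∂[k] (V k) x) ^ 2
      + θ x * ∑ j, V j x * ∂[j] (fun y => ∑ i, ∂[i] (V i) y) x := by
  have div_smooth : ContDiff ℝ (⊤ : ℕ∞) fun x => ∑ k, ∂[k] (V k) x :=
    ContDiff.sum fun j _ => contDiff_partialDeriv (hV j) j
  convert IsNull.divergence hθ (G := fun i x => V i x * ∑ k, ∂[k] (V k) x)
    (fun i => (hV i).mul div_smooth) using 1
  ext x
  simp only [partialDeriv_mul ((hV _).differentiable (by simp))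
    (div_smooth.differentiable (by simp)), mul_add, Finset.sum_add_distrib, ← mul_assoc,
    ← Finset.sum_mul, ← Finset.mul_sum]
  simp only [mul_assoc, ← Finset.mul_sum]
  ring

theorem isNull_grad_transpose (hθ : IsTest θ) (hU : ∀ j, ContDiff ℝ (⊤ : ℕ∞) (U j))
    (hdiv : ∀ x, ∑ i, ∂[i] (U i) x = 0) :
    IsNull fun x => (∑ i, ∑ j, ∂[i] θ x * U j x * ∂[j] (U i) x)
      + θ x * ∑ i, ∑ j, ∂[i] (U j) x * ∂[j] (U i) x := by
  have U_diff := fun i => (hU i).differentiable (by simp)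
  have partial_diff := fun i j => (contDiff_partialDeriv (hU j) i).differentiable (by simp)
  convert IsNull.divergence hθ (G := fun i x => ∑ j, U j x * ∂[j] (U i) x)
    (fun i => ContDiff.sum fun j _ => (hU j).mul (contDiff_partialDeriv (hU i) j)) using 1
  ext x
  have flux_deriv : ∀ i, ∂[i] (fun x => ∑ j, U j x * ∂[j] (U i) x) x =
      ∑ j, (∂[i] (U j) x * ∂[j] (U i) x + U j x * ∂[j] (∂[i] (U i)) x) := fun i => by
    rw [partialDeriv_sum _ fun j => (U_diff j).fun_mul (partial_diff j i)]
    simp only [fun j => partialDeriv_mul (U_diff j) (partial_diff j i) i x,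
      fun j => partialDeriv_comm (hU i) i j x]
  have grad_div : ∑ i, ∑ j, U j x * ∂[j] (∂[i] (U i)) x = 0 := by
    rw [Finset.sum_comm]
    refine Finset.sum_eq_zero fun j _ => ?_
    rw [← Finset.mul_sum, ← partialDeriv_sum _ fun i => partial_diff i i, funext hdiv,
      partialDeriv_const, mul_zero]
  simp only [flux_deriv, Finset.sum_add_distrib, ← Finset.mul_sum, mul_assoc, grad_div, add_zero]

end LocalIdentities

section LocalCoercivity

/-- The squared length `|V|²` of the vector field with components `V`. -/
def fieldSq (V : ι → EuclideanSpace ℝ ι → ℝ) (x : EuclideanSpace ℝ ι) : ℝ := ∑ k, V k x ^ 2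

/-- The squared Frobenius norm `|∇V|²` of the gradient of the vector field with components `V`. -/
def fieldGradSq (V : ι → EuclideanSpace ℝ ι → ℝ) (x : EuclideanSpace ℝ ι) : ℝ :=
  ∑ j, ∑ i, ∂[i] (V j) x ^ 2

variable {V : ι → EuclideanSpace ℝ ι → ℝ}

theorem fieldSq_nonneg (V : ι → EuclideanSpace ℝ ι → ℝ) (x : EuclideanSpace ℝ ι) :
    0 ≤ fieldSq V x := Finset.sum_nonneg fun _ _ => sq_nonneg _

theorem fieldGradSq_nonneg (V : ι → EuclideanSpace ℝ ι → ℝ) (x : EuclideanSpace ℝ ι) :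
    0 ≤ fieldGradSq V x := Finset.sum_nonneg fun _ _ => Finset.sum_nonneg fun _ _ => sq_nonneg _

theorem sq_le_fieldSq (V : ι → EuclideanSpace ℝ ι → ℝ) (k : ι) (x : EuclideanSpace ℝ ι) :
    V k x ^ 2 ≤ fieldSq V x :=
  Finset.single_le_sum (f := fun k => V k x ^ 2) (fun _ _ => sq_nonneg _) (Finset.mem_univ k)

theorem abs_mul_le_fieldSq (V : ι → EuclideanSpace ℝ ι → ℝ) (i j : ι) (x : EuclideanSpace ℝ ι) :
    |V i x * V j x| ≤ fieldSq V x := by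
  have hi := sq_le_fieldSq V i x
  have hj := sq_le_fieldSq V j x
  exact abs_le.2 ⟨by nlinarith [sq_nonneg (V i x + V j x)],
    by nlinarith [sq_nonneg (V i x - V j x)]⟩

theorem contDiff_fieldSq (hV : ∀ k, ContDiff ℝ (⊤ : ℕ∞) (V k)) :
    ContDiff ℝ (⊤ : ℕ∞) (fieldSq V) := ContDiff.sum fun k _ => (hV k).pow 2

theorem contDiff_fieldGradSq (hV : ∀ k, ContDiff ℝ (⊤ : ℕ∞) (V k)) :
    ContDiff ℝ (⊤ : ℕ∞) (fieldGradSq V) :=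
  ContDiff.sum fun j _ => ContDiff.sum fun i _ => (contDiff_partialDeriv (hV j) i).pow 2

variable {θ : EuclideanSpace ℝ ι → ℝ} {U B : ι → EuclideanSpace ℝ ι → ℝ}
  {x : EuclideanSpace ℝ ι} {e δ c : ℝ} {d : ι → ℝ}

theorem localEnergy_ge (hθ : θ x = e ^ 2) (hdθ : ∀ i, ∂[i] θ x = e * d i)
    (hd : ∀ i, d i ^ 2 ≤ δ) (hU : |∑ i, ∂[i] θ x * U i x| ≤ c)
    (f : EuclideanSpace ℝ ι → ℝ) :
    15 / 16 * e ^ 2 * ∑ i, ∂[i] f x ^ 2 - (4 * Fintype.card ι * δ + 1 / 2 * c) * f x ^ 2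
      ≤ localEnergy θ U f x := by
  have transport_le : (∑ i, ∂[i] θ x * U i x) * f x ^ 2 ≤ c * f x ^ 2 :=
    mul_le_mul_of_nonneg_right ((le_abs_self _).trans hU) (sq_nonneg _)
  have cross_ge : ∀ i, -(1 / 16) * e ^ 2 * ∂[i] f x ^ 2 - 4 * δ * f x ^ 2
      ≤ ∂[i] θ x * f x * ∂[i] f x := fun i => by
    rw [hdθ]
    nlinarith [sq_nonneg (e * ∂[i] f x / 4 + 2 * d i * f x),
      mul_le_mul_of_nonneg_right (hd i) (sq_nonneg (f x))]
  have sum_cross_ge := Finset.sum_le_sum fun i (_ : i ∈ Finset.univ) => cross_ge i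
  simp only [Finset.sum_sub_distrib, ← Finset.mul_sum, Finset.sum_const, Finset.card_univ,
    nsmul_eq_mul] at sum_cross_ge
  rw [localEnergy, hθ]
  linarith

theorem sum_localEnergy_ge (hθ : θ x = e ^ 2) (hdθ : ∀ i, ∂[i] θ x = e * d i)
    (hd : ∀ i, d i ^ 2 ≤ δ) (hU : |∑ i, ∂[i] θ x * U i x| ≤ c)
    (V : ι → EuclideanSpace ℝ ι → ℝ) :
    15 / 16 * e ^ 2 * fieldGradSq V x - (4 * Fintype.card ι * δ + 1 / 2 * c) * fieldSq V x
      ≤ ∑ j, localEnergy θ U (V j) x := by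
  simp only [fieldGradSq, fieldSq, Finset.mul_sum, ← Finset.sum_sub_distrib]
  simp only [← Finset.mul_sum]
  exact Finset.sum_le_sum fun j _ => localEnergy_ge hθ hdθ hd hU (V j)

theorem neg_le_dot_partialDeriv_mul_add_sq (hdθ : ∀ i, ∂[i] θ x = e * d i)
    (hd : ∀ i, d i ^ 2 ≤ δ) (V : ι → EuclideanSpace ℝ ι → ℝ) (D : ℝ) :
    -(Fintype.card ι / 4 * δ * fieldSq V x) ≤ (∑ i, ∂[i] θ x * V i x) * D + e ^ 2 * D ^ 2 := by
  have dot_sq_le : (∑ i, d i * V i x) ^ 2 ≤ Fintype.card ι * δ * fieldSq V x := by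
    refine (Finset.sum_mul_sq_le_sq_mul_sq _ _ _).trans
      (mul_le_mul_of_nonneg_right ?_ (fieldSq_nonneg V x))
    simpa using Finset.sum_le_sum fun i (_ : i ∈ Finset.univ) => hd i
  simp only [hdθ, mul_assoc, ← Finset.mul_sum]
  nlinarith [sq_nonneg (2 * e * D + ∑ i, d i * V i x)]

theorem neg_le_neg_sum_partialDeriv_transpose (hdθ : ∀ i, ∂[i] θ x = e * d i)
    (hd : ∀ i, d i ^ 2 ≤ δ) (V : ι → EuclideanSpace ℝ ι → ℝ) :
    -(1 / 16 * e ^ 2 * fieldGradSq V x + 9 / 4 * Fintype.card ι * δ * fieldSq V x)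
      ≤ -(3 / 4 * ∑ i, ∑ j, ∂[i] θ x * V j x * ∂[j] (V i) x) := by
  have term_le : ∀ i j, 3 / 4 * (∂[i] θ x * V j x * ∂[j] (V i) x) ≤
      1 / 16 * e ^ 2 * ∂[j] (V i) x ^ 2 + 9 / 4 * δ * V j x ^ 2 := fun i j => by
    rw [hdθ]
    nlinarith [sq_nonneg (e * ∂[j] (V i) x - 6 * d i * V j x),
      mul_le_mul_of_nonneg_right (hd i) (sq_nonneg (V j x))]
  have sum_le := Finset.sum_le_sum fun i (_ : i ∈ Finset.univ) =>
    Finset.sum_le_sum fun j (_ : j ∈ Finset.univ) => term_le i j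
  simp only [Finset.sum_add_distrib, ← Finset.mul_sum, Finset.sum_const, Finset.card_univ,
    nsmul_eq_mul] at sum_le
  rw [fieldGradSq, fieldSq]
  linarith

theorem neg_le_dot_partialDeriv_mul_dot (hB : |∑ i, ∂[i] θ x * B i x| ≤ c)
    (U : ι → EuclideanSpace ℝ ι → ℝ) :
    -(1 / 2 * c * (fieldSq U x + fieldSq B x)) ≤
      (∑ i, ∂[i] θ x * B i x) * ∑ j, U j x * B j x := by
  have dot_le : |∑ j, U j x * B j x| ≤ 1 / 2 * (fieldSq U x + fieldSq B x) := by
    rw [fieldSq, fieldSq, ← Finset.sum_add_distrib, Finset.mul_sum]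
    refine (Finset.abs_sum_le_sum_abs _ _).trans (Finset.sum_le_sum fun j _ => abs_le.2 ⟨?_, ?_⟩)
    · nlinarith [sq_nonneg (U j x + B j x)]
    · nlinarith [sq_nonneg (U j x - B j x)]
  have product_le := mul_le_mul hB dot_le (abs_nonneg _) ((abs_nonneg _).trans hB)
  rw [← abs_mul] at product_le
  linarith [(abs_le.1 product_le).1]

variable {K ρ S : ℝ} {η : EuclideanSpace ℝ ι → ℝ}

theorem IsCutoff.abs_partialDeriv_le_mul_inv (hη : IsCutoff K ρ η) (hρ : 0 < ρ) (i : ι)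
    (x : EuclideanSpace ℝ ι) : |∂[i] η x| ≤ K * ρ⁻¹ := by
  rw [← div_eq_mul_inv, le_div_iff₀ hρ, mul_comm]
  exact hη.abs_partialDeriv_le i x

theorem IsCutoff.abs_sum_partialDeriv_pow_eight_mul_le (hη : IsCutoff K ρ η) (hρ : 0 < ρ)
    (hV : ∀ i, V i x ^ 2 ≤ S) : |∑ i, ∂[i] (fun y => η y ^ 8) x * V i x| ≤
      Fintype.card ι * (8 * K * ρ⁻¹ * η x ^ 2 * √(η x ^ 2 * S)) := by
  have η_nonneg := hη.nonneg x
  have term_le : ∀ i, |∂[i] (fun y => η y ^ 8) x * V i x| ≤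
      8 * K * ρ⁻¹ * η x ^ 2 * √(η x ^ 2 * S) := fun i => by
    have slope_le := hη.abs_partialDeriv_le_mul_inv hρ i x
    have slope_nonneg : 0 ≤ K * ρ⁻¹ := (abs_nonneg _).trans slope_le
    calc |∂[i] (fun y => η y ^ 8) x * V i x| = 8 * η x ^ 7 * |∂[i] η x| * |V i x| := by
          rw [partialDeriv_pow hη.test.differentiable, abs_mul, abs_mul,
            abs_of_nonneg (by positivity)]
          norm_num
      _ ≤ 8 * η x ^ 3 * (K * ρ⁻¹) * √S := by
          gcongr 8 * ?_ * ?_ * ?_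
          exacts [hη.pow_le_pow (by norm_num) x, Real.abs_le_sqrt (hV i)]
      _ = 8 * K * ρ⁻¹ * η x ^ 2 * √(η x ^ 2 * S) := by
          rw [Real.sqrt_mul (sq_nonneg _), Real.sqrt_sq η_nonneg]
          ring
  refine (Finset.abs_sum_le_sum_abs _ _).trans
    ((Finset.sum_le_sum fun i _ => term_le i).trans_eq ?_)
  rw [Finset.sum_const, Finset.card_univ, nsmul_eq_mul]

theorem IsCutoff.sq_mul_partialDeriv_le (hη : IsCutoff K ρ η) (hρ : 0 < ρ) (i : ι)
    (x : EuclideanSpace ℝ ι) :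
    (8 * η x ^ 3 * ∂[i] η x) ^ 2 ≤ 64 * K ^ 2 * ρ⁻¹ ^ 2 * η x ^ 2 := by
  have slope_sq_le : ∂[i] η x ^ 2 ≤ (K * ρ⁻¹) ^ 2 := by
    rw [← sq_abs]
    exact pow_le_pow_left₀ (abs_nonneg _) (hη.abs_partialDeriv_le_mul_inv hρ i x) 2
  calc (8 * η x ^ 3 * ∂[i] η x) ^ 2 = 64 * (η x ^ 6 * ∂[i] η x ^ 2) := by ring
    _ ≤ 64 * (η x ^ 2 * (K * ρ⁻¹) ^ 2) := by
        have : η x ^ 6 ≤ η x ^ 2 := hη.pow_le_pow (by norm_num) x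
        gcongr
    _ = 64 * K ^ 2 * ρ⁻¹ ^ 2 * η x ^ 2 := by ring

end LocalCoercivity

section ExistsCutoff

theorem IsTest.comp_const_smul {E : Type*} [NormedAddCommGroup E] [NormedSpace ℝ E] {f : E → ℝ}
    (hf : IsTest f) {c : ℝ} (hc : c ≠ 0) : IsTest fun x => f (c • x) :=
  ⟨hf.smooth.comp (contDiff_const_smul c), hf.compact.comp_smul hc⟩

theorem partialDeriv_comp_const_smul (f : EuclideanSpace ℝ ι → ℝ) (c : ℝ) (i : ι)
    (x : EuclideanSpace ℝ ι) : ∂[i] (fun y => f (c • y)) x = c * ∂[i] f (c • x) := by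
  simp [partialDeriv, fderiv_comp_smul]

variable {f : EuclideanSpace ℝ ι → ℝ}

theorem IsTest.exists_bound_partialDeriv (hf : IsTest f) :
    ∃ K, 1 ≤ K ∧ (∀ i x, |∂[i] f x| ≤ K) ∧ ∀ i j x, |∂[i] (∂[j] f) x| ≤ K := by
  choose M _ hM using fun i => (hf.partialDeriv i).exists_bound
  choose N _ hN using fun ij : ι × ι => ((hf.partialDeriv ij.2).partialDeriv ij.1).exists_bound
  obtain ⟨M', hM'⟩ := Finite.exists_le M
  obtain ⟨N', hN'⟩ := Finite.exists_le N
  exact ⟨max 1 (max M' N'), le_max_left _ _,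
    fun i x => (hM i x).trans ((hM' i).trans (by simp)),
    fun i j x => (hN (i, j) x).trans ((hN' (i, j)).trans (by simp))⟩

theorem IsCutoff.rescale {K ρ : ℝ} (hf : IsCutoff K 1 f) (hρ : 0 < ρ) :
    IsCutoff K ρ fun x => f (ρ⁻¹ • x) where
  test := hf.test.comp_const_smul (inv_ne_zero hρ.ne')
  nonneg x := hf.nonneg _
  le_one x := hf.le_one _
  eq_one x hx := hf.eq_one _ <| by
    rwa [mem_ball_zero_iff, norm_smul, norm_inv, norm_of_nonneg hρ.le, inv_mul_lt_iff₀ hρ, mul_one,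
      ← mem_ball_zero_iff]
  eq_zero x hx := hf.eq_zero _ <| by
    rwa [mem_ball_zero_iff, norm_smul, norm_inv, norm_of_nonneg hρ.le, inv_mul_lt_iff₀ hρ, mul_one,
      mul_comm, ← mem_ball_zero_iff]
  abs_partialDeriv_le i x := by
    rw [partialDeriv_comp_const_smul, abs_mul, abs_of_pos (inv_pos.2 hρ),
      mul_inv_cancel_left₀ hρ.ne', ← one_mul |_|]
    exact hf.abs_partialDeriv_le i _
  abs_partialDeriv_partialDeriv_le i j x := by
    have second : ∂[i] (∂[j] fun y => f (ρ⁻¹ • y)) x = (ρ ^ 2)⁻¹ * ∂[i] (∂[j] f) (ρ⁻¹ • x) := by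
      rw [funext (partialDeriv_comp_const_smul f ρ⁻¹ j),
        partialDeriv_const_mul ((hf.test.partialDeriv j).comp_const_smul
          (inv_ne_zero hρ.ne')).differentiable, partialDeriv_comp_const_smul]
      ring
    rw [second, abs_mul, abs_of_pos (by positivity), mul_inv_cancel_left₀ (by positivity),
      ← one_mul |_|, ← one_pow 2]
    exact hf.abs_partialDeriv_partialDeriv_le i j _

theorem exists_isCutoff (ι : Type*) [Fintype ι] :
    ∃ K, 1 ≤ K ∧ ∀ ρ, 0 < ρ → ∃ η : EuclideanSpace ℝ ι → ℝ, IsCutoff K ρ η := by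
  let bump : ContDiffBump (0 : EuclideanSpace ℝ ι) := ⟨1, 2, one_pos, one_lt_two⟩
  have bump_test : IsTest bump := ⟨bump.contDiff, bump.hasCompactSupport⟩
  obtain ⟨K, hK, first, second⟩ := bump_test.exists_bound_partialDeriv
  have unit : IsCutoff K 1 bump :=
    { test := bump_test
      nonneg := fun _ => bump.nonneg
      le_one := fun _ => bump.le_one
      eq_one := fun _ hx => bump.one_of_mem_closedBall (ball_subset_closedBall hx)
      eq_zero := fun _ hx => bump.zero_of_le_dist (by simpa [bump] using hx)
      abs_partialDeriv_le := by simpa using first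
      abs_partialDeriv_partialDeriv_le := by simpa using second }
  exact ⟨K, hK, fun ρ hρ => ⟨_, unit.rescale hρ⟩⟩

end ExistsCutoff

end EuclideanCalculus

local notation "∂[" i "]" => partialDeriv i

/-- The curl of the vector field with components `V`. -/
def compCurl (V : Fin 3 → E3 → ℝ) (x : E3) : Fin 3 → ℝ :=
  ![∂[1] (V 2) x - ∂[2] (V 1) x, ∂[2] (V 0) x - ∂[0] (V 2) x, ∂[0] (V 1) x - ∂[1] (V 0) x]

/-- The antisymmetric matrix field whose row divergence is the curl. -/
def curlMat (V : Fin 3 → E3 → ℝ) (i j : Fin 3) : E3 → ℝ :=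
  !![fun _ => 0, fun x => -V 2 x, V 1; V 2, fun _ => 0, fun x => -V 0 x;
    fun x => -V 1 x, V 0, fun _ => 0] i j

/-- The magneto-micropolar system for the components `U`, `W`, `B` of the velocity, the
micro-rotation and the magnetic field, and the pressure `P`. -/
structure IsCompSolution (U W B : Fin 3 → E3 → ℝ) (P : E3 → ℝ) : Prop where
  smooth_U : ∀ j, ContDiff ℝ (⊤ : ℕ∞) (U j)
  smooth_W : ∀ j, ContDiff ℝ (⊤ : ℕ∞) (W j)
  smooth_B : ∀ j, ContDiff ℝ (⊤ : ℕ∞) (B j)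
  smooth_P : ContDiff ℝ (⊤ : ℕ∞) P
  eq_U : ∀ x j, -coordLaplacian (U j) x + (∑ i, U i x * ∂[i] (U j) x) + ∂[j] P x
    = compCurl W x j + ∑ i, B i x * ∂[i] (B j) x
  eq_W : ∀ x j, -coordLaplacian (W j) x + (∑ i, U i x * ∂[i] (W j) x)
    = ∂[j] (fun y => ∑ i, ∂[i] (W i) y) x + compCurl U x j - 2 * W j x
  eq_B : ∀ x j, -coordLaplacian (B j) x + (∑ i, U i x * ∂[i] (B j) x) =
    ∑ i, B i x * ∂[i] (U j) x
  div_U : ∀ x, ∑ i, ∂[i] (U i) x = 0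
  div_B : ∀ x, ∑ i, ∂[i] (B i) x = 0

theorem pd_eq_partialDeriv : pd = partialDeriv := by
  ext i f x
  simp [pd, partialDeriv]

theorem lap_eq_coordLaplacian : lap = coordLaplacian := by
  ext f x
  simp only [lap, coordLaplacian, pd_eq_partialDeriv]

theorem curl3_eq_compCurl (v : E3 → E3) (x : E3) : curl3 v x = compCurl (fun j y => v y j) x := by
  simp only [curl3, compCurl, pd_eq_partialDeriv]

theorem gradSq_eq_fieldGradSq (v : E3 → E3) (x : E3) :
    gradSq v x = fieldGradSq (fun j y => v y j) x := by
  simp only [gradSq, fieldGradSq, pd_eq_partialDeriv]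

theorem IsMMPSolution.components {u w b : E3 → E3} {P : E3 → ℝ} (h : IsMMPSolution u w b P) :
    IsCompSolution (fun j y => u y j) (fun j y => w y j) (fun j y => b y j) P where
  smooth_U := contDiff_euclidean.1 h.smooth_u
  smooth_W := contDiff_euclidean.1 h.smooth_w
  smooth_B := contDiff_euclidean.1 h.smooth_b
  smooth_P := h.smooth_P
  eq_U := by
    simpa only [pd_eq_partialDeriv, lap_eq_coordLaplacian, curl3_eq_compCurl] using h.eq_u
  eq_W := by
    simpa only [vdiv, pd_eq_partialDeriv, lap_eq_coordLaplacian, curl3_eq_compCurl] using h.eq_w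
  eq_B := by simpa only [pd_eq_partialDeriv, lap_eq_coordLaplacian] using h.eq_b
  div_U := by simpa only [vdiv, pd_eq_partialDeriv] using h.div_u
  div_B := by simpa only [vdiv, pd_eq_partialDeriv] using h.div_b

section Stress

variable {K ρ s C : ℝ} {η : E3 → ℝ} {U W B : Fin 3 → E3 → ℝ} {P : E3 → ℝ}

theorem contDiff_curlMat (hW : ∀ j, ContDiff ℝ (⊤ : ℕ∞) (W j)) (i j : Fin 3) :
    ContDiff ℝ (⊤ : ℕ∞) (curlMat W i j) := by
  fin_cases i <;> fin_cases j <;> simp only [curlMat] <;>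
    first | exact contDiff_const | exact hW _ | exact (hW _).neg

theorem sum_partialDeriv_curlMat (W : Fin 3 → E3 → ℝ) (j : Fin 3) (x : E3) :
    ∑ i, ∂[i] (curlMat W i j) x = compCurl W x j := by
  fin_cases j <;>
    simp only [curlMat, compCurl, Fin.sum_univ_three, Fin.isValue, Fin.zero_eta, Fin.mk_one,
      Fin.reduceFinMk, Matrix.of_apply, Matrix.cons_val', Matrix.cons_val_zero,
      Matrix.cons_val_one, Matrix.cons_val, Matrix.cons_val_fin_one, partialDeriv_neg,
      partialDeriv_const] <;>
    ring

theorem sum_curlMat_sq (W : Fin 3 → E3 → ℝ) (x : E3) :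
    ∑ j, ∑ i, curlMat W i j x ^ 2 = 2 * fieldSq W x := by
  simp only [curlMat, fieldSq, Fin.sum_univ_three, Matrix.of_apply, Matrix.cons_val',
    Matrix.cons_val_fin_one, Matrix.cons_val_zero, Matrix.cons_val_one, Matrix.cons_val]
  ring

/-- The part of the momentum equation balanced by the pressure gradient. -/
def resid (U W B : Fin 3 → E3 → ℝ) (j : Fin 3) (x : E3) : ℝ :=
  -coordLaplacian (U j) x + (∑ i, U i x * ∂[i] (U j) x) - compCurl W x j
    - ∑ i, B i x * ∂[i] (B j) x

/-- The stress tensor whose divergence is `resid`. -/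
def stress (U W B : Fin 3 → E3 → ℝ) (i j : Fin 3) (x : E3) : ℝ :=
  -∂[i] (U j) x + U i x * U j x - B i x * B j x - curlMat W i j x

theorem contDiff_stress (h : IsCompSolution U W B P) (i j : Fin 3) :
    ContDiff ℝ (⊤ : ℕ∞) (stress U W B i j) :=
  ((((contDiff_partialDeriv (h.smooth_U j) i).neg.add ((h.smooth_U i).mul (h.smooth_U j))).sub
    ((h.smooth_B i).mul (h.smooth_B j))).sub (contDiff_curlMat h.smooth_W i j))

theorem resid_eq_neg_partialDeriv (h : IsCompSolution U W B P) (j : Fin 3) (x : E3) :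
    resid U W B j x = -∂[j] P x := by
  have momentum := h.eq_U x j
  unfold resid
  linarith

theorem contDiff_resid (h : IsCompSolution U W B P) (j : Fin 3) :
    ContDiff ℝ (⊤ : ℕ∞) (resid U W B j) := by
  rw [funext (resid_eq_neg_partialDeriv h j)]
  exact (contDiff_partialDeriv h.smooth_P j).neg

theorem resid_eq_sum_partialDeriv_stress (h : IsCompSolution U W B P) (j : Fin 3) (x : E3) :
    resid U W B j x = ∑ i, ∂[i] (stress U W B i j) x := by
  have U_diff := fun j => (h.smooth_U j).differentiable (by simp)
  have B_diff := fun j => (h.smooth_B j).differentiable (by simp)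
  have curl_diff := fun i => (contDiff_curlMat h.smooth_W i j).differentiable (by simp)
  have grad_diff := fun i => (contDiff_partialDeriv (h.smooth_U j) i).differentiable (by simp)
  have stress_deriv : ∀ i, ∂[i] (stress U W B i j) x = -∂[i] (∂[i] (U j)) x
      + (∂[i] (U i) x * U j x + U i x * ∂[i] (U j) x)
      - (∂[i] (B i) x * B j x + B i x * ∂[i] (B j) x) - ∂[i] (curlMat W i j) x := fun i => by
    have U_mul := (U_diff i).fun_mul (U_diff j)
    have B_mul := (B_diff i).fun_mul (B_diff j)
    unfold stress
    rw [partialDeriv_sub (((grad_diff i).fun_neg.fun_add U_mul).fun_sub B_mul) (curl_diff i),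
      partialDeriv_sub ((grad_diff i).fun_neg.fun_add U_mul) B_mul,
      partialDeriv_add (grad_diff i).fun_neg U_mul, partialDeriv_neg,
      partialDeriv_mul (U_diff i) (U_diff j), partialDeriv_mul (B_diff i) (B_diff j)]
  simp only [stress_deriv, Finset.sum_sub_distrib, Finset.sum_add_distrib,
    Finset.sum_neg_distrib, ← Finset.sum_mul, h.div_U, h.div_B, sum_partialDeriv_curlMat, resid,
    coordLaplacian]
  ring

theorem integral_sum_mul_resid (h : IsCompSolution U W B P) {ψ : Fin 3 → E3 → ℝ}
    (hψ : ∀ j, IsTest (ψ j)) :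
    ∫ x, ∑ j, ψ j x * resid U W B j x = -∑ j, ∑ i, ∫ x, stress U W B i j x * ∂[i] (ψ j) x := by
  have hT := contDiff_stress h
  have term_test := fun j i => (hψ j).mul_right (contDiff_partialDeriv (hT i j) i)
  simp only [resid_eq_sum_partialDeriv_stress h, Finset.mul_sum]
  rw [integral_finsetSum _ fun j _ => (IsTest.sum _ (term_test j)).integrable,
    ← Finset.sum_neg_distrib]
  refine Finset.sum_congr rfl fun j _ => ?_
  rw [integral_finsetSum _ fun i _ => (term_test j i).integrable, ← Finset.sum_neg_distrib]
  refine Finset.sum_congr rfl fun i _ => ?_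
  rw [(hψ j).integral_mul_partialDeriv (hT i j)]
  simp only [mul_comm]

theorem integral_solenoidal_mul_resid (h : IsCompSolution U W B P) {Φ : Fin 3 → E3 → ℝ}
    (hΦ : ∀ j, IsTest (Φ j)) (hdiv : ∀ x, ∑ j, ∂[j] (Φ j) x = 0) :
    ∫ x, ∑ j, Φ j x * resid U W B j x = 0 := by
  have by_parts : ∀ j, ∫ x, Φ j x * resid U W B j x = ∫ x, ∂[j] (Φ j) x * P x := fun j => by
    simp only [resid_eq_neg_partialDeriv h, mul_neg]
    rw [integral_neg, (hΦ j).integral_mul_partialDeriv h.smooth_P, neg_neg]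
  rw [integral_finsetSum _ fun j _ => ((hΦ j).mul_right (contDiff_resid h j)).integrable]
  simp only [by_parts]
  rw [← integral_finsetSum _ fun j _ =>
    (((hΦ j).partialDeriv j).mul_right h.smooth_P).integrable]
  simp only [← Finset.sum_mul, hdiv, zero_mul, integral_zero]

/-- The squared length of all the unknowns, `|u|² + |b|² + |w|²`. -/
def density (U W B : Fin 3 → E3 → ℝ) (x : E3) : ℝ := fieldSq U x + fieldSq B x + fieldSq W x

theorem contDiff_density (h : IsCompSolution U W B P) : ContDiff ℝ (⊤ : ℕ∞) (density U W B) :=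
  ((contDiff_fieldSq h.smooth_U).add (contDiff_fieldSq h.smooth_B)).add
    (contDiff_fieldSq h.smooth_W)

theorem density_nonneg (x : E3) : 0 ≤ density U W B x :=
  add_nonneg (add_nonneg (fieldSq_nonneg U x) (fieldSq_nonneg B x)) (fieldSq_nonneg W x)

theorem fieldSq_velocity_le_density (x : E3) : fieldSq U x ≤ density U W B x := by
  unfold density
  linarith [fieldSq_nonneg B x, fieldSq_nonneg W x]

theorem fieldSq_magnetic_le_density (x : E3) : fieldSq B x ≤ density U W B x := by
  unfold density
  linarith [fieldSq_nonneg U x, fieldSq_nonneg W x]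

theorem integral_stress_mul (h : IsCompSolution U W B P) {φ : E3 → ℝ} (hφ : IsTest φ)
    (i j : Fin 3) : ∫ x, stress U W B i j x * φ x =
      -(∫ x, ∂[i] (U j) x * φ x) + (∫ x, U i x * U j x * φ x) - (∫ x, B i x * B j x * φ x)
        - ∫ x, curlMat W i j x * φ x := by
  have grad_int := (hφ.mul_left (contDiff_partialDeriv (h.smooth_U j) i)).integrable.neg
  have velocity_int := (hφ.mul_left ((h.smooth_U i).mul (h.smooth_U j))).integrable
  have magnetic_int := (hφ.mul_left ((h.smooth_B i).mul (h.smooth_B j))).integrable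
  have curl_int := (hφ.mul_left (contDiff_curlMat h.smooth_W i j)).integrable
  rw [← integral_neg', ← integral_add' grad_int velocity_int,
    ← integral_sub' (grad_int.add velocity_int) magnetic_int,
    ← integral_sub' ((grad_int.add velocity_int).sub magnetic_int) curl_int]
  congr 1
  ext x
  simp only [stress, Pi.add_apply, Pi.sub_apply, Pi.neg_apply]
  ring

theorem abs_integral_stress_le (hρ : 0 < ρ) (h : IsCompSolution U W B P) {φ : E3 → ℝ}
    (hφ : IsTest φ) (i j : Fin 3)
    (hg : IsGood η (fun x => η x ^ 2 * density U W B x) C fun x => ρ * φ x) (hs : 0 < s) :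
    |∫ x, stress U W B i j x * φ x| ≤
      C * (s * ((∫ x, (η x ^ 4 * ∂[i] (U j) x) ^ 2) + ∫ x, (η x ^ 4 * curlMat W i j x) ^ 2)
        + 2 * (s⁻¹ * (ρ⁻¹ ^ 2 * ∫ x, η x ^ 2 * density U W B x))
        + 2 * (ρ⁻¹ * ∫ x, η x ^ 2 * density U W B x * √(η x ^ 2 * density U W B x))) := by
  have grad_le := hg.unscaled_sq_le hρ (contDiff_partialDeriv (h.smooth_U j) i) hs
  have curl_le := hg.unscaled_sq_le hρ (contDiff_curlMat h.smooth_W i j) hs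
  have velocity_le := hg.unscaled_sqrt_le hρ ((h.smooth_U i).mul (h.smooth_U j)) fun x =>
    mul_le_mul_of_nonneg_left
      ((abs_mul_le_fieldSq U i j x).trans (fieldSq_velocity_le_density x)) (sq_nonneg (η x))
  have magnetic_le := hg.unscaled_sqrt_le hρ ((h.smooth_B i).mul (h.smooth_B j)) fun x =>
    mul_le_mul_of_nonneg_left
      ((abs_mul_le_fieldSq B i j x).trans (fieldSq_magnetic_le_density x)) (sq_nonneg (η x))
  rw [integral_stress_mul h hφ]
  refine (abs_sub _ _).trans ((add_le_add_left ((abs_sub _ _).trans (add_le_add_left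
    (abs_add_le _ _) _)) _).trans ?_)
  rw [abs_neg]
  linarith

theorem integral_cutoff_mul_resid_eq (hρ : 0 < ρ) (h : IsCompSolution U W B P) (hη : IsTest η) :
    ∫ x, η x ^ 8 * ∑ j, U j x * resid U W B j x =
      ∑ j, ∑ i, ∫ x, stress U W B i j x * ∂[i] (corrField ρ η U j) x := by
  have hψ := isTest_corrField (ρ := ρ) hη h.smooth_U
  have correction := integral_sum_mul_resid h hψ
  have solenoidal := integral_solenoidal_mul_resid h (isTest_solField (ρ := ρ) hη h.smooth_U)
    (sum_partialDeriv_solField hη h.smooth_U)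
  have split : (fun x => ∑ j, solField ρ η U j x * resid U W B j x) =
      fun x => η x ^ 8 * (∑ j, U j x * resid U W B j x)
        + ∑ j, corrField ρ η U j x * resid U W B j x := by
    ext x
    simp only [solField_eq hρ hη h.smooth_U h.div_U, Finset.mul_sum, ← Finset.sum_add_distrib]
    exact Finset.sum_congr rfl fun j _ => by ring
  rw [split, integral_add
    ((hη.pow (by norm_num)).mul_right
      (ContDiff.sum fun j _ => (h.smooth_U j).mul (contDiff_resid h j))).integrable
    (IsTest.sum _ fun j => (hψ j).mul_right (contDiff_resid h j)).integrable] at solenoidal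
  linarith

theorem integral_cutoff_mul_gradSq_add_fieldSq (hη : IsTest η)
    (hU : ∀ j, ContDiff ℝ (⊤ : ℕ∞) (U j)) (hW : ∀ j, ContDiff ℝ (⊤ : ℕ∞) (W j)) :
    ∫ x, η x ^ 8 * (fieldGradSq U x + 2 * fieldSq W x) =
      ∑ j, ∑ i, ((∫ x, (η x ^ 4 * ∂[i] (U j) x) ^ 2)
        + ∫ x, (η x ^ 4 * curlMat W i j x) ^ 2) := by
  have sq_test : ∀ {g : E3 → ℝ}, ContDiff ℝ (⊤ : ℕ∞) g → IsTest fun x => (η x ^ 4 * g x) ^ 2 :=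
    fun hg => ((hη.pow four_ne_zero).mul_right hg).pow two_ne_zero
  have grad_test := fun i j => sq_test (contDiff_partialDeriv (hU j) i)
  have curl_test := fun i j => sq_test (contDiff_curlMat hW i j)
  have sum_test := fun j i => (grad_test i j).add (curl_test i j)
  simp only [← fun i j => integral_add (grad_test i j).integrable (curl_test i j).integrable]
  simp only [← fun j => integral_finsetSum (μ := volume) Finset.univ
    fun i (_ : i ∈ Finset.univ) => (sum_test j i).integrable]
  rw [← integral_finsetSum (μ := volume) Finset.univ
    fun j _ => (IsTest.sum _ (sum_test j)).integrable]
  congr 1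
  ext x
  rw [fieldGradSq, ← sum_curlMat_sq, ← Finset.sum_add_distrib, Finset.mul_sum]
  refine Finset.sum_congr rfl fun j _ => ?_
  rw [← Finset.sum_add_distrib, Finset.mul_sum]
  exact Finset.sum_congr rfl fun i _ => by ring

theorem integral_cutoff_mul_resid_le (hρ : 0 < ρ) (hK : 1 ≤ K) (h : IsCompSolution U W B P)
    (hη : IsCutoff K ρ η) (hs : 0 < s) :
    ∫ x, η x ^ 8 * ∑ j, U j x * resid U W B j x ≤ corrConst (Fin 3) K *
      (s * (∫ x, η x ^ 8 * (fieldGradSq U x + 2 * fieldSq W x))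
        + 18 * (s⁻¹ * (ρ⁻¹ ^ 2 * ∫ x, η x ^ 2 * density U W B x))
        + 18 * (ρ⁻¹ * ∫ x, η x ^ 2 * density U W B x * √(η x ^ 2 * density U W B x))) := by
  have good := isGood_partialDeriv_corrField hρ hK hη h.smooth_U
    ((hη.test.pow two_ne_zero).mul_right (contDiff_density h)) fun x =>
      mul_le_mul_of_nonneg_left (fieldSq_velocity_le_density x) (sq_nonneg (η x))
  have sum_nine : ∀ (X : Fin 3 → Fin 3 → ℝ) (c a b : ℝ),
      ∑ j, ∑ i, c * (s * X j i + 2 * a + 2 * b)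
        = c * (s * (∑ j, ∑ i, X j i) + 18 * a + 18 * b) := fun X c a b => by
    simp only [Fin.sum_univ_three]
    ring
  rw [integral_cutoff_mul_resid_eq hρ h hη.test,
    integral_cutoff_mul_gradSq_add_fieldSq hη.test h.smooth_U h.smooth_W, ← sum_nine]
  exact Finset.sum_le_sum fun j _ => Finset.sum_le_sum fun i _ => (le_abs_self _).trans
    (abs_integral_stress_le hρ h ((isTest_corrField hη.test h.smooth_U j).partialDeriv i) i j
      (good i j) hs)

end Stress

section Energy

variable {θ : E3 → ℝ} {U W B : Fin 3 → E3 → ℝ} {P : E3 → ℝ}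

theorem isNull_curl (hθ : IsTest θ) (hU : ∀ j, ContDiff ℝ (⊤ : ℕ∞) (U j))
    (hW : ∀ j, ContDiff ℝ (⊤ : ℕ∞) (W j)) :
    IsNull fun x => (∑ i, ∂[i] θ x * ∑ j, curlMat W i j x * U j x)
      + θ x * ∑ j, (U j x * compCurl W x j - W j x * compCurl U x j) := by
  have curl_smooth := contDiff_curlMat hW
  convert IsNull.divergence hθ (G := fun i x => ∑ j, curlMat W i j x * U j x)
    (fun i => ContDiff.sum fun j _ => (curl_smooth i j).mul (hU j)) using 1
  ext x
  have flux_deriv : ∀ i, ∂[i] (fun x => ∑ j, curlMat W i j x * U j x) x =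
      ∑ j, (∂[i] (curlMat W i j) x * U j x + curlMat W i j x * ∂[i] (U j) x) := fun i => by
    rw [partialDeriv_sum _ fun j => ((curl_smooth i j).mul (hU j)).differentiable (by simp)]
    simp only [fun j => partialDeriv_mul ((curl_smooth i j).differentiable (by simp))
      ((hU j).differentiable (by simp)) i x]
  have div_flux : ∑ i, ∑ j, ∂[i] (curlMat W i j) x * U j x = ∑ j, U j x * compCurl W x j := by
    rw [Finset.sum_comm]
    simp only [← Finset.sum_mul, sum_partialDeriv_curlMat, mul_comm (U _ x)]
  simp only [flux_deriv, Finset.sum_add_distrib, ← Finset.mul_sum, div_flux]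
  have antisymm : ∑ i, ∑ j, curlMat W i j x * ∂[i] (U j) x = -∑ j, W j x * compCurl U x j := by
    simp only [curlMat, compCurl, Fin.sum_univ_three, Matrix.of_apply, Matrix.cons_val',
      Matrix.cons_val_fin_one, Matrix.cons_val_zero, Matrix.cons_val_one, Matrix.cons_val]
    ring
  rw [antisymm, Finset.sum_sub_distrib, sub_eq_add_neg]

/-- The localised energy of the full system, with weight `θ`: modulo null functions it is the
pairing of the momentum equation, without the pressure, with `θ * U`. The identity of
`isNull_grad_transpose` enters with the factor `-3 / 4`. -/
def energyForm (θ : E3 → ℝ) (U W B : Fin 3 → E3 → ℝ) (x : E3) : ℝ :=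
  ∑ j, localEnergy θ U (U j) x + ∑ j, localEnergy θ U (B j) x + ∑ j, localEnergy θ U (W j) x
    + (∑ i, ∂[i] θ x * B i x) * (∑ j, U j x * B j x)
    + (∑ i, ∂[i] θ x * ∑ j, curlMat W i j x * U j x) - 2 * θ x * ∑ j, W j x * compCurl U x j
    + (∑ i, ∂[i] θ x * W i x) * (∑ k, ∂[k] (W k) x) + θ x * (∑ k, ∂[k] (W k) x) ^ 2
    + 2 * θ x * fieldSq W x
    - 3 / 4 * ((∑ i, ∑ j, ∂[i] θ x * U j x * ∂[j] (U i) x)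
      + θ x * ∑ i, ∑ j, ∂[i] (U j) x * ∂[j] (U i) x)

theorem isNull_resid_sub_energyForm (hθ : IsTest θ) (h : IsCompSolution U W B P) :
    IsNull fun x => θ x * (∑ j, U j x * resid U W B j x) - energyForm θ U W B x := by
  have transport := fun {f : E3 → ℝ} (hf : ContDiff ℝ (⊤ : ℕ∞) f) =>
    isNull_transport hθ h.smooth_U h.div_U hf
  have velocity := IsNull.sum Finset.univ fun j => transport (h.smooth_U j)
  have magnetic := IsNull.sum Finset.univ fun j => transport (h.smooth_B j)
  have rotation := IsNull.sum Finset.univ fun j => transport (h.smooth_W j)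
  convert (((((velocity.sub (magnetic.const_mul (-1))).sub (rotation.const_mul (-1))).sub
    (isNull_dot_convection hθ h.smooth_U h.smooth_B h.div_B)).sub
    (isNull_curl hθ h.smooth_U h.smooth_W)).sub (isNull_grad_div hθ h.smooth_W)).sub
    ((isNull_grad_transpose hθ h.smooth_U h.div_U).const_mul (-(3 / 4))) using 1
  ext x
  simp only [h.eq_B, h.eq_W]
  simp only [energyForm, resid, fieldSq, Fin.sum_univ_three]
  ring

variable {x : E3} {e δ c : ℝ} {d : Fin 3 → ℝ}

theorem neg_le_sum_partialDeriv_mul_curlMat (hdθ : ∀ i, ∂[i] θ x = e * d i)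
    (hd : ∀ i, d i ^ 2 ≤ δ) (U W : Fin 3 → E3 → ℝ) :
    -(1 / 12 * e ^ 2 * fieldSq W x + 12 * δ * fieldSq U x)
      ≤ ∑ i, ∂[i] θ x * ∑ j, curlMat W i j x * U j x := by
  have term_ge : ∀ (i : Fin 3) (w v : ℝ), -(1 / 24) * e ^ 2 * w ^ 2 - 6 * δ * v ^ 2
      ≤ e * d i * (w * v) := fun i w v => by
    nlinarith [sq_nonneg (e * w + 12 * d i * v),
      mul_le_mul_of_nonneg_right (hd i) (sq_nonneg v)]
  simp only [hdθ, curlMat, fieldSq, Fin.sum_univ_three, Matrix.of_apply, Matrix.cons_val',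
    Matrix.cons_val_fin_one, Matrix.cons_val_zero, Matrix.cons_val_one, Matrix.cons_val]
  linarith [term_ge 0 (-W 2 x) (U 1 x), term_ge 0 (W 1 x) (U 2 x), term_ge 1 (W 2 x) (U 0 x),
    term_ge 1 (-W 0 x) (U 2 x), term_ge 2 (-W 1 x) (U 0 x), term_ge 2 (W 0 x) (U 1 x)]

theorem sum_compCurl_sq (U : Fin 3 → E3 → ℝ) (x : E3) : ∑ j, compCurl U x j ^ 2 =
    fieldGradSq U x - ∑ i, ∑ j, ∂[i] (U j) x * ∂[j] (U i) x := by
  simp only [compCurl, fieldGradSq, Fin.sum_univ_three, Matrix.cons_val_zero,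
    Matrix.cons_val_one, Matrix.cons_val]
  ring

theorem two_mul_dot_compCurl_le (e : ℝ) (U W : Fin 3 → E3 → ℝ) (x : E3) :
    2 * e ^ 2 * ∑ j, W j x * compCurl U x j ≤ 4 / 3 * e ^ 2 * fieldSq W x + 3 / 4 * e ^ 2 *
      (fieldGradSq U x - ∑ i, ∑ j, ∂[i] (U j) x * ∂[j] (U i) x) := by
  have term_le : ∀ j, 2 * e ^ 2 * (W j x * compCurl U x j) ≤
      4 / 3 * e ^ 2 * W j x ^ 2 + 3 / 4 * e ^ 2 * compCurl U x j ^ 2 := fun j => by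
    nlinarith [sq_nonneg (e * (4 * W j x - 3 * compCurl U x j))]
  rw [← sum_compCurl_sq, fieldSq, Finset.mul_sum, Finset.mul_sum, Finset.mul_sum,
    ← Finset.sum_add_distrib]
  exact Finset.sum_le_sum fun j _ => term_le j

/-- The dissipated energy `|∇u|² + |∇b|² + |∇w|² + |w|²`. -/
def dissipation (U W B : Fin 3 → E3 → ℝ) (x : E3) : ℝ :=
  fieldGradSq U x + fieldGradSq B x + fieldGradSq W x + fieldSq W x

theorem dissipation_nonneg (U W B : Fin 3 → E3 → ℝ) (x : E3) : 0 ≤ dissipation U W B x :=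
  add_nonneg (add_nonneg (add_nonneg (fieldGradSq_nonneg U x) (fieldGradSq_nonneg B x))
    (fieldGradSq_nonneg W x)) (fieldSq_nonneg W x)

theorem contDiff_dissipation (h : IsCompSolution U W B P) :
    ContDiff ℝ (⊤ : ℕ∞) (dissipation U W B) :=
  (((contDiff_fieldGradSq h.smooth_U).add (contDiff_fieldGradSq h.smooth_B)).add
    (contDiff_fieldGradSq h.smooth_W)).add (contDiff_fieldSq h.smooth_W)

theorem energyForm_ge (hθ : θ x = e ^ 2) (hdθ : ∀ i, ∂[i] θ x = e * d i)
    (hd : ∀ i, d i ^ 2 ≤ δ) (hU : |∑ i, ∂[i] θ x * U i x| ≤ c)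
    (hB : |∑ i, ∂[i] θ x * B i x| ≤ c) :
    1 / 8 * (e ^ 2 * dissipation U W B x) - 32 * δ * density U W B x - c * density U W B x
      ≤ energyForm θ U W B x := by
  have hδ : 0 ≤ δ := (sq_nonneg _).trans (hd 0)
  have hc : 0 ≤ c := (abs_nonneg _).trans hU
  have velocity := sum_localEnergy_ge hθ hdθ hd hU U
  have magnetic := sum_localEnergy_ge hθ hdθ hd hU B
  have rotation := sum_localEnergy_ge hθ hdθ hd hU W
  have lorentz := neg_le_dot_partialDeriv_mul_dot hB U
  have curl_flux := neg_le_sum_partialDeriv_mul_curlMat hdθ hd U W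
  have curl_coupling := two_mul_dot_compCurl_le e U W x
  have div_flux := neg_le_dot_partialDeriv_mul_add_sq hdθ hd W (∑ k, ∂[k] (W k) x)
  have transpose_flux := neg_le_neg_sum_partialDeriv_transpose hdθ hd U
  have gradB := mul_nonneg (sq_nonneg e) (fieldGradSq_nonneg B x)
  have gradW := mul_nonneg (sq_nonneg e) (fieldGradSq_nonneg W x)
  have sqW := mul_nonneg (sq_nonneg e) (fieldSq_nonneg W x)
  have δU := mul_nonneg hδ (fieldSq_nonneg U x)
  have δB := mul_nonneg hδ (fieldSq_nonneg B x)
  have δW := mul_nonneg hδ (fieldSq_nonneg W x)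
  have cW := mul_nonneg hc (fieldSq_nonneg W x)
  simp only [Fintype.card_fin, Nat.cast_ofNat] at velocity magnetic rotation div_flux transpose_flux
  simp only [energyForm, dissipation, density, hθ]
  linarith

end Energy

section Caccioppoli

variable {K ρ : ℝ} {η : E3 → ℝ} {U W B : Fin 3 → E3 → ℝ} {P : E3 → ℝ}

theorem energyForm_cutoff_ge (hρ : 0 < ρ) (hη : IsCutoff K ρ η) (x : E3) :
    1 / 8 * (η x ^ 8 * dissipation U W B x)
        - 2048 * K ^ 2 * ρ⁻¹ ^ 2 * (η x ^ 2 * density U W B x)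
        - 24 * K * ρ⁻¹ * (η x ^ 2 * density U W B x * √(η x ^ 2 * density U W B x))
      ≤ energyForm (fun y => η y ^ 8) U W B x := by
  have coercive := energyForm_ge (θ := fun y => η y ^ 8) (e := η x ^ 4) (W := W) (by ring)
    (d := fun i => 8 * η x ^ 3 * ∂[i] η x)
    (fun i => by
      rw [partialDeriv_pow hη.test.differentiable]
      push_cast
      ring)
    (fun i => hη.sq_mul_partialDeriv_le hρ i x)
    (hη.abs_sum_partialDeriv_pow_eight_mul_le hρ fun i =>
      (sq_le_fieldSq U i x).trans (fieldSq_velocity_le_density (W := W) (B := B) x))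
    (hη.abs_sum_partialDeriv_pow_eight_mul_le hρ fun i =>
      (sq_le_fieldSq B i x).trans (fieldSq_magnetic_le_density x))
  refine le_trans (le_of_eq ?_) coercive
  simp only [Fintype.card_fin, Nat.cast_ofNat]
  ring

theorem IsCutoff.isTest_sq_mul_density (hη : IsCutoff K ρ η) (h : IsCompSolution U W B P) :
    IsTest fun x => η x ^ 2 * density U W B x :=
  (hη.test.pow two_ne_zero).mul_right (contDiff_density h)

theorem IsCutoff.isTest_pow_eight_mul_dissipation (hη : IsCutoff K ρ η)
    (h : IsCompSolution U W B P) : IsTest fun x => η x ^ 8 * dissipation U W B x :=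
  (hη.test.pow (by norm_num)).mul_right (contDiff_dissipation h)

theorem integral_dissipation_le_integral_resid (hρ : 0 < ρ) (h : IsCompSolution U W B P)
    (hη : IsCutoff K ρ η) : 1 / 8 * (∫ x, η x ^ 8 * dissipation U W B x) ≤
      (∫ x, η x ^ 8 * ∑ j, U j x * resid U W B j x)
        + 2048 * K ^ 2 * ρ⁻¹ ^ 2 * (∫ x, η x ^ 2 * density U W B x)
        + 24 * K * ρ⁻¹ * ∫ x, η x ^ 2 * density U W B x * √(η x ^ 2 * density U W B x) := by
  have weight : IsTest fun x => η x ^ 8 := hη.test.pow (by norm_num)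
  have density_test := hη.isTest_sq_mul_density h
  have density_int := density_test.integrable.const_mul (2048 * K ^ 2 * ρ⁻¹ ^ 2)
  have cubic_int := density_test.integrable_mul_sqrt.const_mul (24 * K * ρ⁻¹)
  have resid_int := (weight.mul_right (ContDiff.sum fun j (_ : j ∈ Finset.univ) =>
    (h.smooth_U j).mul (contDiff_resid h j))).integrable
  have resid_density_int := resid_int.fun_add density_int
  have null := isNull_resid_sub_energyForm weight h
  simp only [← integral_const_mul]
  rw [← integral_add resid_int density_int, ← integral_add resid_density_int cubic_int,
    ← sub_zero (∫ x, _ + _), ← null.integral_eq,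
    ← integral_sub (resid_density_int.fun_add cubic_int) null.test.integrable]
  refine integral_mono ((hη.isTest_pow_eight_mul_dissipation h).integrable.const_mul _)
    ((resid_density_int.fun_add cubic_int).sub null.test.integrable) fun x => ?_
  have coercive := energyForm_cutoff_ge (U := U) (W := W) (B := B) hρ hη x
  dsimp only
  linarith

theorem integral_gradSq_add_fieldSq_le (h : IsCompSolution U W B P) (hη : IsCutoff K ρ η) :
    ∫ x, η x ^ 8 * (fieldGradSq U x + 2 * fieldSq W x) ≤
      2 * ∫ x, η x ^ 8 * dissipation U W B x := by
  rw [← integral_const_mul]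
  have integrand_test := (hη.test.pow (by norm_num : 8 ≠ 0)).mul_right
    ((contDiff_fieldGradSq h.smooth_U).add ((contDiff_fieldSq h.smooth_W).const_smul (2 : ℝ)))
  refine integral_mono integrand_test.integrable
    ((hη.isTest_pow_eight_mul_dissipation h).integrable.const_mul 2) fun x => ?_
  have pointwise : fieldGradSq U x + 2 * fieldSq W x ≤ 2 * dissipation U W B x := by
    unfold dissipation
    linarith [fieldGradSq_nonneg U x, fieldGradSq_nonneg B x, fieldGradSq_nonneg W x]
  calc η x ^ 8 * (fieldGradSq U x + 2 * fieldSq W x) ≤ η x ^ 8 * (2 * dissipation U W B x) :=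
        mul_le_mul_of_nonneg_left pointwise (pow_nonneg (hη.nonneg x) 8)
    _ = 2 * (η x ^ 8 * dissipation U W B x) := mul_left_comm _ _ _

/-- The constant of the Caccioppoli estimate for cutoffs with bound `K`. -/
def caccioppoliConst (K : ℝ) : ℝ :=
  16 * (576 * corrConst (Fin 3) K ^ 2 + 2048 * K ^ 2 + 18 * corrConst (Fin 3) K + 24 * K)

theorem caccioppoliConst_pos (hK : 1 ≤ K) : 0 < caccioppoliConst K := by
  have := corrConst_pos (ι := Fin 3) hK
  unfold caccioppoliConst
  positivity

theorem caccioppoli (hK : 1 ≤ K) (hρ : 0 < ρ) (h : IsCompSolution U W B P)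
    (hη : IsCutoff K ρ η) :
    ∫ x, η x ^ 8 * dissipation U W B x ≤
      caccioppoliConst K * (ρ⁻¹ ^ 2 * (∫ x, η x ^ 2 * density U W B x)
        + ρ⁻¹ * ∫ x, η x ^ 2 * density U W B x * √(η x ^ 2 * density U W B x)) := by
  have hc := corrConst_pos (ι := Fin 3) hK
  have hv : ∀ x, 0 ≤ η x ^ 2 * density U W B x := fun x =>
    mul_nonneg (sq_nonneg _) (density_nonneg x)
  have energy := integral_dissipation_le_integral_resid hρ h hη
  -- This weight lets the left-hand side absorb half of itself.
  have pressure := integral_cutoff_mul_resid_le hρ hK h hη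
    (s := 1 / (32 * corrConst (Fin 3) K)) (by positivity)
  have absorb := integral_gradSq_add_fieldSq_le h hη
  have quadratic_nonneg : 0 ≤ ρ⁻¹ ^ 2 * ∫ x, η x ^ 2 * density U W B x :=
    mul_nonneg (by positivity) (integral_nonneg hv)
  have cubic_nonneg :
      0 ≤ ρ⁻¹ * ∫ x, η x ^ 2 * density U W B x * √(η x ^ 2 * density U W B x) :=
    mul_nonneg (by positivity) (integral_mul_sqrt_nonneg hv)
  unfold caccioppoliConst
  generalize corrConst (Fin 3) K = c at *
  generalize ∫ x, η x ^ 8 * dissipation U W B x = D at *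
  generalize ∫ x, η x ^ 8 * (fieldGradSq U x + 2 * fieldSq W x) = X at *
  generalize ∫ x, η x ^ 2 * density U W B x * √(η x ^ 2 * density U W B x) = T at *
  generalize ∫ x, η x ^ 2 * density U W B x = V at *
  generalize (∫ x, η x ^ 8 * ∑ j, U j x * resid U W B j x) = R at *
  have pressure_expanded :
      R ≤ 1 / 32 * X + 576 * c ^ 2 * (ρ⁻¹ ^ 2 * V) + 18 * c * (ρ⁻¹ * T) :=
    pressure.trans_eq (by field_simp; ring)
  nlinarith [mul_nonneg (sq_nonneg c) cubic_nonneg, mul_nonneg (sq_nonneg K) cubic_nonneg,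
    mul_nonneg hc.le quadratic_nonneg, mul_nonneg (zero_le_one.trans hK) quadratic_nonneg]

end Caccioppoli

section BallEstimates

theorem integrableOn_ball_of_continuous {X F : Type*} [MetricSpace X] [ProperSpace X]
    [MeasurableSpace X] [OpensMeasurableSpace X] {μ : Measure X} [IsFiniteMeasureOnCompacts μ]
    [NormedAddCommGroup F] {f : X → F} (hf : Continuous f) (x : X) (r : ℝ) :
    IntegrableOn f (ball x r) μ :=
  (hf.continuousOn.integrableOn_compact (isCompact_closedBall x r)).mono_set ball_subset_closedBall

theorem rpow_integral_norm_rpow_le {α F : Type*} [MeasurableSpace α] {μ : Measure α}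
    [IsFiniteMeasure μ] [NormedAddCommGroup F] {f : α → F} {p q : ℝ} (hq : 0 < q) (hqp : q ≤ p)
    (hf : AEStronglyMeasurable f μ) (hfp : Integrable (fun x => ‖f x‖ ^ p) μ) :
    (∫ x, ‖f x‖ ^ q ∂μ) ^ (1 / q) ≤
      (∫ x, ‖f x‖ ^ p ∂μ) ^ (1 / p) * μ.real Set.univ ^ (1 / q - 1 / p) := by
  have hp : 0 < p := hq.trans_le hqp
  have memLp : MemLp f (ENNReal.ofReal p) μ := by
    rw [← integrable_norm_rpow_iff hf (by simpa) ENNReal.ofReal_ne_top, ENNReal.toReal_ofReal hp.le]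
    exact hfp
  have exponent_le := ENNReal.ofReal_le_ofReal hqp
  have gap_nonneg : 0 ≤ 1 / q - 1 / p := sub_nonneg.2 (one_div_le_one_div_of_le hq hqp)
  have comparison := ENNReal.toReal_mono (ENNReal.mul_ne_top memLp.2.ne
    (ENNReal.rpow_ne_top_of_nonneg (by simpa [hp.le, hq.le] using gap_nonneg)
      (measure_ne_top μ Set.univ)))
    (eLpNorm_le_eLpNorm_mul_rpow_measure_univ exponent_le hf)
  rw [memLp.eLpNorm_eq_integral_rpow_norm (by simpa) ENNReal.ofReal_ne_top,
    (memLp.mono_exponent exponent_le).eLpNorm_eq_integral_rpow_norm (by simpa)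
    ENNReal.ofReal_ne_top, ENNReal.toReal_mul, ← ENNReal.toReal_rpow,
    ENNReal.toReal_ofReal hp.le, ENNReal.toReal_ofReal hq.le,
    ENNReal.toReal_ofReal (by positivity), ENNReal.toReal_ofReal (by positivity)] at comparison
  simpa only [one_div] using! comparison

theorem volume_real_ball3_mul {ρ : ℝ} (hρ : 0 ≤ ρ) (r : ℝ) :
    volume.real (ball3 (ρ * r)) = volume.real (ball3 r) * ρ ^ 3 := by
  simp [ball3, measureReal_def, Measure.addHaar_ball_mul volume (0 : E3) hρ, mul_comm, hρ]

theorem lpnorm_nonneg (p : ℝ) (v : E3 → E3) (S : Set E3) : 0 ≤ lpnorm p v S :=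
  rpow_nonneg (integral_nonneg fun _ => by positivity) _

variable {p ρ : ℝ} {q : ℕ} {u v w b : E3 → E3}

theorem integral_norm_pow_le (hq : q ≠ 0) (hqp : q ≤ p) (hv : Continuous v) (R : ℝ) :
    ∫ x in ball3 R, ‖v x‖ ^ q ≤
      volume.real (ball3 R) ^ (1 - q / p) * lpnorm p v (ball3 R) ^ q := by
  have hq_pos : (0 : ℝ) < q := by positivity
  have hp : 0 ≤ p := hq_pos.le.trans hqp
  have : IsFiniteMeasure (volume.restrict (ball3 R)) := ⟨by simpa using! measure_ball_lt_top⟩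
  have comparison := rpow_integral_norm_rpow_le (μ := volume.restrict (ball3 R)) hq_pos hqp
    hv.aestronglyMeasurable
    (integrableOn_ball_of_continuous (hv.norm.rpow_const fun _ => Or.inr hp) 0 R)
  have exponent : ((q : ℝ)⁻¹ - 1 / p) * q = 1 - q / p := by
    rw [sub_mul, inv_mul_cancel₀ hq_pos.ne', one_div_mul_eq_div]
  have powers := pow_le_pow_left₀ (by positivity) comparison q
  rw [mul_pow, one_div, rpow_inv_natCast_pow (by positivity) hq,
    ← rpow_mul_natCast measureReal_nonneg, exponent] at powers
  calc ∫ x in ball3 R, ‖v x‖ ^ q = ∫ x in ball3 R, ‖v x‖ ^ (q : ℝ) := by simp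
    _ ≤ _ := powers
    _ = _ := by rw [mul_comm, measureReal_restrict_apply_univ, lpnorm]

theorem integral_sum_norm_pow_le (hq : q ≠ 0) (hqp : q ≤ p) (hρ : 0 ≤ ρ) (hu : Continuous u)
    (hb : Continuous b) (hw : Continuous w) :
    ∫ x in ball3 (2 * ρ), (‖u x‖ ^ q + ‖b x‖ ^ q + ‖w x‖ ^ q)
      ≤ volume.real (ball3 2) ^ (1 - q / p) * (ρ ^ (3 - 3 * q / p) *
        (lpnorm p u (ball3 (2 * ρ)) + lpnorm p b (ball3 (2 * ρ))
          + lpnorm p w (ball3 (2 * ρ))) ^ q) := by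
  have integrable : ∀ {v : E3 → E3}, Continuous v →
      IntegrableOn (fun x => ‖v x‖ ^ q) (ball3 (2 * ρ)) :=
    fun hv => integrableOn_ball_of_continuous (hv.norm.pow q) _ _
  have hu0 := lpnorm_nonneg p u (ball3 (2 * ρ))
  have hb0 := lpnorm_nonneg p b (ball3 (2 * ρ))
  have hw0 := lpnorm_nonneg p w (ball3 (2 * ρ))
  have volume_rpow : volume.real (ball3 (2 * ρ)) ^ (1 - q / p)
      = volume.real (ball3 2) ^ (1 - q / p) * ρ ^ (3 - 3 * q / p) := by
    rw [mul_comm 2 ρ, volume_real_ball3_mul hρ, mul_rpow measureReal_nonneg (by positivity),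
      ← rpow_natCast, ← rpow_mul hρ]
    congr 2
    push_cast
    ring
  rw [integral_add ((integrable hu).fun_add (integrable hb)) (integrable hw),
    integral_add (integrable hu) (integrable hb)]
  calc _ ≤ volume.real (ball3 (2 * ρ)) ^ (1 - q / p) * (lpnorm p u (ball3 (2 * ρ)) ^ q
        + lpnorm p b (ball3 (2 * ρ)) ^ q + lpnorm p w (ball3 (2 * ρ)) ^ q) := by
        rw [mul_add, mul_add]
        gcongr <;> exact integral_norm_pow_le hq hqp ‹_› _
    _ ≤ volume.real (ball3 (2 * ρ)) ^ (1 - q / p) * (lpnorm p u (ball3 (2 * ρ))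
        + lpnorm p b (ball3 (2 * ρ)) + lpnorm p w (ball3 (2 * ρ))) ^ q := by
        gcongr
        exact (by gcongr; exact pow_add_pow_le hu0 hb0 hq : _ ≤ _).trans
          (pow_add_pow_le (add_nonneg hu0 hb0) hw0 hq)
    _ = _ := by rw [volume_rpow, mul_assoc]

end BallEstimates

section Dirichlet

theorem sum_sq_mul_sqrt_le {a b c : ℝ} (ha : 0 ≤ a) (hb : 0 ≤ b) (hc : 0 ≤ c) :
    (a ^ 2 + b ^ 2 + c ^ 2) * √(a ^ 2 + b ^ 2 + c ^ 2) ≤ 9 * (a ^ 3 + b ^ 3 + c ^ 3) := by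
  have sqrt_le : √(a ^ 2 + b ^ 2 + c ^ 2) ≤ a + b + c :=
    sqrt_le_iff.2 ⟨by positivity, by
      nlinarith [mul_nonneg ha hb, mul_nonneg hb hc, mul_nonneg ha hc]⟩
  have rearrangement : ∀ {s t : ℝ}, 0 ≤ s → 0 ≤ t → s ^ 2 * t + t ^ 2 * s ≤ s ^ 3 + t ^ 3 :=
    fun {s t} hs ht => by nlinarith [mul_nonneg (add_nonneg hs ht) (sq_nonneg (s - t))]
  calc _ ≤ (a ^ 2 + b ^ 2 + c ^ 2) * (a + b + c) := by gcongr
    _ ≤ _ := by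
      linarith [rearrangement ha hb, rearrangement hb hc, rearrangement ha hc, pow_nonneg ha 3,
        pow_nonneg hb 3, pow_nonneg hc 3]

variable {K ρ : ℝ} {η : E3 → ℝ} {u w b : E3 → E3} {P : E3 → ℝ}

theorem fieldSq_components (v : E3 → E3) (x : E3) : fieldSq (fun j y => v y j) x = ‖v x‖ ^ 2 := by
  simp [fieldSq, EuclideanSpace.norm_sq_eq]

theorem density_components (u w b : E3 → E3) (x : E3) :
    density (fun j y => u y j) (fun j y => w y j) (fun j y => b y j) x
      = ‖u x‖ ^ 2 + ‖b x‖ ^ 2 + ‖w x‖ ^ 2 := by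
  simp only [density, fieldSq_components]

theorem integral_gradSq_le (h : IsMMPSolution u w b P) (hη : IsCutoff K ρ η) :
    ∫ x in ball3 ρ, (gradSq u x + gradSq b x + gradSq w x)
      ≤ ∫ x, η x ^ 8 * dissipation (fun j y => u y j) (fun j y => w y j) (fun j y => b y j) x := by
  have hc := h.components
  have integrable := (hη.isTest_pow_eight_mul_dissipation hc).integrable
  have gradients_cont := (((contDiff_fieldGradSq hc.smooth_U).add
    (contDiff_fieldGradSq hc.smooth_B)).add (contDiff_fieldGradSq hc.smooth_W)).continuous
  simp only [gradSq_eq_fieldGradSq]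
  refine (setIntegral_mono_on (integrableOn_ball_of_continuous gradients_cont 0 ρ)
    integrable.integrableOn measurableSet_ball fun x hx => ?_).trans
    (setIntegral_le_integral integrable (ae_of_all _ fun x =>
      mul_nonneg (pow_nonneg (hη.nonneg x) 8) (dissipation_nonneg _ _ _ x)))
  rw [hη.eq_one x hx, one_pow, one_mul]
  exact le_add_of_nonneg_right (fieldSq_nonneg _ x)

theorem integral_cutoff_mul_density_le (h : IsMMPSolution u w b P) (hη : IsCutoff K ρ η) :
    ∫ x, η x ^ 2 * density (fun j y => u y j) (fun j y => w y j) (fun j y => b y j) x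
      ≤ ∫ x in ball3 (2 * ρ), (‖u x‖ ^ 2 + ‖b x‖ ^ 2 + ‖w x‖ ^ 2) := by
  have hu := h.smooth_u.continuous
  have hw := h.smooth_w.continuous
  have hb := h.smooth_b.continuous
  rw [← setIntegral_eq_integral_of_forall_compl_eq_zero (s := ball3 (2 * ρ))
    fun x hx => by simp [hη.eq_zero x hx]]
  refine setIntegral_mono_on (hη.isTest_sq_mul_density h.components).integrable.integrableOn
    (integrableOn_ball_of_continuous (by fun_prop) _ _) measurableSet_ball fun x _ => ?_
  rw [density_components]
  exact mul_le_of_le_one_left (by positivity) (pow_le_one₀ (hη.nonneg x) (hη.le_one x))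

theorem integral_cutoff_mul_density_mul_sqrt_le (h : IsMMPSolution u w b P)
    (hη : IsCutoff K ρ η) :
    ∫ x, η x ^ 2 * density (fun j y => u y j) (fun j y => w y j) (fun j y => b y j) x
        * √(η x ^ 2 * density (fun j y => u y j) (fun j y => w y j) (fun j y => b y j) x)
      ≤ 9 * ∫ x in ball3 (2 * ρ), (‖u x‖ ^ 3 + ‖b x‖ ^ 3 + ‖w x‖ ^ 3) := by
  have hu := h.smooth_u.continuous
  have hw := h.smooth_w.continuous
  have hb := h.smooth_b.continuous
  rw [← setIntegral_eq_integral_of_forall_compl_eq_zero (s := ball3 (2 * ρ))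
    fun x hx => by simp [hη.eq_zero x hx], ← integral_const_mul]
  refine setIntegral_mono_on
    (hη.isTest_sq_mul_density h.components).integrable_mul_sqrt.integrableOn
    (integrableOn_ball_of_continuous (by fun_prop) _ _) measurableSet_ball fun x _ => ?_
  refine le_trans ?_ (sum_sq_mul_sqrt_le (norm_nonneg (u x)) (norm_nonneg (b x))
    (norm_nonneg (w x)))
  have cutoff_le : η x ^ 2 * (‖u x‖ ^ 2 + ‖b x‖ ^ 2 + ‖w x‖ ^ 2) ≤
      ‖u x‖ ^ 2 + ‖b x‖ ^ 2 + ‖w x‖ ^ 2 :=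
    mul_le_of_le_one_left (by positivity) (pow_le_one₀ (hη.nonneg x) (hη.le_one x))
  rw [density_components]
  gcongr

theorem inv_mul_integral_cutoff_mul_density_le (h : IsMMPSolution u w b P) (hη : IsCutoff K ρ η)
    (hρ : 0 < ρ) {p : ℝ} (hp : 2 ≤ p) :
    ρ⁻¹ ^ 2 *
        ∫ x, η x ^ 2 * density (fun j y => u y j) (fun j y => w y j) (fun j y => b y j) x
      ≤ volume.real (ball3 2) ^ (1 - 2 / p) * (ρ ^ (1 - 6 / p) *
        (lpnorm p u (ball3 (2 * ρ)) + lpnorm p b (ball3 (2 * ρ))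
          + lpnorm p w (ball3 (2 * ρ))) ^ 2) := by
  have scaling : ρ ^ (1 - 6 / p) = ρ⁻¹ ^ 2 * ρ ^ (3 - 3 * (2 : ℕ) / p) := by
    rw [inv_pow, ← rpow_natCast, ← rpow_neg hρ.le, ← rpow_add hρ]
    congr 1
    push_cast
    ring
  have bound := (integral_cutoff_mul_density_le h hη).trans
    (integral_sum_norm_pow_le two_ne_zero (by exact_mod_cast hp) hρ.le h.smooth_u.continuous
      h.smooth_b.continuous h.smooth_w.continuous)
  exact (mul_le_mul_of_nonneg_left bound (by positivity)).trans_eq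
    (by rw [scaling]; push_cast; ring)

theorem inv_mul_integral_cutoff_mul_density_mul_sqrt_le (h : IsMMPSolution u w b P)
    (hη : IsCutoff K ρ η) (hρ : 0 < ρ) {p : ℝ} (hp : 3 ≤ p) :
    ρ⁻¹ * ∫ x, η x ^ 2 * density (fun j y => u y j) (fun j y => w y j) (fun j y => b y j) x
        * √(η x ^ 2 * density (fun j y => u y j) (fun j y => w y j) (fun j y => b y j) x)
      ≤ 9 * volume.real (ball3 2) ^ (1 - 3 / p) * (ρ ^ (2 - 9 / p) *
        (lpnorm p u (ball3 (2 * ρ)) + lpnorm p b (ball3 (2 * ρ))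
          + lpnorm p w (ball3 (2 * ρ))) ^ 3) := by
  have scaling : ρ ^ (2 - 9 / p) = ρ⁻¹ * ρ ^ (3 - 3 * (3 : ℕ) / p) := by
    rw [← rpow_neg_one, ← rpow_add hρ]
    congr 1
    push_cast
    ring
  have bound := (integral_cutoff_mul_density_mul_sqrt_le h hη).trans (mul_le_mul_of_nonneg_left
    (integral_sum_norm_pow_le three_ne_zero (by exact_mod_cast hp) hρ.le h.smooth_u.continuous
      h.smooth_b.continuous h.smooth_w.continuous) (by norm_num))
  exact (mul_le_mul_of_nonneg_left bound (by positivity)).trans_eq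
    (by rw [scaling]; push_cast; ring)

end Dirichlet

theorem dirichlet_estimate_high_p_general (p : ℝ) (hp : 3 ≤ p) :
    ∃ C : ℝ, 0 < C ∧
      ∀ u w b : E3 → E3, ∀ P : E3 → ℝ, IsMMPSolution u w b P →
      ∀ ρ : ℝ, 0 < ρ →
        (∫ x in ball3 ρ, (gradSq u x + gradSq b x + gradSq w x)) ≤
          C * (ρ ^ (1 - 6 / p) *
                (lpnorm p u (ball3 (2 * ρ)) + lpnorm p b (ball3 (2 * ρ))
                  + lpnorm p w (ball3 (2 * ρ))) ^ 2
              + ρ ^ (2 - 9 / p) *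
                (lpnorm p u (ball3 (2 * ρ)) + lpnorm p b (ball3 (2 * ρ))
                  + lpnorm p w (ball3 (2 * ρ))) ^ 3) := by
  obtain ⟨K, hK, exists_cutoff⟩ := exists_isCutoff (Fin 3)
  have hC := caccioppoliConst_pos hK
  have hV : 0 < volume.real (ball3 2) :=
    ENNReal.toReal_pos (measure_ball_pos _ _ two_pos).ne' measure_ball_lt_top.ne
  refine ⟨caccioppoliConst K *
    (volume.real (ball3 2) ^ (1 - 2 / p) + 9 * volume.real (ball3 2) ^ (1 - 3 / p)),
    by positivity, fun u w b P h ρ hρ => ?_⟩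
  have two_le_p : 2 ≤ p := by linarith
  obtain ⟨η, hη⟩ := exists_cutoff ρ hρ
  refine (integral_gradSq_le h hη).trans ((caccioppoli hK hρ h.components hη).trans ?_)
  rw [mul_assoc]
  refine mul_le_mul_of_nonneg_left ?_ hC.le
  have lpnorms_nonneg := add_nonneg (add_nonneg (lpnorm_nonneg p u (ball3 (2 * ρ)))
    (lpnorm_nonneg p b (ball3 (2 * ρ)))) (lpnorm_nonneg p w (ball3 (2 * ρ)))
  refine (add_le_add (inv_mul_integral_cutoff_mul_density_le h hη hρ two_le_p)
    (inv_mul_integral_cutoff_mul_density_mul_sqrt_le h hη hρ hp)).trans ?_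
  rw [mul_add]
  gcongr
  · exact le_add_of_nonneg_right (by positivity)
  · exact le_add_of_nonneg_left (by positivity)

/-- Dirichlet integral estimate for `p ∈ [3, 9/2)`. -/
theorem dirichlet_estimate_high_p
    (p : ℝ) (hp1 : 3 ≤ p) (hp2 : p < 9 / 2) :
    ∃ C : ℝ, 0 < C ∧
      ∀ u w b : E3 → E3, ∀ P : E3 → ℝ, IsMMPSolution u w b P →
      ∀ ρ : ℝ, 1 < ρ →
        (∫ x in ball3 ρ, (gradSq u x + gradSq b x + gradSq w x)) ≤
          C * (ρ ^ (1 - 6 / p) *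
                (lpnorm p u (ball3 (2 * ρ)) + lpnorm p b (ball3 (2 * ρ))
                  + lpnorm p w (ball3 (2 * ρ))) ^ 2
              + ρ ^ (2 - 9 / p) *
                (lpnorm p u (ball3 (2 * ρ)) + lpnorm p b (ball3 (2 * ρ))
                  + lpnorm p w (ball3 (2 * ρ))) ^ 3) := by
  obtain ⟨C, hC, bound⟩ := dirichlet_estimate_high_p_general p hp1
  exact ⟨C, hC, fun u w b P h ρ hρ => bound u w b P h ρ (zero_lt_one.trans hρ)⟩
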